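/- arXiv:1401.2073 — 2 statements merged into one kernel-verified Lean document; each statement's English description precedes it below -/
import Mathlib

section
/- Let D_n(k²) := D_n[w(·,k²)] and let D_n(0) := D_n[(1−x²)^α] be the Hankel determinant for the symmetric Jacobi weight (1−x²)^α on [−1,1]. Define Λ_n := (D_n(k²)/D_n(0)) · (2/(1+√(1−k²)))^{2βn} · 2^{2β(α+β)} · (1−k²)^{β(α+β/2)} · (1+√(1−k²))^{−2β(α+β)}. Then Λ_n → 1 as n → ∞, and moreover lim_{n→∞} n·log Λ_n = ((4α²−1)·β/4)·(1 − 1/√(1−k²)). -/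
open MeasureTheory

/-- The Hankel determinant `det(μ_{i+j})_{i,j=0}^{n-1}` of the moments of the
weight `v` on `[-1,1]`; for `n = 0` it equals `1`. -/
noncomputable def hankelDet (v : ℝ → ℝ) (n : ℕ) : ℝ :=
  Matrix.det (Matrix.of fun i j : Fin n =>
    ∫ x in (-1:ℝ)..1, x ^ ((i:ℕ) + (j:ℕ)) * v x)

open Polynomial Filter Topology

/-!
Put `k² = 4u / (1 + u)²` with `|u| < 1`. The derivative of `log D_n` in the exponent `b` of
`1 - k²x²` is the mean of `∑ log (1 - k² x_j²)` in the `n`-point orthogonal polynomial ensemble,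
and the Chebyshev expansion of the logarithm turns it into a power series in `u` whose coefficients
are the means `z_N` of the even Chebyshev statistics. Integrating the Pearson equation of the weight
by parts yields loop equations `n (z_N + α + b u^(N+1)) = -(Q_N(z) + C_N)`, where `Q_N` is
quadratic in `z` and `C_N` is a sum of covariances. A bootstrap on this recursion bounds
`z_N` geometrically in `N`, uniformly in `n`, so that `z_N → -α - b u^(N+1)`. This forces the Jacobi
coefficients to tend to `1/2`, hence `C_N → (N+1)/4`, and the loop equations then give the limit of
`n (z_N + α + b u^(N+1))`. It remains to sum over `N` and to integrate `b` from `0` to `β`, both by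
dominated convergence.
-/

/-! ### Orthogonal polynomials of a symmetric measure -/

/-- Finite symmetric measures carried by `[-1,1]` for which every nonzero polynomial has
positive `L²` norm. -/
class IsSymmetricWeight (μ : Measure ℝ) : Prop extends IsFiniteMeasure μ where
  ae_mem_Icc : ∀ᵐ x ∂μ, x ∈ Set.Icc (-1 : ℝ) 1
  integral_eval_neg : ∀ p : ℝ[X], ∫ x, p.eval (-x) ∂μ = ∫ x, p.eval x ∂μ
  integral_sq_pos : ∀ p : ℝ[X], p ≠ 0 → 0 < ∫ x, (p.eval x) ^ 2 ∂μ

/-- Integration of polynomials against `μ`. It is assembled from the moments of `μ`, so that it is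
a linear functional for every `μ`; it is the integral when the moments are finite. -/
noncomputable def polyIntegral (μ : Measure ℝ) : ℝ[X] →ₗ[ℝ] ℝ :=
  lsum fun k => (∫ x, x ^ k ∂μ) • LinearMap.id

section General

lemma eq_of_degree_lt {K M : Type*} [Field K] [AddCommGroup M] [Module K M] {P : ℕ → K[X]}
    (hP : ∀ i, (P i).degree = i) {f g : K[X] →ₗ[K] M} {n : ℕ} (h : ∀ i < n, f (P i) = g (P i))
    {q : K[X]} (hq : q.degree < n) : f q = g q := by
  let S : Sequence K := ⟨P, hP⟩
  have hspan : q ∈ Submodule.span K (S '' Set.Iio n) := by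
    rw [S.span_degreeLT fun i _ => (leadingCoeff_ne_zero.2 (S.ne_zero i)).isUnit]
    exact mem_degreeLT.2 hq
  refine LinearMap.eqOn_span ?_ hspan
  rintro _ ⟨i, hi, rfl⟩
  exact h i hi

variable {μ : Measure ℝ} [IsSymmetricWeight μ]

lemma restrict_Icc_eq_self : μ.restrict (Set.Icc (-1 : ℝ) 1) = μ :=
  Measure.restrict_eq_self_of_ae_mem IsSymmetricWeight.ae_mem_Icc

lemma integrable_of_continuousOn {f : ℝ → ℝ} (hf : ContinuousOn f (Set.Icc (-1 : ℝ) 1)) :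
    Integrable f μ := by
  rw [← restrict_Icc_eq_self (μ := μ)]
  exact hf.integrableOn_compact isCompact_Icc

lemma integrable_polynomial_eval (p : ℝ[X]) : Integrable (fun x => p.eval x) μ :=
  integrable_of_continuousOn p.continuous.continuousOn

lemma polyIntegral_apply (p : ℝ[X]) : polyIntegral μ p = ∫ x, p.eval x ∂μ := by
  have hmono : ∀ k c, Integrable (fun x : ℝ => c * x ^ k) μ := fun k c =>
    integrable_of_continuousOn (by fun_prop)
  simp only [polyIntegral, lsum_apply, eval_eq_sum, sum_def, LinearMap.smul_apply,
    LinearMap.id_apply, smul_eq_mul]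
  rw [integral_finsetSum _ fun k _ => hmono k _]
  exact Finset.sum_congr rfl fun k _ => by rw [integral_const_mul, mul_comm]

end General

section OrthogonalPolynomials

variable (μ : Measure ℝ)

lemma polyIntegral_C_mul (c : ℝ) (p : ℝ[X]) : polyIntegral μ (C c * p) = c * polyIntegral μ p := by
  rw [← smul_eq_C_mul, map_smul, smul_eq_mul]

/-- The monic orthogonal polynomials of the symmetric measure `μ`, by their three-term recurrence,
whose diagonal coefficients vanish by symmetry. -/
noncomputable def monicOP : ℕ → ℝ[X]
  | 0 => 1
  | 1 => X
  | n + 2 => X * monicOP (n + 1) -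
      C (polyIntegral μ (monicOP (n + 1) * monicOP (n + 1)) /
        polyIntegral μ (monicOP n * monicOP n)) * monicOP n

/-- The squared norm of the `n`-th monic orthogonal polynomial. -/
noncomputable def sqNorm (n : ℕ) : ℝ := polyIntegral μ (monicOP μ n * monicOP μ n)

lemma X_mul_monicOP_succ (n : ℕ) : X * monicOP μ (n + 1) =
    monicOP μ (n + 2) + C (sqNorm μ (n + 1) / sqNorm μ n) * monicOP μ n := by
  rw [monicOP, sqNorm, sqNorm]
  ring

lemma monic_monicOP_and_natDegree_monicOP (n : ℕ) :
    (monicOP μ n).Monic ∧ (monicOP μ n).natDegree = n := by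
  induction n using Nat.twoStepInduction with
  | zero => exact ⟨monic_one, natDegree_one⟩
  | one => exact ⟨monic_X, natDegree_X⟩
  | more n h0 h1 =>
    have hmonic : (X * monicOP μ (n + 1)).Monic := monic_X.mul h1.1
    have hdeg : (X * monicOP μ (n + 1)).natDegree = n + 2 := by
      rw [natDegree_X_mul h1.1.ne_zero, h1.2]
    have hlt : (C (sqNorm μ (n + 1) / sqNorm μ n) * monicOP μ n).natDegree
        < (X * monicOP μ (n + 1)).natDegree := by
      refine (natDegree_C_mul_le _ _).trans_lt ?_
      lia
    rw [eq_sub_of_add_eq (X_mul_monicOP_succ μ n).symm]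
    exact ⟨hmonic.sub_of_left (degree_lt_degree hlt),
      (natDegree_sub_eq_left_of_natDegree_lt hlt).trans hdeg⟩

lemma monic_monicOP (n : ℕ) : (monicOP μ n).Monic := (monic_monicOP_and_natDegree_monicOP μ n).1

lemma degree_monicOP (n : ℕ) : (monicOP μ n).degree = n := by
  rw [degree_eq_natDegree (monic_monicOP μ n).ne_zero, (monic_monicOP_and_natDegree_monicOP μ n).2]

lemma degree_X_mul_monicOP (n : ℕ) : (X * monicOP μ n).degree = ((n + 1 : ℕ) : WithBot ℕ) := by
  rw [degree_mul, degree_X, degree_monicOP, add_comm, Nat.cast_succ]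

lemma degree_X_mul_monicOP_sub_lt (n : ℕ) :
    (X * monicOP μ n - monicOP μ (n + 1)).degree < ((n + 1 : ℕ) : WithBot ℕ) := by
  have hmonic : (X * monicOP μ n).Monic := monic_X.mul (monic_monicOP μ n)
  rw [← degree_X_mul_monicOP μ n]
  refine degree_sub_lt_left ?_ hmonic.ne_zero ?_
  · rw [degree_X_mul_monicOP, degree_monicOP]
  · rw [hmonic.leadingCoeff, (monic_monicOP μ _).leadingCoeff]

lemma monicOP_comp_neg_X (n : ℕ) : (monicOP μ n).comp (-X) = (-1) ^ n * monicOP μ n := by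
  induction n using Nat.twoStepInduction with
  | zero => simp [monicOP]
  | one => simp [monicOP]
  | more n h0 h1 =>
    rw [monicOP, sub_comp, mul_comp, mul_comp, h0, h1, X_comp, C_comp]
    ring

/-- The orthonormal polynomials of `μ`. -/
noncomputable def onp (n : ℕ) : ℝ[X] := C (√(sqNorm μ n))⁻¹ * monicOP μ n

/-- The off-diagonal entries of the Jacobi matrix of `μ`, that is, of multiplication by `X` in the
orthonormal basis. -/
noncomputable def jacobiCoeff (n : ℕ) : ℝ := √(sqNorm μ (n + 1)) / √(sqNorm μ n)

lemma onp_mul_self_comp_neg_X (n : ℕ) : (onp μ n * onp μ n).comp (-X) = onp μ n * onp μ n := by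
  have hsign : ((-1 : ℝ[X]) ^ n) * (-1) ^ n = 1 := pow_mul_pow_eq_one n (by ring)
  rw [onp, mul_comp, mul_comp, C_comp, monicOP_comp_neg_X]
  linear_combination (C (√(sqNorm μ n))⁻¹ * monicOP μ n) ^ 2 * hsign

variable [IsSymmetricWeight μ]

lemma polyIntegral_mul_self_pos {p : ℝ[X]} (hp : p ≠ 0) : 0 < polyIntegral μ (p * p) := by
  simpa only [polyIntegral_apply, eval_mul, pow_two] using
    IsSymmetricWeight.integral_sq_pos (μ := μ) p hp

variable {μ} in
lemma polyIntegral_eq_zero_of_odd {p : ℝ[X]} (hp : p.comp (-X) = -p) : polyIntegral μ p = 0 := by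
  have hsymm := IsSymmetricWeight.integral_eval_neg (μ := μ) p
  have hodd : ∀ x, p.eval (-x) = -p.eval x := fun x => by
    simpa only [eval_comp, eval_neg, eval_X] using congrArg (eval x) hp
  rw [polyIntegral_apply]
  simp only [hodd, integral_neg] at hsymm
  linarith

lemma sqNorm_pos (n : ℕ) : 0 < sqNorm μ n :=
  polyIntegral_mul_self_pos μ (monic_monicOP μ n).ne_zero

lemma polyIntegral_monicOP_mul_X_mul_self (n : ℕ) :
    polyIntegral μ (monicOP μ n * (X * monicOP μ n)) = 0 := by
  have hsign : ((-1 : ℝ[X]) ^ n) * (-1) ^ n = 1 := pow_mul_pow_eq_one n (by ring)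
  refine polyIntegral_eq_zero_of_odd ?_
  rw [mul_comp, mul_comp, monicOP_comp_neg_X, X_comp]
  linear_combination (-(monicOP μ n * (X * monicOP μ n))) * hsign

variable {μ} in
lemma polyIntegral_monicOP_mul_eq_zero {n : ℕ} {q : ℝ[X]} (hq : q.degree < n) :
    polyIntegral μ (monicOP μ n * q) = 0 := by
  induction n using Nat.twoStepInduction generalizing q with
  | zero => rw [degree_eq_bot.1 (Nat.WithBot.lt_zero_iff.1 hq), mul_zero, map_zero]
  | one =>
    rw [eq_C_of_degree_le_zero (Order.lt_succ_iff.1 hq), mul_comm, polyIntegral_C_mul]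
    exact mul_eq_zero_of_right _ (polyIntegral_eq_zero_of_odd (by simp [monicOP]))
  | more n ih0 ih1 =>
    have hrec : ∀ p, polyIntegral μ (monicOP μ (n + 2) * p) =
        polyIntegral μ (monicOP μ (n + 1) * (X * p)) -
          sqNorm μ (n + 1) / sqNorm μ n * polyIntegral μ (monicOP μ n * p) := fun p => by
      rw [← polyIntegral_C_mul, ← map_sub, eq_sub_of_add_eq (X_mul_monicOP_succ μ n).symm]
      congr 1
      ring
    refine eq_of_degree_lt (degree_monicOP μ)
      (f := polyIntegral μ ∘ₗ LinearMap.mulLeft ℝ (monicOP μ (n + 2))) (g := 0) (fun i hi => ?_) hq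
    rw [LinearMap.comp_apply, LinearMap.mulLeft_apply, LinearMap.zero_apply, hrec]
    rcases (by lia : i = n + 1 ∨ i = n ∨ i < n) with rfl | rfl | hin
    · rw [polyIntegral_monicOP_mul_X_mul_self, mul_comm (monicOP μ n),
        ih1 (by rw [degree_monicOP]; exact_mod_cast n.lt_succ_self), mul_zero, sub_zero]
    · have hnorm := ih1 (degree_X_mul_monicOP_sub_lt μ i)
      rw [mul_sub, map_sub, ← sqNorm] at hnorm
      rw [sub_eq_zero.1 hnorm, ← sqNorm, div_mul_cancel₀ _ (sqNorm_pos μ i).ne', sub_self]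
    · rw [ih1 (by rw [degree_X_mul_monicOP]; exact_mod_cast Nat.succ_lt_succ hin),
        ih0 (by rw [degree_monicOP]; exact_mod_cast hin), mul_zero, sub_zero]

lemma sqrt_sqNorm_pos (n : ℕ) : 0 < √(sqNorm μ n) := Real.sqrt_pos.2 (sqNorm_pos μ n)

lemma jacobiCoeff_pos (n : ℕ) : 0 < jacobiCoeff μ n :=
  div_pos (sqrt_sqNorm_pos μ _) (sqrt_sqNorm_pos μ _)

lemma degree_onp (n : ℕ) : (onp μ n).degree = n := by
  rw [onp, degree_C_mul (inv_ne_zero (sqrt_sqNorm_pos μ n).ne'), degree_monicOP]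

variable {μ} in
lemma polyIntegral_mul_onp_eq_zero {q : ℝ[X]} {n : ℕ} (hq : q.degree < n) :
    polyIntegral μ (q * onp μ n) = 0 := by
  rw [onp, mul_left_comm, polyIntegral_C_mul, mul_comm q, polyIntegral_monicOP_mul_eq_zero hq,
    mul_zero]

lemma polyIntegral_onp_mul_onp (i j : ℕ) :
    polyIntegral μ (onp μ i * onp μ j) = if i = j then 1 else 0 := by
  have hlt : ∀ {i j : ℕ}, i < j → polyIntegral μ (onp μ i * onp μ j) = 0 := fun hij =>
    polyIntegral_mul_onp_eq_zero (by rw [degree_onp]; exact_mod_cast hij)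
  rcases lt_trichotomy i j with hij | rfl | hij
  · rw [if_neg hij.ne, hlt hij]
  · rw [if_pos rfl, onp, mul_mul_mul_comm, ← C_mul, polyIntegral_C_mul, ← sqNorm, ← mul_inv,
      Real.mul_self_sqrt (sqNorm_pos μ i).le, inv_mul_cancel₀ (sqNorm_pos μ i).ne']
  · rw [if_neg hij.ne', mul_comm, hlt hij]

lemma X_mul_onp_succ (n : ℕ) : X * onp μ (n + 1) =
    C (jacobiCoeff μ (n + 1)) * onp μ (n + 2) + C (jacobiCoeff μ n) * onp μ n := by
  have h0 := (sqrt_sqNorm_pos μ n).ne'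
  have h1 := (sqrt_sqNorm_pos μ (n + 1)).ne'
  have h2 := (sqrt_sqNorm_pos μ (n + 2)).ne'
  have hup : jacobiCoeff μ (n + 1) * (√(sqNorm μ (n + 2)))⁻¹ = (√(sqNorm μ (n + 1)))⁻¹ := by
    rw [jacobiCoeff]; field_simp
  have hdown : jacobiCoeff μ n * (√(sqNorm μ n))⁻¹ =
      (√(sqNorm μ (n + 1)))⁻¹ * (sqNorm μ (n + 1) / sqNorm μ n) := by
    rw [jacobiCoeff]
    nth_rewrite 3 [← Real.mul_self_sqrt (sqNorm_pos μ (n + 1)).le]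
    nth_rewrite 3 [← Real.mul_self_sqrt (sqNorm_pos μ n).le]
    field_simp
  rw [onp, onp, onp, mul_left_comm, X_mul_monicOP_succ, mul_add, ← mul_assoc, ← mul_assoc,
    ← mul_assoc, ← C_mul, ← C_mul, ← C_mul, hup, hdown]

lemma eq_sum_onp {q : ℝ[X]} {n : ℕ} (hq : q.degree < n) :
    q = ∑ j ∈ Finset.range n, C (polyIntegral μ (q * onp μ j)) * onp μ j := by
  refine eq_of_degree_lt (degree_onp μ) (f := LinearMap.id)
    (g := ∑ j ∈ Finset.range n,
      (polyIntegral μ ∘ₗ LinearMap.mulRight ℝ (onp μ j)).smulRight (onp μ j))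
    (fun i hi => ?_) hq |>.trans ?_
  · simp [LinearMap.sum_apply, polyIntegral_onp_mul_onp, hi]
  · simp [LinearMap.sum_apply, smul_eq_C_mul]

end OrthogonalPolynomials

/-! ### Polynomial linear statistics -/

section LinearStatistics

variable (μ : Measure ℝ)

/-- The matrix entries of multiplication by `f` in the basis of orthonormal polynomials. -/
noncomputable def mulEntry (f : ℝ[X]) (i j : ℕ) : ℝ := polyIntegral μ (f * (onp μ i * onp μ j))

/-- The expectation of the linear statistic `∑ f(xᵢ)` in the `n`-point orthogonal polynomial
ensemble of `μ`. -/
noncomputable def statMean (n : ℕ) (f : ℝ[X]) : ℝ := ∑ i ∈ Finset.range n, mulEntry μ f i i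

/-- The covariance of the linear statistics `∑ f(xᵢ)` and `∑ g(xᵢ)` in the `n`-point orthogonal
polynomial ensemble of `μ`, as given by the determinantal two-point function. -/
noncomputable def statCov (n : ℕ) (f g : ℝ[X]) : ℝ :=
  statMean μ n (f * g) -
    ∑ i ∈ Finset.range n, ∑ j ∈ Finset.range n, mulEntry μ f i j * mulEntry μ g i j

variable [IsSymmetricWeight μ]

lemma mulEntry_one (i j : ℕ) : mulEntry μ 1 i j = if i = j then 1 else 0 := by
  rw [mulEntry, one_mul, polyIntegral_onp_mul_onp]

lemma statMean_one (n : ℕ) : statMean μ n 1 = n := by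
  simp [statMean, mulEntry_one]

lemma sum_mulEntry_mul_mulEntry_one (n : ℕ) (f : ℝ[X]) :
    ∑ i ∈ Finset.range n, ∑ j ∈ Finset.range n, mulEntry μ f i j * mulEntry μ 1 i j =
      statMean μ n f := by
  refine Finset.sum_congr rfl fun i hi => ?_
  simp only [mulEntry_one, mul_ite, mul_one, mul_zero, Finset.sum_ite_eq, hi, if_true]

lemma statMean_eq_zero_of_odd (n : ℕ) {f : ℝ[X]} (hf : f.comp (-X) = -f) : statMean μ n f = 0 :=
  Finset.sum_eq_zero fun i _ => polyIntegral_eq_zero_of_odd <| by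
    rw [mul_comp, hf, onp_mul_self_comp_neg_X, neg_mul]

variable {μ} in
lemma abs_polyIntegral_le {f p : ℝ[X]} (h : ∀ x ∈ Set.Icc (-1 : ℝ) 1, |f.eval x| ≤ p.eval x) :
    |polyIntegral μ f| ≤ polyIntegral μ p := by
  simp only [polyIntegral_apply]
  refine abs_integral_le_integral_abs.trans
    (integral_mono_ae (integrable_polynomial_eval f).abs (integrable_polynomial_eval p) ?_)
  filter_upwards [IsSymmetricWeight.ae_mem_Icc (μ := μ)] with x hx using h x hx

lemma abs_mulEntry_le_one {f : ℝ[X]} (hf : ∀ x ∈ Set.Icc (-1 : ℝ) 1, |f.eval x| ≤ 1) (i j : ℕ) :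
    |mulEntry μ f i j| ≤ 1 := by
  calc |mulEntry μ f i j|
      ≤ polyIntegral μ (C (1 / 2) * (onp μ i * onp μ i + onp μ j * onp μ j)) := by
        refine abs_polyIntegral_le fun x hx => ?_
        simp only [eval_mul, eval_add, eval_C]
        rw [abs_mul, abs_mul]
        have hamgm : |(onp μ i).eval x| * |(onp μ j).eval x| ≤ 1 / 2 *
            ((onp μ i).eval x * (onp μ i).eval x + (onp μ j).eval x * (onp μ j).eval x) := by
          linarith [two_mul_le_add_sq |(onp μ i).eval x| |(onp μ j).eval x|,
            sq_abs ((onp μ i).eval x), sq_abs ((onp μ j).eval x)]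
        exact (mul_le_of_le_one_left (by positivity) (hf x hx)).trans hamgm
    _ = 1 := by
        rw [polyIntegral_C_mul, map_add, polyIntegral_onp_mul_onp, polyIntegral_onp_mul_onp,
          if_pos rfl, if_pos rfl]
        norm_num

lemma abs_statMean_le {f : ℝ[X]} (hf : ∀ x ∈ Set.Icc (-1 : ℝ) 1, |f.eval x| ≤ 1) (n : ℕ) :
    |statMean μ n f| ≤ n := by
  calc |statMean μ n f| ≤ ∑ _i ∈ Finset.range n, (1 : ℝ) :=
        (Finset.abs_sum_le_sum_abs _ _).trans
          (Finset.sum_le_sum fun i _ => abs_mulEntry_le_one μ hf i i)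
    _ = n := by simp

lemma degree_mul_onp_lt {f : ℝ[X]} {i N : ℕ} (h : i + f.natDegree < N) :
    (f * onp μ i).degree < N := by
  have hle : (f * onp μ i).natDegree ≤ f.natDegree + i := by
    refine natDegree_mul_le.trans ?_
    rw [natDegree_eq_of_degree_eq_some (degree_onp μ i)]
  exact degree_le_natDegree.trans_lt (by exact_mod_cast (by lia : (f * onp μ i).natDegree < N))

lemma mulEntry_eq_zero {f : ℝ[X]} {i j : ℕ} (h : i + f.natDegree < j) : mulEntry μ f i j = 0 := by
  rw [mulEntry, ← mul_assoc]
  exact polyIntegral_mul_onp_eq_zero (degree_mul_onp_lt μ h)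

lemma mulEntry_mul_self {f : ℝ[X]} {i N : ℕ} (g : ℝ[X]) (h : i + f.natDegree < N) :
    mulEntry μ (f * g) i i = ∑ j ∈ Finset.range N, mulEntry μ f i j * mulEntry μ g i j := by
  have hexpand : f * g * (onp μ i * onp μ i) =
      ∑ j ∈ Finset.range N, C (mulEntry μ f i j) * (g * (onp μ i * onp μ j)) := by
    rw [mul_mul_mul_comm]
    nth_rewrite 1 [eq_sum_onp μ (degree_mul_onp_lt μ h)]
    rw [Finset.sum_mul]
    refine Finset.sum_congr rfl fun j _ => ?_
    rw [mulEntry, mul_assoc f]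
    ring
  rw [mulEntry, hexpand, map_sum]
  exact Finset.sum_congr rfl fun j _ => polyIntegral_C_mul μ _ _

lemma statCov_eq_sum_mulEntry (n : ℕ) (f g : ℝ[X]) : statCov μ n f g =
    ∑ i ∈ Finset.Ico (n - f.natDegree) n, ∑ j ∈ Finset.Ico n (n + f.natDegree),
      mulEntry μ f i j * mulEntry μ g i j := by
  have hrow : statCov μ n f g = ∑ i ∈ Finset.range n, ∑ j ∈ Finset.Ico n (n + f.natDegree),
      mulEntry μ f i j * mulEntry μ g i j := by
    rw [statCov, statMean, ← Finset.sum_sub_distrib]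
    refine Finset.sum_congr rfl fun i hi => ?_
    rw [mulEntry_mul_self μ g (Nat.add_lt_add_right (Finset.mem_range.1 hi) _),
      Finset.sum_Ico_eq_sub _ (Nat.le_add_right _ _)]
  rw [hrow]
  refine (Finset.sum_subset (fun i hi => ?_) fun i hi hi' => ?_).symm
  · exact Finset.mem_range.2 (Finset.mem_Ico.1 hi).2
  · refine Finset.sum_eq_zero fun j hj => ?_
    rw [Finset.mem_range] at hi
    rw [Finset.mem_Ico] at hi' hj
    rw [mulEntry_eq_zero μ (by lia), zero_mul]

lemma abs_statCov_le {f g : ℝ[X]} (hf : ∀ x ∈ Set.Icc (-1 : ℝ) 1, |f.eval x| ≤ 1)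
    (hg : ∀ x ∈ Set.Icc (-1 : ℝ) 1, |g.eval x| ≤ 1) (n : ℕ) :
    |statCov μ n f g| ≤ (f.natDegree : ℝ) ^ 2 := by
  have hterm : ∀ i j, |mulEntry μ f i j * mulEntry μ g i j| ≤ 1 := fun i j => by
    rw [abs_mul]
    exact mul_le_one₀ (abs_mulEntry_le_one μ hf _ _) (abs_nonneg _) (abs_mulEntry_le_one μ hg _ _)
  rw [statCov_eq_sum_mulEntry]
  calc _ ≤ ∑ _i ∈ Finset.Ico (n - f.natDegree) n, ∑ _j ∈ Finset.Ico n (n + f.natDegree), 1 :=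
        (Finset.abs_sum_le_sum_abs _ _).trans <| Finset.sum_le_sum fun i _ =>
          (Finset.abs_sum_le_sum_abs _ _).trans <| Finset.sum_le_sum fun j _ => hterm i j
    _ = ((n - (n - f.natDegree) : ℕ) : ℝ) * f.natDegree := by simp
    _ ≤ f.natDegree * f.natDegree := by gcongr; lia
    _ = _ := (pow_two _).symm

end LinearStatistics

/-! ### The Schwinger–Dyson identity -/

section DividedDifference

lemma sub_mul_eval_divByMonic {R : Type*} [CommRing R] (p : R[X]) (x y : R) :
    (x - y) * (p /ₘ (X - C x)).eval y = p.eval x - p.eval y := by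
  have h := congrArg (eval y) (modByMonic_add_div p (X - C x))
  simp only [modByMonic_X_sub_C_eq_C_eval, eval_add, eval_mul, eval_sub, eval_X, eval_C] at h
  linear_combination -h

lemma eval_self_eq_eval_derivative {R : Type*} [CommRing R] [IsDomain R] [Infinite R]
    {p q : R[X]} {x : R} (h : ∀ y, (x - y) * q.eval y = p.eval x - p.eval y) :
    q.eval x = p.derivative.eval x := by
  have hpoly : (C x - X) * q = C (p.eval x) - p := Polynomial.funext fun y => by
    simpa only [eval_mul, eval_sub, eval_C, eval_X] using h y
  have hder := congrArg (fun r => r.derivative.eval x) hpoly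
  simp only [derivative_mul, derivative_sub, derivative_C, derivative_X, eval_add, eval_mul,
    eval_sub, eval_C, eval_X, eval_zero, eval_one, sub_self, zero_mul, add_zero] at hder
  linear_combination -hder

lemma degree_divByMonic_X_sub_C_lt {K : Type*} [Field K] {p : K[X]} {n : ℕ}
    (hp : p.degree = n) (x : K) : (p /ₘ (X - C x)).degree < n := by
  rw [← hp]
  refine degree_divByMonic_lt p (X - C x) (ne_zero_of_degree_gt (n := ⊥) ?_) ?_
  · rw [hp]; exact WithBot.bot_lt_coe n
  · rw [degree_X_sub_C]; exact zero_lt_one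

@[fun_prop]
lemma continuous_eval_divByMonic_X_sub_C {α : Type*} [TopologicalSpace α] (p : ℝ[X])
    {f g : α → ℝ} (hf : Continuous f) (hg : Continuous g) :
    Continuous fun z => (p /ₘ (X - C (f z))).eval (g z) := by
  have hdeg : ∀ x : ℝ, (p /ₘ (X - C x)).natDegree < p.natDegree + 1 := fun x =>
    Nat.lt_succ_of_le (by rw [natDegree_divByMonic p (monic_X_sub_C x)]; exact Nat.sub_le _ _)
  simp_rw [fun z => eval_eq_sum_range' (hdeg (f z)) (g z), coeff_divByMonic_X_sub_C]
  fun_prop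

end DividedDifference

section ChristoffelDarboux

variable (μ : Measure ℝ)

/-- The Christoffel–Darboux kernel `y ↦ K_n(x, y)` as a polynomial in its second variable. -/
noncomputable def cdKernel (n : ℕ) (x : ℝ) : ℝ[X] :=
  ∑ j ∈ Finset.range n, C ((onp μ j).eval x) * onp μ j

/-- The Christoffel–Darboux kernel on the diagonal, `K_n(x, x)`, as a polynomial in `x`. -/
noncomputable def cdDiag (n : ℕ) : ℝ[X] := ∑ j ∈ Finset.range n, onp μ j * onp μ j

/-- The two-point correlation function of the `n`-point orthogonal polynomial ensemble of `μ`. -/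
noncomputable def twoPoint (n : ℕ) (x y : ℝ) : ℝ :=
  (cdDiag μ n).eval x * (cdDiag μ n).eval y - (cdKernel μ n x).eval y ^ 2

/-- The two-point correlation function divided by `x - y`, as a polynomial in `y`. -/
noncomputable def cdQuot (n : ℕ) (x : ℝ) : ℝ[X] :=
  cdKernel μ n x * ∑ j ∈ Finset.range n, C ((onp μ j).eval x) * (onp μ j /ₘ (X - C x)) -
    C ((cdDiag μ n).eval x) * ∑ j ∈ Finset.range n, (onp μ j /ₘ (X - C x)) * onp μ j

lemma eval_cdKernel (n : ℕ) (x y : ℝ) : (cdKernel μ n x).eval y =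
    ∑ j ∈ Finset.range n, (onp μ j).eval x * (onp μ j).eval y := by
  simp only [cdKernel, eval_finsetSum, eval_mul, eval_C]

lemma eval_cdDiag (n : ℕ) (x : ℝ) : (cdDiag μ n).eval x =
    ∑ j ∈ Finset.range n, (onp μ j).eval x * (onp μ j).eval x := by
  simp only [cdDiag, eval_finsetSum, eval_mul]

lemma polyIntegral_mul_cdDiag (n : ℕ) (f : ℝ[X]) :
    polyIntegral μ (f * cdDiag μ n) = statMean μ n f := by
  rw [cdDiag, Finset.mul_sum, map_sum]
  rfl

lemma twoPoint_comm (n : ℕ) (x y : ℝ) : twoPoint μ n x y = twoPoint μ n y x := by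
  have hK : (cdKernel μ n x).eval y = (cdKernel μ n y).eval x := by
    simp only [eval_cdKernel, mul_comm]
  rw [twoPoint, twoPoint, hK, mul_comm ((cdDiag μ n).eval x)]

lemma sub_mul_eval_cdQuot (n : ℕ) (x y : ℝ) :
    (x - y) * (cdQuot μ n x).eval y = twoPoint μ n x y := by
  have hleft : (x - y) * ∑ j ∈ Finset.range n, (onp μ j /ₘ (X - C x)).eval y * (onp μ j).eval y =
      (cdKernel μ n x).eval y - (cdDiag μ n).eval y := by
    rw [Finset.mul_sum, eval_cdKernel, eval_cdDiag, ← Finset.sum_sub_distrib]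
    refine Finset.sum_congr rfl fun j _ => ?_
    linear_combination (onp μ j).eval y * sub_mul_eval_divByMonic (onp μ j) x y
  have hright : (x - y) * ∑ j ∈ Finset.range n, (onp μ j).eval x * (onp μ j /ₘ (X - C x)).eval y =
      (cdDiag μ n).eval x - (cdKernel μ n x).eval y := by
    rw [Finset.mul_sum, eval_cdKernel, eval_cdDiag, ← Finset.sum_sub_distrib]
    refine Finset.sum_congr rfl fun j _ => ?_
    linear_combination (onp μ j).eval x * sub_mul_eval_divByMonic (onp μ j) x y
  simp only [cdQuot, twoPoint, eval_sub, eval_mul, eval_C, eval_finsetSum]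
  linear_combination (-(cdDiag μ n).eval x) * hleft + (cdKernel μ n x).eval y * hright

lemma eval_cdQuot_self (n : ℕ) (x : ℝ) : (cdQuot μ n x).eval x = 0 := by
  simp only [cdQuot, eval_sub, eval_mul, eval_C, eval_finsetSum, eval_cdKernel, eval_cdDiag,
    mul_comm ((onp μ _).eval x) ((_ /ₘ _ : ℝ[X]).eval x), sub_self]

lemma eval_cdQuot_swap (n : ℕ) (x y : ℝ) : (cdQuot μ n y).eval x = -(cdQuot μ n x).eval y := by
  rcases eq_or_ne x y with rfl | h
  · rw [eval_cdQuot_self, neg_zero]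
  · refine mul_left_cancel₀ (sub_ne_zero.2 h) ?_
    have hxy := sub_mul_eval_cdQuot μ n x y
    have hyx := sub_mul_eval_cdQuot μ n y x
    rw [twoPoint_comm] at hyx
    linear_combination -hyx + hxy

@[fun_prop]
lemma continuous_eval_cdKernel {α : Type*} [TopologicalSpace α] (n : ℕ) {f g : α → ℝ}
    (hf : Continuous f) (hg : Continuous g) :
    Continuous fun z => (cdKernel μ n (f z)).eval (g z) := by
  simp only [eval_cdKernel]
  fun_prop

@[fun_prop]
lemma continuous_eval_cdQuot {α : Type*} [TopologicalSpace α] (n : ℕ) {f g : α → ℝ}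
    (hf : Continuous f) (hg : Continuous g) :
    Continuous fun z => (cdQuot μ n (f z)).eval (g z) := by
  simp only [cdQuot, eval_sub, eval_mul, eval_C, eval_finsetSum]
  fun_prop

variable [IsSymmetricWeight μ]

variable {μ} in
lemma polyIntegral_cdKernel_mul {n : ℕ} {q : ℝ[X]} (hq : q.degree < n) (x : ℝ) :
    polyIntegral μ (cdKernel μ n x * q) = q.eval x := by
  conv_rhs => rw [eq_sum_onp μ hq, eval_finsetSum]
  rw [cdKernel, Finset.sum_mul, map_sum]
  refine Finset.sum_congr rfl fun j _ => ?_
  rw [mul_assoc, polyIntegral_C_mul, eval_mul, eval_C, mul_comm, mul_comm q]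

lemma polyIntegral_cdQuot (n : ℕ) (x : ℝ) :
    polyIntegral μ (cdQuot μ n x) = (cdDiag μ n).derivative.eval x / 2 := by
  have hdeg : ∀ j, (onp μ j /ₘ (X - C x)).degree < j := fun j =>
    degree_divByMonic_X_sub_C_lt (degree_onp μ j) x
  have hsum : (∑ j ∈ Finset.range n, C ((onp μ j).eval x) * (onp μ j /ₘ (X - C x))).degree < n := by
    refine (degree_sum_le _ _).trans_lt
      ((Finset.sup_lt_iff (WithBot.bot_lt_coe n)).2 fun j hj => ?_)
    rw [← smul_eq_C_mul]
    exact (degree_smul_le _ _).trans_lt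
      ((hdeg j).trans (Nat.cast_lt.2 (Finset.mem_range.1 hj)))
  have hortho : polyIntegral μ (∑ j ∈ Finset.range n, (onp μ j /ₘ (X - C x)) * onp μ j) = 0 := by
    rw [map_sum]
    exact Finset.sum_eq_zero fun j _ => polyIntegral_mul_onp_eq_zero (hdeg j)
  rw [cdQuot, map_sub, polyIntegral_C_mul, hortho, mul_zero, sub_zero,
    polyIntegral_cdKernel_mul hsum, cdDiag, derivative_sum, eval_finsetSum, eval_finsetSum,
    Finset.sum_div]
  refine Finset.sum_congr rfl fun j _ => ?_
  rw [eval_mul, eval_C, eval_self_eq_eval_derivative (sub_mul_eval_divByMonic (onp μ j) x),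
    derivative_mul, eval_add, eval_mul, eval_mul]
  ring

end ChristoffelDarboux

section SchwingerDyson

variable (μ : Measure ℝ) [IsSymmetricWeight μ]

variable {μ} in
lemma integrable_prod_of_continuous {F : ℝ × ℝ → ℝ} (hF : Continuous F) :
    Integrable F (μ.prod μ) := by
  rw [← restrict_Icc_eq_self (μ := μ), Measure.prod_restrict]
  exact hF.continuousOn.integrableOn_compact (isCompact_Icc.prod isCompact_Icc)

lemma integral_eval_mul_cdQuot (n : ℕ) (h : ℝ[X]) :
    ∫ z : ℝ × ℝ, h.eval z.1 * (cdQuot μ n z.1).eval z.2 ∂(μ.prod μ) =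
      polyIntegral μ (h * (cdDiag μ n).derivative) / 2 := by
  rw [integral_prod _ (integrable_prod_of_continuous (by fun_prop)), polyIntegral_apply,
    ← integral_div]
  refine integral_congr_ae (Eventually.of_forall fun x => ?_)
  simp only
  rw [integral_const_mul, ← polyIntegral_apply, polyIntegral_cdQuot, eval_mul, mul_div_assoc]

variable {μ} in
lemma integral_mul_twoPoint_of_sub_mul_eq {h : ℝ[X]} {D : ℝ → ℝ → ℝ}
    (hD : ∀ x y, (x - y) * D x y = h.eval x - h.eval y) (n : ℕ) :
    ∫ z : ℝ × ℝ, D z.1 z.2 * twoPoint μ n z.1 z.2 ∂(μ.prod μ) =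
      polyIntegral μ (h * (cdDiag μ n).derivative) := by
  have hswap : ∫ z : ℝ × ℝ, h.eval z.2 * (cdQuot μ n z.1).eval z.2 ∂(μ.prod μ) =
      -∫ z : ℝ × ℝ, h.eval z.1 * (cdQuot μ n z.1).eval z.2 ∂(μ.prod μ) := by
    rw [← integral_prod_swap, ← integral_neg]
    refine integral_congr_ae (Eventually.of_forall fun z => ?_)
    simp only [Prod.fst_swap, Prod.snd_swap]
    rw [eval_cdQuot_swap, mul_neg]
  calc _ = ∫ z : ℝ × ℝ, (h.eval z.1 * (cdQuot μ n z.1).eval z.2 -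
        h.eval z.2 * (cdQuot μ n z.1).eval z.2) ∂(μ.prod μ) := by
        refine integral_congr_ae (Eventually.of_forall fun z => ?_)
        simp only
        rw [← sub_mul_eval_cdQuot]
        linear_combination (cdQuot μ n z.1).eval z.2 * hD z.1 z.2
    _ = _ := by
        rw [integral_sub (integrable_prod_of_continuous (by fun_prop))
          (integrable_prod_of_continuous (by fun_prop)), hswap, integral_eval_mul_cdQuot]
        ring

lemma integral_mul_twoPoint (n : ℕ) (f g : ℝ[X]) :
    ∫ z : ℝ × ℝ, f.eval z.1 * g.eval z.2 * twoPoint μ n z.1 z.2 ∂(μ.prod μ) =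
      statMean μ n f * statMean μ n g -
        ∑ i ∈ Finset.range n, ∑ j ∈ Finset.range n, mulEntry μ f i j * mulEntry μ g i j := by
  have hexpand : ∀ z : ℝ × ℝ, f.eval z.1 * g.eval z.2 * twoPoint μ n z.1 z.2 =
      (f * cdDiag μ n).eval z.1 * (g * cdDiag μ n).eval z.2 -
        ∑ i ∈ Finset.range n, ∑ j ∈ Finset.range n,
          (f * (onp μ i * onp μ j)).eval z.1 * (g * (onp μ i * onp μ j)).eval z.2 := by
    intro z
    rw [twoPoint, pow_two, eval_cdKernel, Finset.sum_mul_sum, mul_sub, Finset.mul_sum]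
    simp only [eval_mul, Finset.mul_sum]
    congr 1
    · ring
    · exact Finset.sum_congr rfl fun i _ => Finset.sum_congr rfl fun j _ => by ring
  simp_rw [hexpand]
  rw [integral_sub (integrable_prod_of_continuous (by fun_prop))
      (integrable_prod_of_continuous (by fun_prop)),
    integral_prod_mul (fun x => (f * cdDiag μ n).eval x) (fun x => (g * cdDiag μ n).eval x),
    ← polyIntegral_apply, ← polyIntegral_apply, polyIntegral_mul_cdDiag, polyIntegral_mul_cdDiag,
    integral_finsetSum _ fun i _ => integrable_prod_of_continuous (by fun_prop)]
  congr 1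
  refine Finset.sum_congr rfl fun i _ => ?_
  rw [integral_finsetSum _ fun j _ => integrable_prod_of_continuous (by fun_prop)]
  refine Finset.sum_congr rfl fun j _ => ?_
  rw [mulEntry, mulEntry, polyIntegral_apply, polyIntegral_apply]
  exact integral_prod_mul (fun x => (f * (onp μ i * onp μ j)).eval x)
    (fun x => (g * (onp μ i * onp μ j)).eval x)

variable {μ} in
theorem polyIntegral_derivative_mul_cdDiag {ι : Type*} {s : Finset ι} {h : ℝ[X]} {f g : ι → ℝ[X]}
    (hfg : ∀ x y, (x - y) * ∑ r ∈ s, (f r).eval x * (g r).eval y = h.eval x - h.eval y) (n : ℕ) :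
    polyIntegral μ (h * cdDiag μ n).derivative =
      ∑ r ∈ s, (statMean μ n (f r) * statMean μ n (g r) + statCov μ n (f r) (g r)) := by
  have hder : h.derivative = ∑ r ∈ s, f r * g r := Polynomial.funext fun x => by
    rw [← eval_self_eq_eval_derivative (q := ∑ r ∈ s, C ((f r).eval x) * g r)]
    · simp only [eval_finsetSum, eval_mul, eval_C]
    · simpa only [eval_finsetSum, eval_mul, eval_C] using hfg x
  have hdiag : polyIntegral μ (h.derivative * cdDiag μ n) = ∑ r ∈ s, statMean μ n (f r * g r) := by
    rw [hder, Finset.sum_mul, map_sum]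
    exact Finset.sum_congr rfl fun r _ => polyIntegral_mul_cdDiag μ n _
  rw [derivative_mul, map_add, hdiag, ← integral_mul_twoPoint_of_sub_mul_eq hfg]
  simp_rw [Finset.sum_mul]
  rw [integral_finsetSum _ fun r _ => integrable_prod_of_continuous
    (by unfold twoPoint; fun_prop), ← Finset.sum_add_distrib]
  refine Finset.sum_congr rfl fun r _ => ?_
  rw [integral_mul_twoPoint, statCov]
  ring

end SchwingerDyson

section Chebyshev

lemma two_mul_eval_T_mul (a : ℤ) (x : ℝ) : 2 * x * (Chebyshev.T ℝ a).eval x =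
    (Chebyshev.T ℝ (a + 1)).eval x + (Chebyshev.T ℝ (a - 1)).eval x := by
  simp [Chebyshev.T_add_one]

lemma two_mul_sub_mul_sum_T (M N : ℕ) (x y : ℝ) :
    2 * (x - y) * ∑ l ∈ Finset.range N,
      (Chebyshev.T ℝ (M - l)).eval x * (Chebyshev.T ℝ (l + 1)).eval y =
    (Chebyshev.T ℝ (M + 1)).eval x * y
      - (Chebyshev.T ℝ (M + 1 - N)).eval x * (Chebyshev.T ℝ (N + 1)).eval y
      + (Chebyshev.T ℝ (M - N)).eval x * (Chebyshev.T ℝ N).eval y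
      - (Chebyshev.T ℝ M).eval x := by
  induction N with
  | zero => simp
  | succ N ih =>
    have hx := two_mul_eval_T_mul (M - N) x
    have hy := two_mul_eval_T_mul (N + 1) y
    rw [show (M : ℤ) - N + 1 = M + 1 - N by ring] at hx
    rw [show (N : ℤ) + 1 - 1 = N by ring] at hy
    rw [Finset.sum_range_succ, mul_add, ih]
    push_cast
    rw [show (M : ℤ) + 1 - (N + 1) = M - N by ring, show (M : ℤ) - (N + 1) = M - N - 1 by ring]
    linear_combination (Chebyshev.T ℝ (N + 1)).eval y * hx -
      (Chebyshev.T ℝ (M - N)).eval x * hy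

theorem polyIntegral_derivative_X_sq_sub_one_mul_U (μ : Measure ℝ) [IsSymmetricWeight μ]
    (n M : ℕ) :
    polyIntegral μ ((X ^ 2 - 1) * Chebyshev.U ℝ M * cdDiag μ n).derivative =
      2 * (n * statMean μ n (Chebyshev.T ℝ (M + 1)) + ∑ l ∈ Finset.range M,
        (statMean μ n (Chebyshev.T ℝ (M - l)) * statMean μ n (Chebyshev.T ℝ (l + 1)) +
          statCov μ n (Chebyshev.T ℝ (M - l)) (Chebyshev.T ℝ (l + 1)))) := by
  set f : ℕ → ℝ[X] := fun l => Chebyshev.T ℝ (M - l)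
  set g : ℕ → ℝ[X] := fun l => Chebyshev.T ℝ (l + 1)
  have hdiff : ∀ x y : ℝ, (x - y) * ∑ r ∈ (Finset.range (M + 1)).disjSum (Finset.range (M + 1)),
      (Sum.elim f g r).eval x * (Sum.elim g f r).eval y =
        ((X ^ 2 - 1) * Chebyshev.U ℝ M).eval x - ((X ^ 2 - 1) * Chebyshev.U ℝ M).eval y := by
    intro x y
    have hU : ∀ z : ℝ, 2 * ((X ^ 2 - 1) * Chebyshev.U ℝ M).eval z =
        (Chebyshev.T ℝ (M + 2)).eval z - (Chebyshev.T ℝ M).eval z := fun z => by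
      have h := congrArg (eval z) (Chebyshev.one_sub_X_sq_mul_U_eq_pol_in_T ℝ M)
      have hT := congrArg (eval z) (Chebyshev.T_add_two ℝ M)
      simp only [eval_mul, eval_sub, eval_pow, eval_X, eval_one, eval_ofNat] at h hT ⊢
      linear_combination -2 * h + hT
    have hxy := two_mul_sub_mul_sum_T M (M + 1) x y
    have hyx := two_mul_sub_mul_sum_T M (M + 1) y x
    push_cast at hxy hyx
    rw [sub_self, sub_add_cancel_left, Chebyshev.T_neg, Chebyshev.T_zero, Chebyshev.T_one,
      eval_one, eval_X, add_assoc (M : ℤ) 1 1, one_add_one_eq_two] at hxy hyx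
    simp only [Finset.sum_disjSum, Sum.elim_inl, Sum.elim_inr, f, g]
    simp only [mul_comm ((Chebyshev.T ℝ (_ + 1)).eval x)]
    linear_combination (hxy - hyx - hU x + hU y) / 2
  rw [polyIntegral_derivative_mul_cdDiag hdiff]
  have hcomm : ∀ l, statCov μ n (g l) (f l) = statCov μ n (f l) (g l) := fun l => by
    simp only [statCov, mul_comm (g l), mul_comm (mulEntry μ (g l) _ _)]
  have hlast : statMean μ n (f M) * statMean μ n (g M) + statCov μ n (f M) (g M) =
      n * statMean μ n (g M) := by
    rw [← hcomm, show f M = 1 by simp only [f, sub_self, Chebyshev.T_zero], statCov, mul_one,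
      sum_mulEntry_mul_mulEntry_one, sub_self, statMean_one, add_zero]
  simp only [Finset.sum_disjSum, Sum.elim_inl, Sum.elim_inr, hcomm, mul_comm (statMean μ n (g _))]
  rw [← two_mul, Finset.sum_range_succ, hlast, add_comm]

end Chebyshev

/-! ### Asymptotics of the Jacobi coefficients and of the covariances -/

section MatrixEntries

variable (μ : Measure ℝ)

lemma mulEntry_sub (f g : ℝ[X]) (i j : ℕ) :
    mulEntry μ (f - g) i j = mulEntry μ f i j - mulEntry μ g i j := by
  rw [mulEntry, sub_mul, map_sub]
  rfl

lemma mulEntry_C_mul (c : ℝ) (f : ℝ[X]) (i j : ℕ) :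
    mulEntry μ (C c * f) i j = c * mulEntry μ f i j := by
  rw [mulEntry, mul_assoc, polyIntegral_C_mul]
  rfl

lemma mulEntry_comm (f : ℝ[X]) (i j : ℕ) : mulEntry μ f i j = mulEntry μ f j i := by
  rw [mulEntry, mul_comm (onp μ i), mulEntry]

lemma mulEntry_T_add_two (a : ℤ) (i j : ℕ) : mulEntry μ (Chebyshev.T ℝ (a + 2)) i j =
    2 * mulEntry μ (X * Chebyshev.T ℝ (a + 1)) i j - mulEntry μ (Chebyshev.T ℝ a) i j := by
  rw [Chebyshev.T_add_two, mulEntry_sub, mul_assoc, ← C_ofNat, mulEntry_C_mul]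

variable [IsSymmetricWeight μ]

lemma mulEntry_X_mul_succ (f : ℝ[X]) (i j : ℕ) : mulEntry μ (X * f) (i + 1) j =
    jacobiCoeff μ (i + 1) * mulEntry μ f (i + 2) j + jacobiCoeff μ i * mulEntry μ f i j := by
  simp only [mulEntry]
  rw [← polyIntegral_C_mul, ← polyIntegral_C_mul, ← map_add]
  congr 1
  linear_combination (f * onp μ j) * X_mul_onp_succ μ i

lemma mulEntry_X_succ (i j : ℕ) : mulEntry μ X (i + 1) j =
    jacobiCoeff μ (i + 1) * (if i + 2 = j then 1 else 0) +
      jacobiCoeff μ i * (if i = j then 1 else 0) := by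
  rw [← mul_one X, mulEntry_X_mul_succ, mulEntry_one, mulEntry_one]

lemma mulEntry_X_succ_self (i : ℕ) : mulEntry μ X (i + 1) i = jacobiCoeff μ i := by
  simp [mulEntry_X_succ]

lemma mulEntry_T_two_succ (i j : ℕ) : mulEntry μ (Chebyshev.T ℝ 2) (i + 1) j =
    2 * (jacobiCoeff μ (i + 1) * mulEntry μ X (i + 2) j + jacobiCoeff μ i * mulEntry μ X i j) -
      if i + 1 = j then 1 else 0 := by
  have h := mulEntry_T_add_two μ 0 (i + 1) j
  rwa [zero_add, zero_add, Chebyshev.T_one, Chebyshev.T_zero, mulEntry_one,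
    mulEntry_X_mul_succ] at h

lemma mulEntry_T_two_self (n : ℕ) : mulEntry μ (Chebyshev.T ℝ 2) (n + 2) (n + 2) =
    2 * (jacobiCoeff μ (n + 2) ^ 2 + jacobiCoeff μ (n + 1) ^ 2) - 1 := by
  rw [mulEntry_T_two_succ, if_pos rfl, mulEntry_X_succ_self, mulEntry_comm, mulEntry_X_succ_self]
  ring

lemma mulEntry_T_two_add_two_self (n : ℕ) : mulEntry μ (Chebyshev.T ℝ 2) (n + 2) n =
    2 * (jacobiCoeff μ (n + 1) * jacobiCoeff μ n) := by
  simp [mulEntry_T_two_succ, mulEntry_X_succ, add_assoc]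

lemma mulEntry_T_four_self (n : ℕ) : mulEntry μ (Chebyshev.T ℝ 4) (n + 2) (n + 2) =
    8 * (jacobiCoeff μ (n + 2) ^ 2 * jacobiCoeff μ (n + 3) ^ 2 +
      jacobiCoeff μ (n + 1) ^ 2 * jacobiCoeff μ n ^ 2) +
    2 * mulEntry μ (Chebyshev.T ℝ 2) (n + 2) (n + 2) ^ 2 - 1 := by
  have h4 := mulEntry_T_add_two μ 2 (n + 2) (n + 2)
  have h3 := fun i => mulEntry_T_add_two μ 1 (i + 1) (n + 2)
  norm_num only [mulEntry_X_mul_succ, Chebyshev.T_one] at h3 h4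
  rw [h4, h3, h3, mulEntry_comm μ _ n, mulEntry_T_two_add_two_self, mulEntry_T_two_add_two_self,
    mulEntry_X_succ_self, mulEntry_comm μ X, mulEntry_X_succ_self, mulEntry_T_two_self]
  ring

lemma jacobiCoeff_succ_le_one (n : ℕ) : jacobiCoeff μ (n + 1) ≤ 1 := by
  rw [← mulEntry_X_succ_self]
  refine (le_abs_self _).trans (abs_mulEntry_le_one μ (fun x hx => ?_) _ _)
  rw [eval_X]
  exact abs_le.2 hx

end MatrixEntries

lemma tendsto_of_tendsto_add_succ {b : ℕ → ℝ} {c B : ℝ} (hB : ∀ n, |b n| ≤ B)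
    (hadd : Tendsto (fun n => b n + b (n + 1)) atTop (𝓝 (2 * c)))
    (hmul : Tendsto (fun n => b (n + 2) * b (n + 3) + b (n + 1) * b n) atTop (𝓝 (2 * c ^ 2))) :
    Tendsto b atTop (𝓝 c) := by
  set e : ℕ → ℝ := fun n => b n + b (n + 1) - 2 * c
  have he : ∀ k, Tendsto (fun n => e (n + k)) atTop (𝓝 0) := fun k =>
    (tendsto_add_atTop_iff_nat k).2 (tendsto_sub_nhds_zero_iff.2 hadd)
  have hsmall : Tendsto (fun n => (e (n + 2) + 2 * e (n + 1) - e n) * (b (n + 2) - c)) atTop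
      (𝓝 0) := by
    have h : Tendsto (fun n => e (n + 2) + 2 * e (n + 1) - e n) atTop (𝓝 0) := by
      simpa using ((he 2).add ((he 1).const_mul 2)).sub (he 0)
    refine h.zero_mul_isBoundedUnder_le (isBoundedUnder_of ⟨B + |c|, fun n => ?_⟩)
    exact (abs_sub _ _).trans (by gcongr; exact hB _)
  have hsq : Tendsto (fun n => (b (n + 2) - c) ^ 2) atTop (𝓝 0) := by
    have h := ((hsmall.add ((he 1).mul ((he 0).sub (he 1)))).sub
      ((tendsto_sub_nhds_zero_iff.2 hmul).sub (((he 2).add (he 0)).const_mul c))).div_const 2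
    simp only [add_zero, mul_zero, sub_zero, zero_div] at h
    refine h.congr fun n => ?_
    simp only [e, add_assoc, Nat.reduceAdd]
    ring
  have habs := hsq.sqrt
  simp only [Real.sqrt_sq_eq_abs, Real.sqrt_zero] at habs
  exact (tendsto_add_atTop_iff_nat 2).1
    (tendsto_sub_nhds_zero_iff.1 ((tendsto_zero_iff_abs_tendsto_zero _).2 habs))

section Limits

variable {μ : Measure ℝ} [IsSymmetricWeight μ]

lemma tendsto_jacobiCoeff
    (h2 : Tendsto (fun n => mulEntry μ (Chebyshev.T ℝ 2) n n) atTop (𝓝 0))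
    (h4 : Tendsto (fun n => mulEntry μ (Chebyshev.T ℝ 4) n n) atTop (𝓝 0)) :
    Tendsto (jacobiCoeff μ) atTop (𝓝 (1 / 2)) := by
  have hsq : Tendsto (fun n => jacobiCoeff μ (n + 1) ^ 2) atTop (𝓝 (1 / 4)) := by
    refine tendsto_of_tendsto_add_succ (B := 1) (fun n => ?_) ?_ ?_
    · rw [abs_of_nonneg (sq_nonneg _)]
      exact pow_le_one₀ (jacobiCoeff_pos μ _).le (jacobiCoeff_succ_le_one μ n)
    · have h := (((tendsto_add_atTop_iff_nat 2).2 h2).add_const 1).div_const 2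
      convert h using 2
      · rw [mulEntry_T_two_self]; ring
      · norm_num
    · have h := (((tendsto_add_atTop_iff_nat 3).2 h4).add_const 1).sub
        ((((tendsto_add_atTop_iff_nat 3).2 h2).pow 2).const_mul 2) |>.div_const 8
      convert h using 2 with n
      · rw [mulEntry_T_four_self μ (n + 1)]; ring
      · norm_num
  have hsqrt := hsq.sqrt
  simp only [Real.sqrt_sq (jacobiCoeff_pos μ _).le] at hsqrt
  rw [show (1 / 4 : ℝ) = (1 / 2) ^ 2 by norm_num, Real.sqrt_sq (by norm_num)] at hsqrt
  exact (tendsto_add_atTop_iff_nat 1).1 hsqrt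

lemma tendsto_mulEntry_X_mul (hJ : Tendsto (jacobiCoeff μ) atTop (𝓝 (1 / 2))) {f : ℝ[X]}
    {F : ℕ → ℕ → ℝ} (hf : ∀ p q, Tendsto (fun n => mulEntry μ f (n + p) (n + q)) atTop (𝓝 (F p q)))
    (p q : ℕ) : Tendsto (fun n => mulEntry μ (X * f) (n + p) (n + q)) atTop
      (𝓝 ((F (p + 2) (q + 1) + F p (q + 1)) / 2)) := by
  have hJ' : ∀ k, Tendsto (fun n => jacobiCoeff μ (n + k)) atTop (𝓝 (1 / 2)) := fun k =>
    (tendsto_add_atTop_iff_nat k).2 hJ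
  refine (tendsto_add_atTop_iff_nat 1).1 ?_
  convert ((hJ' (p + 1)).mul (hf (p + 2) (q + 1))).add ((hJ' p).mul (hf p (q + 1))) using 2 with n
  · rw [add_right_comm, mulEntry_X_mul_succ, add_right_comm n 1 q]
    simp only [add_assoc]
  · ring

/-- The limits of the entries of `T a` when the Jacobi coefficients tend to those of the free
Jacobi matrix. -/
noncomputable def freeEntry (a p q : ℕ) : ℝ :=
  ((if p = q + a then 1 else 0) + (if q = p + a then 1 else 0)) / 2

lemma freeEntry_add_two (a p q : ℕ) : freeEntry (a + 2) p q =
    freeEntry (a + 1) (p + 2) (q + 1) + freeEntry (a + 1) p (q + 1) - freeEntry a p q := by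
  simp only [freeEntry, show p + 2 = q + 1 + (a + 1) ↔ p = q + a by lia,
    show q + 1 = p + 2 + (a + 1) ↔ q = p + (a + 2) by lia,
    show p = q + 1 + (a + 1) ↔ p = q + (a + 2) by lia,
    show q + 1 = p + (a + 1) ↔ q = p + a by lia]
  ring

lemma tendsto_mulEntry_T (hJ : Tendsto (jacobiCoeff μ) atTop (𝓝 (1 / 2))) (a p q : ℕ) :
    Tendsto (fun n => mulEntry μ (Chebyshev.T ℝ a) (n + p) (n + q)) atTop
      (𝓝 (freeEntry a p q)) := by
  induction a using Nat.twoStepInduction generalizing p q with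
  | zero =>
    refine tendsto_const_nhds.congr fun n => ?_
    rw [Nat.cast_zero, Chebyshev.T_zero, mulEntry_one, freeEntry]
    split_ifs <;> first | lia | norm_num
  | one =>
    have h := tendsto_mulEntry_X_mul hJ (f := 1) (F := fun p q => if p = q then 1 else 0)
      (fun p q => by simp only [mulEntry_one, add_right_inj, tendsto_const_nhds_iff]) p q
    rw [mul_one] at h
    rwa [Nat.cast_one, Chebyshev.T_one, freeEntry, add_comm (if p = q + 1 then (1 : ℝ) else 0),
      if_congr (show q = p + 1 ↔ p + 2 = q + 1 by lia) rfl rfl]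
  | more a iha ihb =>
    have h := ((tendsto_mulEntry_X_mul hJ ihb p q).const_mul 2).sub (iha p q)
    rw [mul_div_cancel₀ _ two_ne_zero, ← freeEntry_add_two] at h
    refine h.congr fun n => ?_
    push_cast
    rw [mulEntry_T_add_two]

lemma sum_freeEntry_mul_freeEntry (a : ℕ) {c : ℕ} (hc : 0 < c) :
    ∑ p ∈ Finset.range a, ∑ q ∈ Finset.range a, freeEntry a p (a + q) * freeEntry c p (a + q) =
      if a = c then (a : ℝ) / 4 else 0 := by
  have hrow : ∀ p ∈ Finset.range a, ∑ q ∈ Finset.range a,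
      freeEntry a p (a + q) * freeEntry c p (a + q) = if a = c then (1 : ℝ) / 4 else 0 := by
    intro p hp
    rw [Finset.sum_eq_single_of_mem p hp]
    · rw [Finset.mem_range] at hp
      unfold freeEntry
      split_ifs <;> first | lia | norm_num
    · intro q _ hq
      rw [Finset.mem_range] at hp
      unfold freeEntry
      split_ifs <;> first | lia | norm_num
  rw [Finset.sum_congr rfl hrow]
  split_ifs <;> simp [div_eq_mul_inv]

lemma tendsto_statCov_T (hJ : Tendsto (jacobiCoeff μ) atTop (𝓝 (1 / 2))) (a : ℕ) {c : ℕ}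
    (hc : 0 < c) : Tendsto (fun n => statCov μ n (Chebyshev.T ℝ a) (Chebyshev.T ℝ c)) atTop
      (𝓝 (if a = c then (a : ℝ) / 4 else 0)) := by
  rw [← sum_freeEntry_mul_freeEntry a hc]
  refine (tendsto_add_atTop_iff_nat a).1 ?_
  refine (tendsto_finsetSum _ fun p _ => tendsto_finsetSum _ fun q _ =>
    (tendsto_mulEntry_T hJ a p (a + q)).mul (tendsto_mulEntry_T hJ c p (a + q))).congr fun n => ?_
  rw [statCov_eq_sum_mulEntry, Chebyshev.natDegree_T, Int.natAbs_natCast, Nat.add_sub_cancel]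
  simp only [Finset.sum_Ico_eq_sum_range, add_tsub_cancel_left, add_assoc,
    add_tsub_add_eq_tsub_left]

end Limits

/-! ### The Jacobi weight -/

section JacobiWeight

/-- The weight `(1 - x²)^α (1 - k² x²)^b`, where `k2` stands for `k²`. -/
noncomputable def jacobiWeight (α k2 b x : ℝ) : ℝ := (1 - x ^ 2) ^ α * (1 - k2 * x ^ 2) ^ b

/-- The measure on `[-1,1]` with density `jacobiWeight α k2 b`. -/
noncomputable def jacobiMeasure (α k2 b : ℝ) : Measure ℝ :=
  (volume.restrict (Set.Ioc (-1 : ℝ) 1)).withDensity fun x => ENNReal.ofReal (jacobiWeight α k2 b x)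

lemma measurable_jacobiWeight (α k2 b : ℝ) : Measurable (jacobiWeight α k2 b) := by
  unfold jacobiWeight
  fun_prop

lemma one_sub_sq_pos {x : ℝ} (hx : x ∈ Set.Ioo (-1 : ℝ) 1) : 0 < 1 - x ^ 2 := by
  nlinarith [hx.1, hx.2]

lemma one_sub_sq_nonneg {x : ℝ} (hx : x ∈ Set.Icc (-1 : ℝ) 1) : 0 ≤ 1 - x ^ 2 := by
  nlinarith [hx.1, hx.2]

lemma one_sub_mul_sq_pos {k2 x : ℝ} (hk : k2 < 1) (hx : x ∈ Set.Icc (-1 : ℝ) 1) :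
    0 < 1 - k2 * x ^ 2 := by
  rcases le_total k2 0 with h0 | h0
  · nlinarith [sq_nonneg x]
  · nlinarith [one_sub_sq_nonneg hx]

lemma intervalIntegrable_one_sub_sq_rpow {α : ℝ} (hα : -1 < α) :
    IntervalIntegrable (fun x : ℝ => (1 - x ^ 2) ^ α) volume (-1) 1 := by
  have hright : IntervalIntegrable (fun x : ℝ => (1 - x ^ 2) ^ α) volume 0 1 := by
    have hsing : IntervalIntegrable (fun x : ℝ => (1 - x) ^ α) volume 0 1 := by
      simpa using ((intervalIntegral.intervalIntegrable_rpow' (a := 0) (b := 1) hα).comp_sub_left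
        1).symm
    have hcont : ContinuousOn (fun x : ℝ => (1 + x) ^ α) (Set.uIcc 0 1) := by
      refine ContinuousOn.rpow_const (by fun_prop) fun x hx => Or.inl ?_
      rw [Set.uIcc_of_le zero_le_one] at hx
      linarith [hx.1]
    refine (hsing.mul_continuousOn hcont).congr fun x hx => ?_
    rw [Set.uIoc_of_le zero_le_one] at hx
    rw [← Real.mul_rpow (by linarith [hx.2]) (by linarith [hx.1])]
    congr 1
    ring
  have hleft : IntervalIntegrable (fun x : ℝ => (1 - x ^ 2) ^ α) volume (-1) 0 := by
    simpa using (hright.comp_sub_left 0).symm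
  exact hleft.trans hright

variable {α k2 b : ℝ}

lemma jacobiWeight_nonneg (hk : k2 < 1) {x : ℝ} (hx : x ∈ Set.Icc (-1 : ℝ) 1) :
    0 ≤ jacobiWeight α k2 b x :=
  mul_nonneg (Real.rpow_nonneg (one_sub_sq_nonneg hx) _)
    (Real.rpow_nonneg (one_sub_mul_sq_pos hk hx).le _)

lemma jacobiWeight_pos (hk : k2 < 1) {x : ℝ} (hx : x ∈ Set.Ioo (-1 : ℝ) 1) :
    0 < jacobiWeight α k2 b x :=
  mul_pos (Real.rpow_pos_of_pos (one_sub_sq_pos hx) _)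
    (Real.rpow_pos_of_pos (one_sub_mul_sq_pos hk (Set.Ioo_subset_Icc_self hx)) _)

lemma continuousOn_one_sub_mul_sq_rpow (hk : k2 < 1) (b : ℝ) :
    ContinuousOn (fun x : ℝ => (1 - k2 * x ^ 2) ^ b) (Set.Icc (-1) 1) :=
  ContinuousOn.rpow_const (by fun_prop) fun _ hx => Or.inl (one_sub_mul_sq_pos hk hx).ne'

lemma intervalIntegrable_jacobiWeight (hα : -1 < α) (hk : k2 < 1) (b : ℝ) :
    IntervalIntegrable (jacobiWeight α k2 b) volume (-1) 1 := by
  refine (intervalIntegrable_one_sub_sq_rpow hα).mul_continuousOn ?_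
  rw [Set.uIcc_of_le (by norm_num)]
  exact continuousOn_one_sub_mul_sq_rpow hk b

lemma integral_jacobiMeasure (hk : k2 < 1) (f : ℝ → ℝ) :
    ∫ x, f x ∂(jacobiMeasure α k2 b) = ∫ x in (-1 : ℝ)..1, f x * jacobiWeight α k2 b x := by
  rw [jacobiMeasure, integral_withDensity_eq_integral_toReal_smul
    (measurable_jacobiWeight α k2 b).ennreal_ofReal (by simp),
    intervalIntegral.integral_of_le (by norm_num)]
  refine setIntegral_congr_fun measurableSet_Ioc fun x hx => ?_
  simp only [smul_eq_mul]
  rw [ENNReal.toReal_ofReal (jacobiWeight_nonneg hk (Set.Ioc_subset_Icc_self hx)), mul_comm]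

lemma integral_sq_mul_jacobiWeight_pos (hα : -1 < α) (hk : k2 < 1) (b : ℝ) {p : ℝ[X]}
    (hp : p ≠ 0) : 0 < ∫ x in (-1 : ℝ)..1, p.eval x ^ 2 * jacobiWeight α k2 b x := by
  have hint : IntervalIntegrable (fun x => p.eval x ^ 2 * jacobiWeight α k2 b x) volume (-1) 1 :=
    (intervalIntegrable_jacobiWeight hα hk b).continuousOn_mul (by fun_prop)
  have hsub : Set.Ioo (-1 : ℝ) 1 \ (p.roots.toFinset : Set ℝ) ⊆
      (Function.support fun x => p.eval x ^ 2 * jacobiWeight α k2 b x) ∩ Set.Ioc (-1) 1 := by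
    intro x hx
    have hroot : p.eval x ≠ 0 := fun h => hx.2 (by simpa [hp] using h)
    exact ⟨mul_ne_zero (pow_ne_zero 2 hroot) (jacobiWeight_pos hk hx.1).ne',
      Set.Ioo_subset_Ioc_self hx.1⟩
  rw [intervalIntegral.integral_of_le (by norm_num), setIntegral_pos_iff_support_of_nonneg_ae _
    ((intervalIntegrable_iff_integrableOn_Ioc_of_le (by norm_num)).1 hint)]
  · refine lt_of_lt_of_le ?_ (measure_mono hsub)
    rw [measure_sdiff_null (Finset.measure_zero _ _)]
    simp
  · filter_upwards [ae_restrict_mem measurableSet_Ioc] with x hx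
    exact mul_nonneg (sq_nonneg _) (jacobiWeight_nonneg hk (Set.Ioc_subset_Icc_self hx))

lemma isSymmetricWeight_jacobiMeasure (hα : -1 < α) (hk : k2 < 1) (b : ℝ) :
    IsSymmetricWeight (jacobiMeasure α k2 b) where
  measure_univ_lt_top := by
    have hint := (intervalIntegrable_iff_integrableOn_Ioc_of_le (by norm_num)).1
      (intervalIntegrable_jacobiWeight hα hk b)
    have : IsFiniteMeasure (jacobiMeasure α k2 b) := isFiniteMeasure_withDensity_ofReal hint.2
    exact measure_lt_top (jacobiMeasure α k2 b) Set.univ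
  ae_mem_Icc := by
    refine (withDensity_absolutelyContinuous _ _).ae_le ?_
    filter_upwards [ae_restrict_mem measurableSet_Ioc] with x hx
    exact Set.Ioc_subset_Icc_self hx
  integral_eval_neg p := by
    have hneg := intervalIntegral.integral_comp_neg (a := (-1 : ℝ)) (b := 1)
      fun x => p.eval x * jacobiWeight α k2 b x
    rw [neg_neg] at hneg
    rw [integral_jacobiMeasure hk, integral_jacobiMeasure hk, ← hneg]
    simp only [jacobiWeight, neg_sq]
  integral_sq_pos p hp := by
    rw [integral_jacobiMeasure hk]
    exact integral_sq_mul_jacobiWeight_pos hα hk b hp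

lemma hasDerivAt_jacobiWeight_add_one (hk : k2 < 1) {x : ℝ} (hx : x ∈ Set.Ioo (-1 : ℝ) 1) :
    HasDerivAt (jacobiWeight (α + 1) k2 b)
      (-2 * ((α + 1) * x + b * (k2 * x * (1 - x ^ 2) / (1 - k2 * x ^ 2))) *
        jacobiWeight α k2 b x) x := by
  have hpos := one_sub_sq_pos hx
  have hkpos := one_sub_mul_sq_pos hk (Set.Ioo_subset_Icc_self hx)
  have hbase : HasDerivAt (fun x : ℝ => 1 - x ^ 2) (-(2 * x)) x := by
    simpa using (hasDerivAt_pow 2 x).const_sub 1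
  have hkbase : HasDerivAt (fun x : ℝ => 1 - k2 * x ^ 2) (-(k2 * (2 * x))) x := by
    simpa using ((hasDerivAt_pow 2 x).const_mul k2).const_sub 1
  refine ((hbase.rpow_const (p := α + 1) (Or.inl hpos.ne')).mul
    (hkbase.rpow_const (p := b) (Or.inl hkpos.ne'))).congr_deriv ?_
  rw [jacobiWeight, Real.rpow_add_one hpos.ne', Real.rpow_sub_one hkpos.ne', add_sub_cancel_right]
  field_simp
  ring

lemma continuousOn_jacobiWeight (hα : 0 ≤ α) (hk : k2 < 1) :
    ContinuousOn (jacobiWeight α k2 b) (Set.Icc (-1) 1) :=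
  (ContinuousOn.rpow_const (by fun_prop) fun _ _ => Or.inr hα).mul
    (continuousOn_one_sub_mul_sq_rpow hk b)

lemma continuousOn_mul_div_one_sub_mul_sq (hk : k2 < 1) :
    ContinuousOn (fun x : ℝ => k2 * x * (1 - x ^ 2) / (1 - k2 * x ^ 2)) (Set.Icc (-1) 1) :=
  ContinuousOn.div (by fun_prop) (by fun_prop) fun _ hx => (one_sub_mul_sq_pos hk hx).ne'

theorem polyIntegral_derivative_jacobiMeasure (hα : -1 < α) (hk : k2 < 1) (b : ℝ) (r : ℝ[X]) :
    polyIntegral (jacobiMeasure α k2 b) ((X ^ 2 - 1) * r).derivative =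
      -2 * (α * polyIntegral (jacobiMeasure α k2 b) (X * r) +
        b * ∫ x, k2 * x * (1 - x ^ 2) / (1 - k2 * x ^ 2) * r.eval x ∂(jacobiMeasure α k2 b)) := by
  have := isSymmetricWeight_jacobiMeasure hα hk b
  set ψ : ℝ → ℝ := fun x => k2 * x * (1 - x ^ 2) / (1 - k2 * x ^ 2)
  set g : ℝ → ℝ := fun x =>
    ((X ^ 2 - 1) * r).derivative.eval x + 2 * (α * (X * r).eval x + b * (ψ x * r.eval x)) with hg
  have hψ : ContinuousOn ψ (Set.Icc (-1) 1) := continuousOn_mul_div_one_sub_mul_sq hk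
  have hcont : ContinuousOn g (Set.Icc (-1) 1) := by fun_prop
  have hderiv : ∀ x ∈ Set.Ioo (-1 : ℝ) 1, HasDerivAt
      (fun x => -(jacobiWeight (α + 1) k2 b x * r.eval x)) (g x * jacobiWeight α k2 b x) x := by
    intro x hx
    refine ((hasDerivAt_jacobiWeight_add_one hk hx).mul (r.hasDerivAt x)).neg.congr_deriv ?_
    have hw : jacobiWeight (α + 1) k2 b x = (1 - x ^ 2) * jacobiWeight α k2 b x := by
      rw [jacobiWeight, jacobiWeight, Real.rpow_add_one (one_sub_sq_pos hx).ne']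
      ring
    simp only [hw, hg, ψ, derivative_mul, derivative_sub, derivative_one, derivative_X_pow,
      eval_add, eval_mul, eval_sub, eval_pow, eval_X, eval_one, eval_zero, eval_C, Nat.cast_ofNat]
    ring
  have hint : IntervalIntegrable (fun x => g x * jacobiWeight α k2 b x) volume (-1) 1 := by
    refine (intervalIntegrable_jacobiWeight hα hk b).continuousOn_mul ?_
    rwa [Set.uIcc_of_le (by norm_num)]
  have hzero := intervalIntegral.integral_eq_sub_of_hasDerivAt_of_le (by norm_num)
    ((continuousOn_jacobiWeight (by linarith) hk).mul r.continuous.continuousOn).neg hderiv hint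
  simp only [Pi.neg_apply, Pi.mul_apply] at hzero
  have hboundary : jacobiWeight (α + 1) k2 b 1 = 0 ∧ jacobiWeight (α + 1) k2 b (-1) = 0 := by
    simp [jacobiWeight, Real.zero_rpow (by linarith : α + 1 ≠ 0)]
  rw [← integral_jacobiMeasure hk, hboundary.1, hboundary.2] at hzero
  simp only [hg] at hzero
  rw [integral_add (integrable_polynomial_eval _) (integrable_of_continuousOn (by fun_prop)),
    integral_const_mul, integral_add (integrable_of_continuousOn (by fun_prop))
      (integrable_of_continuousOn (by fun_prop)), integral_const_mul, integral_const_mul,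
    ← polyIntegral_apply, ← polyIntegral_apply] at hzero
  linarith

end JacobiWeight

/-! ### Loop equations -/

/-- The modulus `k² = 4u / (1 + u)²`, parametrized by the descending Landen transformation `u` of
`k`; in this parameter `1 - k² x²` is proportional to `1 - 2u (2x² - 1) + u²`. -/
noncomputable def modulusSq (u : ℝ) : ℝ := 4 * u / (1 + u) ^ 2

section Landen

variable {u : ℝ}

lemma one_add_pos_of_abs_lt_one (hu : |u| < 1) : 0 < 1 + u := by
  linarith [neg_lt_of_abs_lt hu]

lemma one_sub_modulusSq_mul_sq (hu : |u| < 1) (x : ℝ) :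
    1 - modulusSq u * x ^ 2 = (1 - 2 * u * (2 * x ^ 2 - 1) + u ^ 2) / (1 + u) ^ 2 := by
  have := (one_add_pos_of_abs_lt_one hu).ne'
  rw [modulusSq]
  field_simp
  ring

lemma one_sub_modulusSq (hu : |u| < 1) : 1 - modulusSq u = ((1 - u) / (1 + u)) ^ 2 := by
  have h := one_sub_modulusSq_mul_sq hu 1
  rw [one_pow, mul_one] at h
  rw [h, div_pow]
  ring

lemma modulusSq_lt_one (hu : |u| < 1) : modulusSq u < 1 := by
  have := div_pos (sub_pos.2 (lt_of_abs_lt hu)) (one_add_pos_of_abs_lt_one hu)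
  have := one_sub_modulusSq hu
  nlinarith

end Landen

section ChebyshevExpansion

variable {u : ℝ}

lemma X_mul_U_two_mul_add_one (N : ℕ) :
    X * Chebyshev.U ℝ (2 * N + 1) =
      1 + C 2 * ∑ j ∈ Finset.range N, Chebyshev.T ℝ (2 * (j + 1)) +
        Chebyshev.T ℝ (2 * (N + 1)) := by
  induction N with
  | zero =>
    simp only [CharP.cast_eq_zero, mul_zero, zero_add, Chebyshev.U_one, Finset.range_zero,
      Finset.sum_empty, add_zero, mul_one, Chebyshev.T_two]
    ring
  | succ N ih =>
    have hU := Chebyshev.U_eq_two_mul_T_add_U ℝ (2 * N + 1)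
    have hT := Chebyshev.T_add_two ℝ (2 * (N + 1))
    rw [Finset.sum_range_succ, C_ofNat]
    rw [C_ofNat] at ih
    push_cast
    rw [show (2 * ((N : ℤ) + 1) + 1) = 2 * N + 1 + 2 by ring,
      show (2 * ((N : ℤ) + 1 + 1)) = 2 * (N + 1) + 2 by ring, hU, hT,
      show (2 * ((N : ℤ) + 1) + 1) = 2 * N + 1 + 2 by ring]
    linear_combination ih

lemma T_sub_T_add_four (a : ℤ) :
    Chebyshev.T ℝ a - Chebyshev.T ℝ (a + 4) = 4 * X * (1 - X ^ 2) * Chebyshev.U ℝ (a + 1) := by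
  have hU := Chebyshev.one_sub_X_sq_mul_U_eq_pol_in_T ℝ (a + 1)
  have h2 := Chebyshev.T_add_two ℝ a
  have h3 := Chebyshev.T_add_two ℝ (a + 1)
  have h4 := Chebyshev.T_add_two ℝ (a + 2)
  rw [show a + 1 + 1 = a + 2 by ring, show a + 1 + 2 = a + 3 by ring] at hU h3
  rw [show a + 2 + 1 = a + 3 by ring, show a + 2 + 2 = a + 4 by ring] at h4
  linear_combination -(4 * X) * hU - h4 + h2 + 2 * X * h3

lemma eval_T_add_two (a : ℤ) (x : ℝ) :
    (Chebyshev.T ℝ (a + 2)).eval x =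
      2 * (2 * x ^ 2 - 1) * (Chebyshev.T ℝ a).eval x - (Chebyshev.T ℝ (a - 2)).eval x := by
  have h := congrArg (eval x) (Chebyshev.T_mul_T ℝ a 2)
  simp only [Chebyshev.T_two, eval_mul, eval_add, eval_sub, eval_pow, eval_X, eval_one,
    eval_ofNat] at h
  linarith

lemma abs_eval_T_le_one (a : ℤ) : ∀ x ∈ Set.Icc (-1 : ℝ) 1, |(Chebyshev.T ℝ a).eval x| ≤ 1 :=
  fun _ hx => Chebyshev.abs_eval_T_real_le_one a (abs_le.2 hx)

lemma abs_eval_T_sub_T_le_two (a c : ℤ) {x : ℝ} (hx : x ∈ Set.Icc (-1 : ℝ) 1) :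
    |(Chebyshev.T ℝ a - Chebyshev.T ℝ c).eval x| ≤ 2 := by
  rw [eval_sub]
  exact (abs_sub _ _).trans
    (by linarith [abs_eval_T_le_one a x hx, abs_eval_T_le_one c x hx])

lemma summable_pow_mul_of_abs_le (hu : |u| < 1) {t : ℕ → ℝ} {B : ℝ} (ht : ∀ p, |t p| ≤ B) :
    Summable fun p => u ^ p * t p := by
  refine .of_norm_bounded ((summable_geometric_of_lt_one (abs_nonneg u) hu).mul_right B)
    fun p => ?_
  rw [norm_mul, norm_pow, Real.norm_eq_abs, Real.norm_eq_abs]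
  exact mul_le_mul_of_nonneg_left (ht p) (by positivity)

lemma hasSum_pow_mul_of_recurrence (hu : |u| < 1) {c B : ℝ} {t : ℕ → ℝ} (h0 : t 0 = 0)
    (hrec : ∀ p, t (p + 2) = 2 * c * t (p + 1) - t p) (ht : ∀ p, |t p| ≤ B)
    (hne : 1 - 2 * u * c + u ^ 2 ≠ 0) :
    HasSum (fun p => u ^ (p + 1) * t (p + 1)) (u * t 1 / (1 - 2 * u * c + u ^ 2)) := by
  have hsum := summable_pow_mul_of_abs_le hu ht
  have hsum1 := (summable_nat_add_iff 1).2 hsum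
  rw [hsum1.hasSum_iff]
  have hshift0 : ∑' p, u ^ p * t p = ∑' p, u ^ (p + 1) * t (p + 1) := by
    rw [hsum.tsum_eq_zero_add, h0, mul_zero, zero_add]
  have hshift1 : ∑' p, u ^ (p + 1) * t (p + 1) = u * t 1 + ∑' p, u ^ (p + 2) * t (p + 2) := by
    rw [hsum1.tsum_eq_zero_add, zero_add, pow_one]
  have hrec' : ∑' p, u ^ (p + 2) * t (p + 2) =
      2 * c * u * ∑' p, u ^ (p + 1) * t (p + 1) - u ^ 2 * ∑' p, u ^ p * t p := by
    rw [← tsum_mul_left, ← tsum_mul_left,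
      ← (hsum1.mul_left (2 * c * u)).tsum_sub (hsum.mul_left (u ^ 2))]
    exact tsum_congr fun p => by rw [hrec]; ring
  rw [eq_div_iff hne]
  linear_combination hshift1 + hrec' - u ^ 2 * hshift0

lemma one_sub_two_mul_add_sq_pos (hu : |u| < 1) {c : ℝ} (hc : |c| ≤ 1) :
    0 < 1 - 2 * u * c + u ^ 2 := by
  have huc : |u * c| ≤ |u| := by
    rw [abs_mul]
    exact mul_le_of_le_one_right (abs_nonneg u) hc
  nlinarith [le_abs_self (u * c), sq_abs u]

lemma abs_two_mul_sq_sub_one_le_one {x : ℝ} (hx : x ∈ Set.Icc (-1 : ℝ) 1) :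
    |2 * x ^ 2 - 1| ≤ 1 := by
  have := sq_nonneg x
  have := one_sub_sq_nonneg hx
  rw [abs_le]
  constructor <;> linarith

theorem hasSum_pow_mul_eval_T_sub_T (hu : |u| < 1) {x : ℝ} (hx : x ∈ Set.Icc (-1 : ℝ) 1) (N : ℕ) :
    HasSum (fun p : ℕ => u ^ (p + 1) *
        (Chebyshev.T ℝ (2 * (N - p)) - Chebyshev.T ℝ (2 * (N + p + 2))).eval x)
      (modulusSq u * x * (1 - x ^ 2) / (1 - modulusSq u * x ^ 2) *
        (Chebyshev.U ℝ (2 * N + 1)).eval x) := by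
  have hpos := one_sub_two_mul_add_sq_pos hu (abs_two_mul_sq_sub_one_le_one hx)
  have h := hasSum_pow_mul_of_recurrence hu (c := 2 * x ^ 2 - 1) (B := 2)
    (t := fun p => (Chebyshev.T ℝ (2 * (N + 1 - p)) - Chebyshev.T ℝ (2 * (N + 1 + p))).eval x)
    (by simp) (fun p => ?_) (fun p => abs_eval_T_sub_T_le_two _ _ hx) hpos.ne'
  · convert h using 1
    · ext p
      push_cast
      ring_nf
    · have hT := congrArg (eval x) (T_sub_T_add_four (2 * N))
      have := (one_add_pos_of_abs_lt_one hu).ne'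
      rw [Nat.cast_one, add_sub_cancel_right, show (2 * (N + 1 + 1) : ℤ) = 2 * N + 4 by ring, hT,
        one_sub_modulusSq_mul_sq hu, modulusSq]
      simp only [eval_mul, eval_sub, eval_pow, eval_X, eval_one, eval_ofNat]
      field_simp
  · have hminus := eval_T_add_two (2 * (N + 1 - (p + 1))) x
    have hplus := eval_T_add_two (2 * (N + 1 + (p + 1))) x
    rw [show (2 * (N + 1 - (p + 1)) + 2 : ℤ) = 2 * (N + 1 - p) by ring,
      show (2 * (N + 1 - (p + 1)) - 2 : ℤ) = 2 * (N + 1 - (p + 2)) by ring] at hminus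
    rw [show (2 * (N + 1 + (p + 1)) + 2 : ℤ) = 2 * (N + 1 + (p + 2)) by ring,
      show (2 * (N + 1 + (p + 1)) - 2 : ℤ) = 2 * (N + 1 + p) by ring] at hplus
    push_cast
    rw [eval_sub, eval_sub, eval_sub]
    linear_combination hminus - hplus

end ChebyshevExpansion

section LoopEquation

variable (μ : Measure ℝ) [IsSymmetricWeight μ]

lemma hasSum_polyIntegral_mul {c : ℕ → ℝ} (hc : Summable fun p => |c p|) {f : ℕ → ℝ[X]} {B : ℝ}
    (hf : ∀ p, ∀ x ∈ Set.Icc (-1 : ℝ) 1, |(f p).eval x| ≤ B) (q : ℝ[X]) {g : ℝ → ℝ}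
    (hg : ∀ x ∈ Set.Icc (-1 : ℝ) 1, HasSum (fun p => c p * (f p).eval x) (g x)) :
    HasSum (fun p => c p * polyIntegral μ (f p * q)) (∫ x, g x * q.eval x ∂μ) := by
  have hae : ∀ᵐ x ∂μ, x ∈ Set.Icc (-1 : ℝ) 1 := IsSymmetricWeight.ae_mem_Icc
  simp_rw [polyIntegral_apply, eval_mul, ← integral_const_mul, ← mul_assoc]
  refine hasSum_integral_of_dominated_convergence (fun p x => |c p| * (B * |q.eval x|))
    (fun p => Continuous.aestronglyMeasurable (by fun_prop)) (fun p => ?_)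
    (.of_forall fun x => hc.mul_right _) ?_ ?_
  · filter_upwards [hae] with x hx
    rw [Real.norm_eq_abs, abs_mul, abs_mul, mul_assoc]
    gcongr
    exact hf p x hx
  · simp_rw [tsum_mul_right]
    exact integrable_of_continuousOn (Continuous.continuousOn (by fun_prop))
  · filter_upwards [hae] with x hx
    exact (hg x hx).mul_right _

/-- The mean of the Chebyshev statistic of degree `2 (m + 1)`; statistics of odd degree have
mean zero. -/
noncomputable def evenMean (n m : ℕ) : ℝ := statMean μ n (Chebyshev.T ℝ (2 * (m + 1)))

/-- The sum of the covariances of the Chebyshev statistics of degrees adding up to `2 (N + 1)`. -/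
noncomputable def covSum (n N : ℕ) : ℝ :=
  ∑ l ∈ Finset.range (2 * N + 1),
    statCov μ n (Chebyshev.T ℝ ((2 * N + 1 : ℕ) - l)) (Chebyshev.T ℝ (l + 1))

variable {μ} in
lemma statMean_T_zero (n : ℕ) : statMean μ n (Chebyshev.T ℝ 0) = n := by
  rw [Chebyshev.T_zero, statMean_one]

variable {μ} in
lemma statMean_T_of_odd (n : ℕ) {a : ℤ} (ha : Odd a) : statMean μ n (Chebyshev.T ℝ a) = 0 := by
  refine statMean_eq_zero_of_odd μ n (Polynomial.funext fun x => ?_)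
  simp [eval_comp, Chebyshev.T_eval_neg, Int.negOnePow_odd a ha]

lemma polyIntegral_X_mul_U_mul_cdDiag (n N : ℕ) :
    polyIntegral μ (X * (Chebyshev.U ℝ (2 * N + 1) * cdDiag μ n)) =
      n + 2 * ∑ j ∈ Finset.range N, evenMean μ n j + evenMean μ n N := by
  rw [← mul_assoc, X_mul_U_two_mul_add_one, add_mul, add_mul, mul_assoc, Finset.sum_mul, map_add,
    map_add, polyIntegral_C_mul, map_sum]
  simp only [polyIntegral_mul_cdDiag, statMean_one, evenMean]

lemma sum_range_two_mul_add_one {f : ℕ → ℝ} (hf : ∀ j, f (2 * j) = 0) (N : ℕ) :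
    ∑ l ∈ Finset.range (2 * N + 1), f l = ∑ j ∈ Finset.range N, f (2 * j + 1) := by
  induction N with
  | zero => rw [mul_zero, zero_add, Finset.sum_range_one, Finset.sum_range_zero, ← hf 0, mul_zero]
  | succ N ih =>
    rw [mul_add_one, Finset.sum_range_succ, Finset.sum_range_succ, ih, Finset.sum_range_succ,
      ← mul_add_one, hf, add_zero]

lemma sum_statMean_mul_statMean (n N : ℕ) :
    ∑ l ∈ Finset.range (2 * N + 1), statMean μ n (Chebyshev.T ℝ ((2 * N + 1 : ℕ) - l)) *
        statMean μ n (Chebyshev.T ℝ (l + 1)) =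
      ∑ j ∈ Finset.range N, evenMean μ n (N - 1 - j) * evenMean μ n j := by
  rw [sum_range_two_mul_add_one (fun j => ?_)]
  · refine Finset.sum_congr rfl fun j hj => ?_
    have := Finset.mem_range.1 hj
    rw [evenMean, evenMean]
    rw [show ((2 * N + 1 : ℕ) - (2 * j + 1 : ℕ) : ℤ) = 2 * ((N - 1 - j : ℕ) + 1) by omega,
      show ((2 * j + 1 : ℕ) + 1 : ℤ) = 2 * (j + 1) by push_cast; ring]
  · rw [statMean_T_of_odd n (a := (2 * j : ℕ) + 1) ⟨j, by push_cast; ring⟩, mul_zero]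

lemma tsum_pow_mul_sub_of_even {u : ℝ} (hu : |u| < 1) {y : ℤ → ℝ} {B : ℝ} (hy : ∀ m, |y m| ≤ B)
    (heven : ∀ m, y (-m) = y m) (N : ℕ) :
    ∑' p : ℕ, u ^ (p + 1) * (y (N - p) - y (N + p + 2)) =
      ∑ j ∈ Finset.range N, u ^ (j + 1) * y (N - j) + u ^ (N + 1) * y 0 +
        ∑' q : ℕ, (u ^ (N + q + 2) * y (q + 1) - u ^ (q + 1) * y (N + q + 2)) := by
  have hsum (t : ℕ → ℤ) : Summable fun p : ℕ => u ^ (p + 1) * y (t p) := by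
    simp_rw [pow_succ', mul_assoc]
    exact (summable_pow_mul_of_abs_le hu fun p => hy (t p)).mul_left u
  have hreflect (q : ℕ) : u ^ (q + (N + 1) + 1) * y (N - (q + (N + 1) : ℕ)) =
      u ^ (N + q + 2) * y (q + 1) := by
    rw [← heven (q + 1)]
    congr 2 <;> · push_cast; ring
  have htail : Summable fun q : ℕ => u ^ (N + q + 2) * y (q + 1) := by
    simpa only [hreflect] using (summable_nat_add_iff (N + 1)).2 (hsum fun p => N - p)
  simp_rw [mul_sub]
  rw [(hsum _).tsum_sub (hsum _), ← (hsum fun p => N - p).sum_add_tsum_nat_add (N + 1),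
    Finset.sum_range_succ, htail.tsum_sub (hsum _), sub_self]
  simp_rw [hreflect]
  ring

/-- The part of the loop equation that is linear in the even means `z`. -/
noncomputable def loopLinear (α b u : ℝ) (z : ℕ → ℝ) (N : ℕ) : ℝ :=
  ∑ j ∈ Finset.range N, z (N - 1 - j) * (2 * α + b * u ^ (j + 1)) + α * z N +
    b * ∑' q : ℕ, (u ^ (N + q + 2) * z q - u ^ (q + 1) * z (N + q + 1))

lemma hasSum_statMean_T_sub_T {u : ℝ} (hu : |u| < 1) (n N : ℕ) :
    HasSum (fun p : ℕ => u ^ (p + 1) * (statMean μ n (Chebyshev.T ℝ (2 * (N - p))) -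
        statMean μ n (Chebyshev.T ℝ (2 * (N + p + 2)))))
      (∫ x, modulusSq u * x * (1 - x ^ 2) / (1 - modulusSq u * x ^ 2) *
        (Chebyshev.U ℝ (2 * N + 1) * cdDiag μ n).eval x ∂μ) := by
  have h := hasSum_polyIntegral_mul μ (c := fun p => u ^ (p + 1))
    (f := fun p => Chebyshev.T ℝ (2 * (N - p)) - Chebyshev.T ℝ (2 * (N + p + 2))) (B := 2)
    ?_ (fun p x hx => abs_eval_T_sub_T_le_two _ _ hx) (cdDiag μ n)
    fun x hx => hasSum_pow_mul_eval_T_sub_T hu hx N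
  · simpa only [eval_mul, sub_mul, map_sub, polyIntegral_mul_cdDiag, mul_assoc] using h
  · simp_rw [abs_pow]
    exact (summable_nat_add_iff 1).2 (summable_geometric_of_lt_one (abs_nonneg u) hu)

lemma abs_evenMean_le (n m : ℕ) : |evenMean μ n m| ≤ n :=
  abs_statMean_le μ (abs_eval_T_le_one _) n

lemma polyIntegral_derivative_X_sq_sub_one_mul_U_two_mul_add_one (n N : ℕ) :
    polyIntegral μ ((X ^ 2 - 1) * (Chebyshev.U ℝ (2 * N + 1) * cdDiag μ n)).derivative =
      2 * (n * evenMean μ n N +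
        (∑ j ∈ Finset.range N, evenMean μ n (N - 1 - j) * evenMean μ n j + covSum μ n N)) := by
  have h := polyIntegral_derivative_X_sq_sub_one_mul_U μ n (2 * N + 1)
  rw [Finset.sum_add_distrib, sum_statMean_mul_statMean, ← covSum, mul_assoc] at h
  push_cast at h
  rwa [show (2 * N + 1 + 1 : ℤ) = 2 * (N + 1) by ring, ← evenMean] at h

lemma tsum_statMean_T_sub_T {u : ℝ} (hu : |u| < 1) (n N : ℕ) :
    ∑' p : ℕ, u ^ (p + 1) * (statMean μ n (Chebyshev.T ℝ (2 * (N - p))) -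
        statMean μ n (Chebyshev.T ℝ (2 * (N + p + 2)))) =
      ∑ j ∈ Finset.range N, evenMean μ n (N - 1 - j) * u ^ (j + 1) + u ^ (N + 1) * n +
        ∑' q : ℕ, (u ^ (N + q + 2) * evenMean μ n q -
          u ^ (q + 1) * evenMean μ n (N + q + 1)) := by
  have h := tsum_pow_mul_sub_of_even hu (y := fun m => statMean μ n (Chebyshev.T ℝ (2 * m)))
    (fun m => abs_statMean_le μ (abs_eval_T_le_one _) n)
    (fun m => by rw [mul_neg, Chebyshev.T_neg]) N
  have hhead (j : ℕ) (hj : j ∈ Finset.range N) :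
      u ^ (j + 1) * statMean μ n (Chebyshev.T ℝ (2 * (N - j))) =
        evenMean μ n (N - 1 - j) * u ^ (j + 1) := by
    have := Finset.mem_range.1 hj
    rw [evenMean, mul_comm, show (2 * (N - j) : ℤ) = 2 * ((N - 1 - j : ℕ) + 1) by omega]
  have htail (q : ℕ) : evenMean μ n (N + q + 1) =
      statMean μ n (Chebyshev.T ℝ (2 * (N + q + 2))) := by
    rw [evenMean, show (2 * ((N + q + 1 : ℕ) + 1) : ℤ) = 2 * (N + q + 2) by push_cast; ring]
  rw [h, Finset.sum_congr rfl hhead, mul_zero, statMean_T_zero]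
  simp_rw [htail, evenMean]

theorem loop_equation {α u : ℝ} (hα : -1 < α) (hu : |u| < 1) (b : ℝ) (n N : ℕ) :
    let μ := jacobiMeasure α (modulusSq u) b
    n * (evenMean μ n N + α + b * u ^ (N + 1)) =
      -(∑ j ∈ Finset.range N, evenMean μ n (N - 1 - j) * evenMean μ n j +
        loopLinear α b u (evenMean μ n) N + covSum μ n N) := by
  intro μ
  have hk := modulusSq_lt_one hu
  have : IsSymmetricWeight μ := isSymmetricWeight_jacobiMeasure hα hk b
  have hibp := polyIntegral_derivative_jacobiMeasure hα hk b
    (Chebyshev.U ℝ (2 * N + 1) * cdDiag μ n)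
  rw [polyIntegral_derivative_X_sq_sub_one_mul_U_two_mul_add_one, polyIntegral_X_mul_U_mul_cdDiag,
    ← (hasSum_statMean_T_sub_T μ hu n N).tsum_eq, tsum_statMean_T_sub_T μ hu] at hibp
  have hreflect : ∑ j ∈ Finset.range N, evenMean μ n (N - 1 - j) =
      ∑ j ∈ Finset.range N, evenMean μ n j := Finset.sum_range_reflect _ _
  simp only [loopLinear, mul_add, Finset.sum_add_distrib, ← Finset.sum_mul, hreflect,
    mul_left_comm _ b, ← Finset.mul_sum]
  linarith

end LoopEquation

/-! ### Asymptotics of solutions of the loop equations -/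

/-- Bounded solutions `z` of the loop equations at level `n`, the covariances entering through a
sequence `c` of cubic growth. -/
structure IsLoopSolution (α b u : ℝ) (n : ℕ) (c z : ℕ → ℝ) : Prop where
  abs_le : ∀ m, |z m| ≤ n
  abs_cov_le : ∀ N, |c N| ≤ 8 * ((N : ℝ) + 1) ^ 3
  loop_eq : ∀ N, n * (z N + α + b * u ^ (N + 1)) =
    -(∑ j ∈ Finset.range N, z (N - 1 - j) * z j + loopLinear α b u z N + c N)

lemma abs_covSum_le (μ : Measure ℝ) [IsSymmetricWeight μ] (n N : ℕ) :
    |covSum μ n N| ≤ 8 * ((N : ℝ) + 1) ^ 3 := by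
  have hterm (l : ℕ) (hl : l ∈ Finset.range (2 * N + 1)) :
      |statCov μ n (Chebyshev.T ℝ ((2 * N + 1 : ℕ) - l)) (Chebyshev.T ℝ (l + 1))| ≤
        (2 * ((N : ℝ) + 1)) ^ 2 := by
    refine (abs_statCov_le μ (abs_eval_T_le_one _) (abs_eval_T_le_one _) n).trans ?_
    rw [Chebyshev.natDegree_T]
    gcongr
    have := Finset.mem_range.1 hl
    exact_mod_cast (by omega : ((2 * N + 1 : ℕ) - l : ℤ).natAbs ≤ 2 * (N + 1))
  calc |covSum μ n N| ≤ ∑ _l ∈ Finset.range (2 * N + 1), (2 * ((N : ℝ) + 1)) ^ 2 :=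
        (Finset.abs_sum_le_sum_abs _ _).trans (Finset.sum_le_sum hterm)
    _ = (2 * N + 1) * (2 * ((N : ℝ) + 1)) ^ 2 := by simp
    _ ≤ (2 * (N + 1)) * (2 * ((N : ℝ) + 1)) ^ 2 := by gcongr; linarith
    _ = 8 * ((N : ℝ) + 1) ^ 3 := by ring

lemma isLoopSolution_evenMean {α u : ℝ} (hα : -1 < α) (hu : |u| < 1) (b : ℝ) (n : ℕ) :
    let μ := jacobiMeasure α (modulusSq u) b
    IsLoopSolution α b u n (covSum μ n) (evenMean μ n) :=
  have := isSymmetricWeight_jacobiMeasure hα (modulusSq_lt_one hu) b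
  { abs_le := abs_evenMean_le _ n
    abs_cov_le := abs_covSum_le _ n
    loop_eq := loop_equation hα hu b n }

lemma hasSum_geometric_succ {q : ℝ} (hq : |q| < 1) :
    HasSum (fun p : ℕ => q ^ (p + 1)) (q / (1 - q)) := by
  simp_rw [pow_succ', div_eq_mul_inv]
  exact (hasSum_geometric_of_abs_lt_one hq).mul_left q

section LoopLinear

variable {u r g : ℝ} {z : ℕ → ℝ}

lemma abs_loopTerm_le (hu : |u| < 1) (hr : 1 ≤ r) (hz : ∀ m, |z m| ≤ g * r ^ (m + 1))
    (N q : ℕ) :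
    |u ^ (N + q + 2) * z q - u ^ (q + 1) * z (N + q + 1)| ≤
      2 * (g * r ^ (N + 1)) * (|u| * r) ^ (q + 1) := by
  have hg : 0 ≤ g := nonneg_of_mul_nonneg_left ((abs_nonneg _).trans (hz 0)) (by positivity)
  have h1 : |u ^ (N + q + 2) * z q| ≤ |u| ^ (q + 1) * (g * (r ^ (N + 1) * r ^ (q + 1))) := by
    rw [abs_mul, abs_pow]
    refine mul_le_mul (pow_le_pow_of_le_one (abs_nonneg u) hu.le (by omega)) ((hz q).trans ?_)
      (abs_nonneg _) (by positivity)
    gcongr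
    exact le_mul_of_one_le_left (by positivity) (one_le_pow₀ hr)
  have h2 : |u ^ (q + 1) * z (N + q + 1)| ≤ |u| ^ (q + 1) * (g * (r ^ (N + 1) * r ^ (q + 1))) := by
    rw [abs_mul, abs_pow, ← pow_add, show N + 1 + (q + 1) = N + q + 1 + 1 by ring]
    gcongr
    exact hz _
  calc _ ≤ _ := (abs_sub _ _).trans (add_le_add h1 h2)
    _ = _ := by ring

lemma abs_loopLinear_le (α b : ℝ) (hu : |u| < 1) (hr : 1 ≤ r) (hur : |u| * r < 1)
    (hz : ∀ m, |z m| ≤ g * r ^ (m + 1)) (N : ℕ) :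
    |loopLinear α b u z N| ≤
      (2 * |α| + |b| * (1 + 2 * (|u| * r / (1 - |u| * r)))) * ((N + 1) * (g * r ^ (N + 1))) := by
  have hg : 0 ≤ g := nonneg_of_mul_nonneg_left ((abs_nonneg _).trans (hz 0)) (by positivity)
  set G := g * r ^ (N + 1) with hG
  set S := |u| * r / (1 - |u| * r) with hS_def
  have : 0 ≤ G := by positivity
  have : 0 ≤ S := div_nonneg (by positivity) (by linarith)
  have hsum : |∑ j ∈ Finset.range N, z (N - 1 - j) * (2 * α + b * u ^ (j + 1))| ≤
      N * (G * (2 * |α| + |b|)) := by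
    calc _ ≤ ∑ _j ∈ Finset.range N, G * (2 * |α| + |b|) := by
          refine (Finset.abs_sum_le_sum_abs _ _).trans (Finset.sum_le_sum fun j _ => ?_)
          rw [abs_mul]
          gcongr
          · refine (hz _).trans ?_
            rw [hG]
            gcongr
            omega
          · refine (abs_add_le _ _).trans ?_
            rw [abs_mul, abs_mul, abs_two, abs_pow]
            gcongr
            exact mul_le_of_le_one_right (abs_nonneg b) (pow_le_one₀ (abs_nonneg u) hu.le)
      _ = _ := by simp
  have hq : |(|u| * r)| < 1 := by rwa [abs_of_nonneg (by positivity)]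
  have htsum : |∑' q : ℕ, (u ^ (N + q + 2) * z q - u ^ (q + 1) * z (N + q + 1))| ≤ 2 * G * S := by
    rw [← Real.norm_eq_abs, hS_def]
    exact tsum_of_norm_bounded ((hasSum_geometric_succ hq).mul_left _)
      fun q => abs_loopTerm_le hu hr hz N q
  calc |loopLinear α b u z N| ≤ N * (G * (2 * |α| + |b|)) + |α| * G + |b| * (2 * G * S) := by
        refine (abs_add_three _ _ _).trans ?_
        rw [abs_mul α, abs_mul b]
        gcongr
        exact hz N
    _ ≤ (2 * |α| + |b| * (1 + 2 * S)) * ((N + 1) * G) := by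
        have : 0 ≤ (|α| + |b|) * G := by positivity
        have : 0 ≤ 2 * (|b| * S * G) * N := by positivity
        linarith

end LoopLinear

lemma add_one_le_cube (N : ℕ) : (N : ℝ) + 1 ≤ ((N : ℝ) + 1) ^ 3 :=
  le_self_pow₀ (by linarith [N.cast_nonneg (α := ℝ)]) three_ne_zero

lemma exists_cube_le_mul_pow {ρ : ℝ} (hρ : 1 < ρ) :
    ∃ M : ℝ, 0 ≤ M ∧ ∀ N : ℕ, ((N : ℝ) + 1) ^ 3 ≤ M * ρ ^ (N + 1) := by
  obtain ⟨M, hM⟩ := (tendsto_pow_const_div_const_pow_of_one_lt 3 hρ).bddAbove_range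
  have hle (m : ℕ) : (m : ℝ) ^ 3 / ρ ^ m ≤ M := hM ⟨m, rfl⟩
  refine ⟨M, (by positivity : (0 : ℝ) ≤ (0 : ℕ) ^ 3 / ρ ^ 0).trans (hle 0), fun N => ?_⟩
  simpa only [Nat.cast_succ] using (div_le_iff₀ (by positivity)).1 (hle (N + 1))

section Bootstrap

variable {K ρ t : ℝ} {x : ℕ → ℝ}

lemma sum_mul_le_of_le_mul_pow {A : ℝ} {N : ℕ} (hx0 : ∀ m, 0 ≤ x m)
    (hx : ∀ j < N, x j ≤ A * ρ ^ (j + 1)) :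
    ∑ j ∈ Finset.range N, x (N - 1 - j) * x j ≤ N * (A ^ 2 * ρ ^ (N + 1)) := by
  calc ∑ j ∈ Finset.range N, x (N - 1 - j) * x j
      ≤ ∑ _j ∈ Finset.range N, A ^ 2 * ρ ^ (N + 1) := Finset.sum_le_sum fun j hj => by
        have hj' := Finset.mem_range.1 hj
        have hj1 := hx (N - 1 - j) (by omega)
        calc x (N - 1 - j) * x j ≤ A * ρ ^ (N - 1 - j + 1) * (A * ρ ^ (j + 1)) :=
              mul_le_mul hj1 (hx j hj') (hx0 j) ((hx0 _).trans hj1)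
          _ = A ^ 2 * ρ ^ (N + 1) := by
              rw [show N + 1 = N - 1 - j + 1 + (j + 1) by omega, pow_add]
              ring
    _ = N * (A ^ 2 * ρ ^ (N + 1)) := by simp

lemma le_mul_pow_of_quadratic_recursion {A : ℝ} (hA : 0 < A) (hKA : 2 * K ≤ A) (hρ : 0 < ρ)
    (ht : 0 < t) (hx0 : ∀ m, 0 ≤ x m)
    (hrec : ∀ N, t * x N ≤
      t * (K * ρ ^ (N + 1)) + ∑ j ∈ Finset.range N, x (N - 1 - j) * x j)
    (N : ℕ) (hN : 2 * A * N ≤ t) : x N ≤ A * ρ ^ (N + 1) := by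
  induction N using Nat.strong_induction_on with
  | _ N ih =>
    have ih' (j : ℕ) (hj : j < N) : x j ≤ A * ρ ^ (j + 1) := ih j hj (le_trans (by gcongr) hN)
    have hconv := sum_mul_le_of_le_mul_pow hx0 ih'
    refine le_of_mul_le_mul_left ?_ ht
    calc t * x N ≤ t * (A / 2 * ρ ^ (N + 1)) + N * (A ^ 2 * ρ ^ (N + 1)) := by
          refine (hrec N).trans (add_le_add ?_ hconv)
          gcongr
          linarith
      _ = A * ρ ^ (N + 1) / 2 * (t + 2 * A * N) := by ring
      _ ≤ A * ρ ^ (N + 1) / 2 * (t + t) := by gcongr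
      _ = t * (A * ρ ^ (N + 1)) := by ring

-- The recursion alone controls `x N` while `N` is small compared to `t`; beyond that the a priori
-- bound `x N ≤ t` takes over.
lemma exists_forall_le_mul_pow (K : ℝ) (hρ : 1 < ρ) :
    ∃ A : ℝ, 0 < A ∧ ∀ (t : ℝ) (x : ℕ → ℝ), 0 < t → (∀ m, 0 ≤ x m) → (∀ m, x m ≤ t) →
      (∀ N, t * x N ≤ t * (K * ρ ^ (N + 1)) + ∑ j ∈ Finset.range N, x (N - 1 - j) * x j) →
      ∀ N, x N ≤ A * ρ ^ (N + 1) := by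
  obtain ⟨M, hM0, hM⟩ := exists_cube_le_mul_pow hρ
  set A : ℝ := 2 * |K| + 1
  have hA : 0 < A := by positivity
  refine ⟨A * (2 * M + 1), by positivity, fun t x ht hx0 hxt hrec N => ?_⟩
  by_cases hN : 2 * A * N ≤ t
  · refine (le_mul_pow_of_quadratic_recursion hA (by linarith [le_abs_self K]) (by linarith) ht
      hx0 hrec N hN).trans ?_
    gcongr
    exact le_mul_of_one_le_right hA.le (by linarith)
  · calc x N ≤ 2 * A * N := (hxt N).trans (not_le.1 hN).le
      _ ≤ 2 * A * ((N : ℝ) + 1) ^ 3 := by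
          gcongr
          exact (lt_add_one _).le.trans (add_one_le_cube N)
      _ ≤ 2 * A * (M * ρ ^ (N + 1)) := by gcongr; exact hM N
      _ ≤ A * (2 * M + 1) * ρ ^ (N + 1) := by
          have : 0 ≤ A * ρ ^ (N + 1) := by positivity
          linarith

end Bootstrap

section UniformBounds

variable {u ρ : ℝ}

lemma IsLoopSolution.mul_abs_le {α b B : ℝ} {n : ℕ} {c z : ℕ → ℝ} (h : IsLoopSolution α b u n c z)
    (hn : 0 < n) (hu : |u| < 1) (hb : |b| ≤ B) (N : ℕ) :
    n * |z N| ≤ n * ((3 * |α| + B * (2 + 2 * (|u| / (1 - |u|))) + 8) * ((N : ℝ) + 1) ^ 3) +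
      ∑ j ∈ Finset.range N, |z (N - 1 - j)| * |z j| := by
  have hn1 : (1 : ℝ) ≤ n := by exact_mod_cast hn
  have hcube := add_one_le_cube N
  have hcube1 : 1 ≤ ((N : ℝ) + 1) ^ 3 := one_le_pow₀ (by linarith [N.cast_nonneg (α := ℝ)])
  have : 0 ≤ |u| / (1 - |u|) := div_nonneg (abs_nonneg u) (by linarith)
  have hlinear := abs_loopLinear_le α b hu le_rfl (by rwa [mul_one])
    (fun m => (h.abs_le m).trans_eq (by rw [one_pow, mul_one])) N
  rw [one_pow, mul_one, mul_one] at hlinear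
  have hconv : |∑ j ∈ Finset.range N, z (N - 1 - j) * z j| ≤
      ∑ j ∈ Finset.range N, |z (N - 1 - j)| * |z j| :=
    (Finset.abs_sum_le_sum_abs _ _).trans_eq (by simp_rw [abs_mul])
  have hleading : |α + b * u ^ (N + 1)| ≤ |α| + |b| := by
    refine (abs_add_le _ _).trans ?_
    rw [abs_mul, abs_pow]
    gcongr
    exact mul_le_of_le_one_right (abs_nonneg b) (pow_le_one₀ (abs_nonneg u) hu.le)
  have hsolve : n * z N = -(∑ j ∈ Finset.range N, z (N - 1 - j) * z j + loopLinear α b u z N +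
      c N + n * (α + b * u ^ (N + 1))) := by linear_combination h.loop_eq N
  calc n * |z N| = |n * z N| := by rw [abs_mul, Nat.abs_cast]
    _ ≤ |∑ j ∈ Finset.range N, z (N - 1 - j) * z j| + |loopLinear α b u z N| + |c N| +
        n * |α + b * u ^ (N + 1)| := by
      rw [hsolve, abs_neg]
      exact (abs_add_le _ _).trans
        (add_le_add (abs_add_three _ _ _) (by rw [abs_mul, Nat.abs_cast]))
    _ ≤ ∑ j ∈ Finset.range N, |z (N - 1 - j)| * |z j| +
        (2 * |α| + B * (1 + 2 * (|u| / (1 - |u|)))) * (((N : ℝ) + 1) ^ 3 * n) +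
          n * (8 * ((N : ℝ) + 1) ^ 3) + n * ((|α| + B) * ((N : ℝ) + 1) ^ 3) := by
      have hB : 0 ≤ B := (abs_nonneg b).trans hb
      gcongr
      · exact hlinear.trans (by gcongr)
      · exact (h.abs_cov_le N).trans (le_mul_of_one_le_left (by positivity) hn1)
      · exact (hleading.trans (by gcongr)).trans (le_mul_of_one_le_right (by positivity) hcube1)
    _ = _ := by ring

lemma exists_abs_le_mul_pow (α B : ℝ) (hu : |u| < 1) (hρ : 1 < ρ) :
    ∃ A : ℝ, 0 < A ∧ ∀ (b : ℝ) (n : ℕ) (c z : ℕ → ℝ), |b| ≤ B → 0 < n →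
      IsLoopSolution α b u n c z → ∀ m, |z m| ≤ A * ρ ^ (m + 1) := by
  set K := 3 * |α| + B * (2 + 2 * (|u| / (1 - |u|))) + 8
  obtain ⟨M, -, hM⟩ := exists_cube_le_mul_pow hρ
  obtain ⟨A, hA, hbound⟩ := exists_forall_le_mul_pow (|K| * M) hρ
  refine ⟨A, hA, fun b n c z hb hn h => hbound n (fun m => |z m|) (by exact_mod_cast hn)
    (fun _ => abs_nonneg _) h.abs_le fun N => (h.mul_abs_le hn hu hb N).trans ?_⟩
  rw [mul_assoc |K|]
  gcongr
  · exact le_abs_self K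
  · exact hM N

lemma exists_abs_excess_le (α B : ℝ) (hu : |u| < 1) (hρ : 1 < ρ) (huρ : |u| * ρ < 1) :
    ∃ A : ℝ, 0 < A ∧ ∀ (b : ℝ) (n : ℕ) (c z : ℕ → ℝ), |b| ≤ B → 0 < n →
      IsLoopSolution α b u n c z →
        ∀ N, |n * (z N + α + b * u ^ (N + 1))| ≤ A * (((N : ℝ) + 1) ^ 3 * ρ ^ (N + 1)) := by
  obtain ⟨A, hA, hbound⟩ := exists_abs_le_mul_pow α B hu hρ
  have : 0 ≤ |u| * ρ / (1 - |u| * ρ) := div_nonneg (by positivity) (by linarith)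
  refine ⟨A ^ 2 + (2 * |α| + |B| * (1 + 2 * (|u| * ρ / (1 - |u| * ρ)))) * A + 8, by positivity,
    fun b n c z hb hn h N => ?_⟩
  have hz := hbound b n c z hb hn h
  have hcube := add_one_le_cube N
  have hpow : 1 ≤ ρ ^ (N + 1) := one_le_pow₀ hρ.le
  have hconv : |∑ j ∈ Finset.range N, z (N - 1 - j) * z j| ≤ N * (A ^ 2 * ρ ^ (N + 1)) := by
    refine (Finset.abs_sum_le_sum_abs _ _).trans ?_
    simp_rw [abs_mul]
    exact sum_mul_le_of_le_mul_pow (x := fun j => |z j|) (fun _ => abs_nonneg _) fun j _ => hz j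
  rw [h.loop_eq, abs_neg]
  calc _ ≤ N * (A ^ 2 * ρ ^ (N + 1)) + (2 * |α| + |b| * (1 + 2 * (|u| * ρ / (1 - |u| * ρ)))) *
        ((N + 1) * (A * ρ ^ (N + 1))) + 8 * ((N : ℝ) + 1) ^ 3 :=
        (abs_add_three _ _ _).trans (add_le_add (add_le_add hconv
          (abs_loopLinear_le α b hu hρ.le huρ hz N)) (h.abs_cov_le N))
    _ ≤ ((N : ℝ) + 1) ^ 3 * (A ^ 2 * ρ ^ (N + 1)) +
        (2 * |α| + |B| * (1 + 2 * (|u| * ρ / (1 - |u| * ρ)))) *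
          (((N : ℝ) + 1) ^ 3 * (A * ρ ^ (N + 1))) + 8 * (((N : ℝ) + 1) ^ 3 * ρ ^ (N + 1)) := by
      have hbB : |b| ≤ |B| := hb.trans (le_abs_self B)
      gcongr
      · linarith
      · exact le_mul_of_one_le_right (by positivity) hpow
    _ = _ := by ring

end UniformBounds

section Limits

lemma exists_one_lt_mul_lt_one {q : ℝ} (hq0 : 0 ≤ q) (hq : q < 1) : ∃ ρ, 1 < ρ ∧ q * ρ < 1 := by
  refine ⟨2 / (1 + q), ?_, ?_⟩
  · rw [lt_div_iff₀ (by linarith)]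
    linarith
  · rw [← mul_div_assoc, div_lt_one (by linarith)]
    linarith

variable {α b u : ℝ}

lemma tendsto_loopLinear {ι : Type*} {l : Filter ι} {z : ι → ℕ → ℝ} {y : ℕ → ℝ} {g ρ : ℝ}
    (hu : |u| < 1) (hρ : 1 ≤ ρ) (huρ : |u| * ρ < 1)
    (hz : ∀ᶠ n in l, ∀ m, |z n m| ≤ g * ρ ^ (m + 1)) (hy : ∀ m, Tendsto (z · m) l (𝓝 (y m)))
    (N : ℕ) : Tendsto (fun n => loopLinear α b u (z n) N) l (𝓝 (loopLinear α b u y N)) := by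
  have hq : |(|u| * ρ)| < 1 := by rwa [abs_of_nonneg (by positivity)]
  have htsum := tendsto_tsum_of_dominated_convergence
    ((hasSum_geometric_succ hq).mul_left (2 * (g * ρ ^ (N + 1)))).summable
    (fun q => ((hy q).const_mul (u ^ (N + q + 2))).sub
      ((hy (N + q + 1)).const_mul (u ^ (q + 1))))
    (hz.mono fun _ hn q => abs_loopTerm_le hu hρ hn N q)
  exact ((tendsto_finsetSum _ fun j _ => (hy (N - 1 - j)).mul_const _).add
    ((hy N).const_mul α)).add (htsum.const_mul b)

lemma sum_mul_add_loopLinear_leading (hu : |u| < 1) (N : ℕ) :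
    ∑ j ∈ Finset.range N, (-α - b * u ^ (N - 1 - j + 1)) * (-α - b * u ^ (j + 1)) +
      loopLinear α b u (fun m => -α - b * u ^ (m + 1)) N = -((N + 1) * α ^ 2) := by
  have hgeom := (hasSum_geometric_succ hu).summable
  have htsum : ∑' q : ℕ, (u ^ (N + q + 2) * (-α - b * u ^ (q + 1)) -
      u ^ (q + 1) * (-α - b * u ^ (N + q + 1 + 1))) =
        α * ∑ q ∈ Finset.range (N + 1), u ^ (q + 1) := by
    have hterm (q : ℕ) : u ^ (N + q + 2) * (-α - b * u ^ (q + 1)) -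
        u ^ (q + 1) * (-α - b * u ^ (N + q + 1 + 1)) =
          α * (u ^ (q + 1) - u ^ (q + (N + 1) + 1)) := by ring
    simp_rw [hterm]
    rw [tsum_mul_left, hgeom.tsum_sub ((summable_nat_add_iff (N + 1)).2 hgeom),
      ← hgeom.sum_add_tsum_nat_add (N + 1), add_sub_cancel_right]
  have hsum : ∑ j ∈ Finset.range N, (-α - b * u ^ (N - 1 - j + 1)) * (-α - b * u ^ (j + 1)) +
      ∑ j ∈ Finset.range N, (-α - b * u ^ (N - 1 - j + 1)) * (2 * α + b * u ^ (j + 1)) =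
        α * ∑ j ∈ Finset.range N, (-α - b * u ^ (j + 1)) := by
    rw [← Finset.sum_range_reflect fun j => -α - b * u ^ (j + 1), ← Finset.sum_add_distrib,
      Finset.mul_sum]
    exact Finset.sum_congr rfl fun j _ => by ring
  rw [loopLinear, htsum, ← add_assoc, ← add_assoc, hsum, ← mul_add, ← Finset.sum_range_succ,
    mul_left_comm, ← mul_add, Finset.mul_sum, ← Finset.sum_add_distrib]
  simp only [sub_add_cancel, Finset.sum_const, Finset.card_range, nsmul_eq_mul]
  push_cast
  ring

variable {c z : ℕ → ℕ → ℝ}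

lemma tendsto_loopSolution (hu : |u| < 1) (h : ∀ n, IsLoopSolution α b u n (c n) (z n)) (N : ℕ) :
    Tendsto (z · N) atTop (𝓝 (-α - b * u ^ (N + 1))) := by
  obtain ⟨ρ, hρ, huρ⟩ := exists_one_lt_mul_lt_one (abs_nonneg u) hu
  obtain ⟨A, -, hA⟩ := exists_abs_excess_le α |b| hu hρ huρ
  have hbdd := (eventually_gt_atTop 0).mono fun n hn => abs_le.1 (hA b n _ _ le_rfl hn (h n) N)
  have hdiv := tendsto_bdd_div_atTop_nhds_zero (hbdd.mono fun _ hn => hn.1)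
    (hbdd.mono fun _ hn => hn.2) (tendsto_natCast_atTop_atTop (R := ℝ))
  refine Tendsto.congr' ?_ (zero_add (-α - b * u ^ (N + 1)) ▸ hdiv.add_const _)
  filter_upwards [eventually_ne_atTop 0] with n hn
  rw [mul_div_cancel_left₀ _ (Nat.cast_ne_zero.2 hn)]
  ring

theorem tendsto_excess (hu : |u| < 1) (h : ∀ n, IsLoopSolution α b u n (c n) (z n)) {N : ℕ}
    (hc : Tendsto (c · N) atTop (𝓝 (((N : ℝ) + 1) / 4))) :
    Tendsto (fun n : ℕ => n * (z n N + α + b * u ^ (N + 1))) atTop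
      (𝓝 ((4 * α ^ 2 - 1) / 4 * (N + 1))) := by
  obtain ⟨ρ, hρ, huρ⟩ := exists_one_lt_mul_lt_one (abs_nonneg u) hu
  obtain ⟨A, -, hA⟩ := exists_abs_le_mul_pow α |b| hu hρ
  have hbound := (eventually_gt_atTop 0).mono fun n hn => hA b n _ _ le_rfl hn (h n)
  have hz := tendsto_loopSolution hu h
  have hlim := (((tendsto_finsetSum (Finset.range N) fun j _ => (hz (N - 1 - j)).mul (hz j)).add
    (tendsto_loopLinear (α := α) (b := b) hu hρ.le huρ hbound hz N)).add hc).neg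
  rw [sum_mul_add_loopLinear_leading hu N] at hlim
  simp_rw [fun n => (h n).loop_eq N]
  convert hlim using 2
  ring

end Limits

lemma tendsto_covSum {μ : Measure ℝ} [IsSymmetricWeight μ]
    (hJ : Tendsto (jacobiCoeff μ) atTop (𝓝 (1 / 2))) (N : ℕ) :
    Tendsto (covSum μ · N) atTop (𝓝 (((N : ℝ) + 1) / 4)) := by
  have hterm (l : ℕ) (hl : l ∈ Finset.range (2 * N + 1)) :
      Tendsto (fun n => statCov μ n (Chebyshev.T ℝ ((2 * N + 1 : ℕ) - l))
        (Chebyshev.T ℝ (l + 1))) atTop (𝓝 (if l = N then ((N : ℝ) + 1) / 4 else 0)) := by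
    have hl' := Finset.mem_range.1 hl
    have h := tendsto_statCov_T hJ (2 * N + 1 - l) l.succ_pos
    rw [Nat.cast_sub hl'.le, Nat.cast_succ l] at h
    convert h using 2
    refine if_ctx_congr (by omega) (fun hlN => ?_) fun _ => rfl
    rw [show 2 * N + 1 - l = N + 1 by omega, Nat.cast_succ]
  have hsum := tendsto_finsetSum _ hterm
  rwa [Finset.sum_ite_eq', if_pos (Finset.mem_range.2 (by omega))] at hsum

/-! ### The logarithmic statistic -/

section LogStatistic

variable {u : ℝ}

lemma abs_pow_succ_div_le (u : ℝ) (p : ℕ) : |u ^ (p + 1) / ((p : ℝ) + 1)| ≤ |u| ^ (p + 1) := by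
  rw [abs_div, abs_pow]
  exact div_le_self (by positivity) ((le_add_of_nonneg_left p.cast_nonneg).trans (le_abs_self _))

lemma hasSum_pow_div_mul_cos (hu : |u| < 1) (θ : ℝ) :
    HasSum (fun p : ℕ => u ^ (p + 1) / (p + 1) * Real.cos ((p + 1) * θ))
      (-Real.log (1 - 2 * u * Real.cos θ + u ^ 2) / 2) := by
  set z : ℂ := u * Complex.exp (θ * Complex.I)
  have hz : ‖z‖ < 1 := by
    rwa [norm_mul, Complex.norm_exp_ofReal_mul_I, mul_one, Complex.norm_real]
  have hnorm : ‖1 - z‖ ^ 2 = 1 - 2 * u * Real.cos θ + u ^ 2 := by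
    rw [Complex.sq_norm, Complex.normSq_apply, Complex.sub_re, Complex.sub_im,
      Complex.re_ofReal_mul, Complex.im_ofReal_mul, Complex.exp_ofReal_mul_I_re,
      Complex.exp_ofReal_mul_I_im, Complex.one_re, Complex.one_im]
    linear_combination u ^ 2 * Real.sin_sq_add_cos_sq θ
  have hterm (p : ℕ) : (z ^ (p + 1) / ((p + 1 : ℕ) : ℂ)).re =
      u ^ (p + 1) / (p + 1) * Real.cos ((p + 1) * θ) := by
    rw [mul_pow, ← Complex.exp_nat_mul, ← mul_assoc, mul_div_right_comm,
      ← Complex.ofReal_pow, ← Complex.ofReal_natCast, ← Complex.ofReal_div, ← Complex.ofReal_mul,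
      Complex.re_ofReal_mul, Complex.exp_ofReal_mul_I_re, Nat.cast_succ]
  have h := (hasSum_nat_add_iff' 1).2 (Complex.hasSum_re (Complex.hasSum_taylorSeries_neg_log hz))
  simp_rw [hterm] at h
  rw [← hnorm, Real.log_pow, Nat.cast_ofNat, neg_div, mul_div_cancel_left₀ _ two_ne_zero]
  simpa [Complex.log_re] using h

lemma hasSum_log_one_sub_modulusSq_mul_sq (hu : |u| < 1) {x : ℝ} (hx : x ∈ Set.Icc (-1 : ℝ) 1) :
    HasSum (fun p : ℕ => u ^ (p + 1) / (p + 1) * (Chebyshev.T ℝ (2 * (p + 1))).eval x)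
      (-(Real.log (1 - modulusSq u * x ^ 2) + 2 * Real.log (1 + u)) / 2) := by
  have hpos := one_sub_two_mul_add_sq_pos hu (abs_two_mul_sq_sub_one_le_one hx)
  have hu1 := one_add_pos_of_abs_lt_one hu
  have h := hasSum_pow_div_mul_cos hu (2 * Real.arccos x)
  convert h using 1
  · ext p
    rw [← Real.cos_arccos hx.1 hx.2, Chebyshev.T_real_cos, Real.cos_arccos hx.1 hx.2]
    push_cast
    ring_nf
  · rw [Real.cos_two_mul, Real.cos_arccos hx.1 hx.2, one_sub_modulusSq_mul_sq hu,
      Real.log_div hpos.ne' (pow_ne_zero 2 hu1.ne'), Real.log_pow, Nat.cast_ofNat, sub_add_cancel]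

lemma continuousOn_log_one_sub_mul_sq {k2 : ℝ} (hk : k2 < 1) :
    ContinuousOn (fun x : ℝ => Real.log (1 - k2 * x ^ 2)) (Set.Icc (-1) 1) :=
  ContinuousOn.log (by fun_prop) fun _ hx => (one_sub_mul_sq_pos hk hx).ne'

/-- The mean of the linear statistic `∑ log (1 - k² x_j²)` in the `n`-point orthogonal polynomial
ensemble of `μ`, where `k2` stands for `k²`. -/
noncomputable def logMean (μ : Measure ℝ) (k2 : ℝ) (n : ℕ) : ℝ :=
  ∫ x, Real.log (1 - k2 * x ^ 2) * (cdDiag μ n).eval x ∂μ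

/-- The part of `logMean (jacobiMeasure α k² b) k² n` that does not vanish as `n → ∞`, where
`k² = modulusSq u`. -/
noncomputable def logMeanLeading (α u b : ℝ) (n : ℕ) : ℝ :=
  -2 * n * Real.log (1 + u) - 2 * α * Real.log (1 - u) - 2 * b * Real.log (1 - u ^ 2)

lemma hasSum_evenMean_logMean (hu : |u| < 1) (μ : Measure ℝ) [IsSymmetricWeight μ] (n : ℕ) :
    HasSum (fun p : ℕ => u ^ (p + 1) / (p + 1) * evenMean μ n p)
      (-(logMean μ (modulusSq u) n + 2 * n * Real.log (1 + u)) / 2) := by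
  have hsummable : Summable fun p : ℕ => |u ^ (p + 1) / ((p : ℝ) + 1)| :=
    .of_nonneg_of_le (fun _ => abs_nonneg _) (abs_pow_succ_div_le u)
      (hasSum_geometric_succ (by rwa [abs_abs])).summable
  have h := hasSum_polyIntegral_mul μ hsummable
    (f := fun p : ℕ => Chebyshev.T ℝ (2 * (p + 1))) (fun p : ℕ => abs_eval_T_le_one (2 * (p + 1)))
    (cdDiag μ n) fun x hx => hasSum_log_one_sub_modulusSq_mul_sq hu hx
  simp_rw [polyIntegral_mul_cdDiag] at h
  change HasSum (fun p : ℕ => u ^ (p + 1) / (p + 1) * evenMean μ n p) _ at h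
  convert h using 1
  have hlog : Integrable (fun x => Real.log (1 - modulusSq u * x ^ 2) * (cdDiag μ n).eval x) μ :=
    integrable_of_continuousOn
      ((continuousOn_log_one_sub_mul_sq (modulusSq_lt_one hu)).mul (by fun_prop))
  have hmass : ∫ x, (cdDiag μ n).eval x ∂μ = n := by
    rw [← polyIntegral_apply, ← one_mul (cdDiag μ n), polyIntegral_mul_cdDiag, statMean_one]
  have hsplit (x : ℝ) :
      -(Real.log (1 - modulusSq u * x ^ 2) + 2 * Real.log (1 + u)) / 2 * (cdDiag μ n).eval x =
        -1 / 2 * (Real.log (1 - modulusSq u * x ^ 2) * (cdDiag μ n).eval x) +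
          -Real.log (1 + u) * (cdDiag μ n).eval x := by ring
  simp_rw [hsplit]
  rw [integral_add (hlog.const_mul _) ((integrable_polynomial_eval _).const_mul _),
    integral_const_mul, integral_const_mul, hmass, logMean]
  ring

lemma hasSum_excess (α b : ℝ) (hu : |u| < 1) (μ : Measure ℝ) [IsSymmetricWeight μ] (n : ℕ) :
    HasSum (fun p : ℕ => -2 * (u ^ (p + 1) / (p + 1)) *
        (n * (evenMean μ n p + α + b * u ^ (p + 1))))
      (n * (logMean μ (modulusSq u) n - logMeanLeading α u b n)) := by
  have hu2 : |u ^ 2| < 1 := by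
    rw [abs_pow]
    exact pow_lt_one₀ (abs_nonneg u) hu two_ne_zero
  have h : HasSum (fun p : ℕ => -2 * (u ^ (p + 1) / (p + 1)) *
      (n * (evenMean μ n p + α + b * u ^ (p + 1)))) _ :=
    ((((hasSum_evenMean_logMean hu μ n).add
      ((Real.hasSum_pow_div_log_of_abs_lt_one hu).mul_left α)).add
      ((Real.hasSum_pow_div_log_of_abs_lt_one hu2).mul_left b)).mul_left (-2 * (n : ℝ))).congr_fun
        fun p => by ring
  convert h using 1
  rw [logMeanLeading]
  ring

lemma summable_cube_mul_pow {q : ℝ} (hq : |q| < 1) :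
    Summable fun p : ℕ => ((p : ℝ) + 1) ^ 3 * q ^ (p + 1) := by
  have h := (summable_nat_add_iff 1).2 (summable_pow_mul_geometric_of_norm_lt_one (R := ℝ) 3 hq)
  simpa only [Nat.cast_succ] using h

lemma abs_pow_succ_div_mul_le {ρ A y : ℝ} {p : ℕ}
    (hy : |y| ≤ A * (((p : ℝ) + 1) ^ 3 * ρ ^ (p + 1))) :
    |-2 * (u ^ (p + 1) / (p + 1)) * y| ≤ 2 * A * (((p : ℝ) + 1) ^ 3 * (|u| * ρ) ^ (p + 1)) := by
  rw [abs_mul, abs_mul, abs_neg, abs_two]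
  calc _ ≤ 2 * |u| ^ (p + 1) * (A * (((p : ℝ) + 1) ^ 3 * ρ ^ (p + 1))) := by
        gcongr
        exact abs_pow_succ_div_le u p
    _ = _ := by ring

lemma exists_summable_abs_excess_le {α : ℝ} (hα : -1 < α) (hu : |u| < 1) (B : ℝ) :
    ∃ g : ℕ → ℝ, Summable g ∧ ∀ b, |b| ≤ B → ∀ n p : ℕ,
      |-2 * (u ^ (p + 1) / (p + 1)) *
        (n * (evenMean (jacobiMeasure α (modulusSq u) b) n p + α + b * u ^ (p + 1)))| ≤ g p := by
  obtain ⟨ρ, hρ, huρ⟩ := exists_one_lt_mul_lt_one (abs_nonneg u) hu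
  obtain ⟨A, hA, hex⟩ := exists_abs_excess_le α B hu hρ huρ
  have hq : |(|u| * ρ)| < 1 := by rwa [abs_of_nonneg (by positivity)]
  refine ⟨_, (summable_cube_mul_pow hq).mul_left (2 * A), fun b hb n p => ?_⟩
  refine abs_pow_succ_div_mul_le ?_
  rcases n.eq_zero_or_pos with rfl | hn
  · rw [Nat.cast_zero, zero_mul, abs_zero]
    positivity
  · exact hex b n _ _ hb hn (isLoopSolution_evenMean hα hu b n) p

lemma exists_abs_logMean_sub_le {α : ℝ} (hα : -1 < α) (hu : |u| < 1) (B : ℝ) :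
    ∃ K : ℝ, ∀ b, |b| ≤ B → ∀ n : ℕ,
      |n * (logMean (jacobiMeasure α (modulusSq u) b) (modulusSq u) n -
        logMeanLeading α u b n)| ≤ K := by
  obtain ⟨g, hg, hle⟩ := exists_summable_abs_excess_le hα hu B
  refine ⟨∑' p, g p, fun b hb n => ?_⟩
  have := isSymmetricWeight_jacobiMeasure hα (modulusSq_lt_one hu) b
  rw [← (hasSum_excess α b hu _ n).tsum_eq]
  exact tsum_of_norm_bounded (E := ℝ) hg.hasSum (hle b hb n)

lemma tendsto_jacobiCoeff_jacobiMeasure {α : ℝ} (hα : -1 < α) (hu : |u| < 1) (b : ℝ) :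
    Tendsto (jacobiCoeff (jacobiMeasure α (modulusSq u) b)) atTop (𝓝 (1 / 2)) := by
  have := isSymmetricWeight_jacobiMeasure hα (modulusSq_lt_one hu) b
  have hdiag (m : ℕ) : Tendsto (fun n => mulEntry (jacobiMeasure α (modulusSq u) b)
      (Chebyshev.T ℝ (2 * (m + 1))) n n) atTop (𝓝 0) := by
    have h := tendsto_loopSolution hu (isLoopSolution_evenMean hα hu b) m
    have hdiff := ((tendsto_add_atTop_iff_nat 1).2 h).sub h
    rw [sub_self] at hdiff
    refine hdiff.congr fun n => ?_
    simp only [evenMean, statMean, Finset.sum_range_succ, add_sub_cancel_left]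
  exact tendsto_jacobiCoeff (by simpa using hdiag 0)
    (by simpa [show (2 * (1 + 1) : ℤ) = 4 by norm_num] using hdiag 1)

theorem tendsto_mul_logMean_sub {α : ℝ} (hα : -1 < α) (hu : |u| < 1) (b : ℝ) :
    Tendsto (fun n : ℕ => n * (logMean (jacobiMeasure α (modulusSq u) b) (modulusSq u) n -
      logMeanLeading α u b n)) atTop (𝓝 (-((4 * α ^ 2 - 1) / 2 * (u / (1 - u))))) := by
  have := isSymmetricWeight_jacobiMeasure hα (modulusSq_lt_one hu) b
  obtain ⟨g, hg, hle⟩ := exists_summable_abs_excess_le hα hu |b|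
  have hlim : HasSum (fun p : ℕ => -2 * (u ^ (p + 1) / ((p : ℝ) + 1)) *
      ((4 * α ^ 2 - 1) / 4 * (p + 1))) (-((4 * α ^ 2 - 1) / 2 * (u / (1 - u)))) := by
    rw [← neg_mul]
    refine ((hasSum_geometric_succ hu).mul_left _).congr_fun fun p => ?_
    field_simp
    ring
  rw [← hlim.tsum_eq]
  simp_rw [← fun n => (hasSum_excess α b hu (jacobiMeasure α (modulusSq u) b) n).tsum_eq]
  exact tendsto_tsum_of_dominated_convergence hg
    (fun p => (tendsto_excess hu (isLoopSolution_evenMean hα hu b)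
      (tendsto_covSum (tendsto_jacobiCoeff_jacobiMeasure hα hu b) p)).const_mul _)
    (.of_forall (hle b le_rfl))

end LogStatistic

/-! ### Determinants -/

lemma trace_adjugate_mul {ι R : Type*} [Fintype ι] [DecidableEq ι] [CommRing R]
    (A B : Matrix ι ι R) : (A.adjugate * B).trace = ∑ σ : Equiv.Perm ι, Equiv.Perm.sign σ •
      ∑ i, (∏ j ∈ Finset.univ.erase i, A (σ j) j) • B (σ i) i := by
  simp_rw [Finset.smul_sum]
  rw [Finset.sum_comm]
  refine Finset.sum_congr rfl fun i _ => ?_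
  calc (A.adjugate * B) i i = (A.updateCol i (B.col i)).det := by
        rw [← Matrix.cramer_apply, Matrix.cramer_eq_adjugate_mulVec]
        rfl
    _ = _ := by
        rw [Matrix.det_apply]
        refine Finset.sum_congr rfl fun σ _ => congrArg _ ?_
        rw [← Finset.prod_erase_mul _ _ (Finset.mem_univ i), Matrix.updateCol_self]
        refine congrArg (· * _) (Finset.prod_congr rfl fun j hj => ?_)
        exact Matrix.updateCol_ne (Finset.ne_of_mem_erase hj)

lemma hasDerivAt_det {ι 𝕜 : Type*} [Fintype ι] [DecidableEq ι] [NontriviallyNormedField 𝕜]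
    {M : 𝕜 → Matrix ι ι 𝕜} {M' : Matrix ι ι 𝕜} {t : 𝕜}
    (h : ∀ i j, HasDerivAt (fun s => M s i j) (M' i j) t) :
    HasDerivAt (fun s => (M s).det) ((M t).adjugate * M').trace t := by
  rw [trace_adjugate_mul]
  simp_rw [Matrix.det_apply]
  exact HasDerivAt.fun_sum fun σ _ =>
    (HasDerivAt.fun_finsetProd fun i _ => h (σ i) i).const_smul (Equiv.Perm.sign σ)

lemma det_gram_eq {R : Type*} [CommRing R] (L : R[X] →ₗ[R] R) {n : ℕ} {P : Fin n → R[X]}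
    (hP : ∀ i, (P i).natDegree < n) :
    (Matrix.of fun i j => L (P i * P j)).det =
      (Matrix.of fun i j : Fin n => (P i).coeff j).det ^ 2 *
        (Matrix.of fun i j : Fin n => L (X ^ ((i : ℕ) + (j : ℕ)))).det := by
  set A := Matrix.of fun i j : Fin n => (P i).coeff j with hA
  set H := Matrix.of fun i j : Fin n => L (X ^ ((i : ℕ) + (j : ℕ))) with hH
  have hexpand (i : Fin n) : P i = ∑ a : Fin n, (P i).coeff a • X ^ (a : ℕ) := by
    conv_lhs => rw [(P i).as_sum_range' n (hP i), Finset.sum_range]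
    simp_rw [smul_X_eq_monomial]
  have hgram : (Matrix.of fun i j => L (P i * P j)) = A * H * A.transpose := by
    ext i j
    rw [Matrix.of_apply, hexpand i, hexpand j, Finset.sum_mul_sum, Finset.sum_comm, map_sum]
    simp only [hA, hH, Matrix.of_apply, Matrix.mul_apply, Matrix.transpose_apply, Finset.sum_mul,
      map_sum]
    refine Finset.sum_congr rfl fun b _ => Finset.sum_congr rfl fun a _ => ?_
    rw [smul_mul_smul_comm, ← pow_add, map_smul, smul_eq_mul]
    ring
  rw [hgram, Matrix.det_mul, Matrix.det_mul, Matrix.det_transpose]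
  ring

/-! ### Differentiation in the exponent -/

section ExponentDerivative

variable {α k2 : ℝ}

lemma rpow_le_rpow_mul_exp_abs_log {y s t : ℝ} (hy : 0 < y) (hst : |t - s| ≤ 1) :
    y ^ t ≤ y ^ s * Real.exp |Real.log y| := by
  rw [Real.rpow_def_of_pos hy, Real.rpow_def_of_pos hy, ← Real.exp_add]
  refine Real.exp_le_exp.2 (sub_le_iff_le_add'.1 ?_)
  calc Real.log y * t - Real.log y * s = Real.log y * (t - s) := by ring
    _ ≤ |Real.log y| * |t - s| := (le_abs_self _).trans_eq (abs_mul _ _)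
    _ ≤ |Real.log y| := mul_le_of_le_one_right (abs_nonneg _) hst

lemma jacobiWeight_le_mul_exp_abs_log (hk : k2 < 1) {s t x : ℝ} (hst : |t - s| ≤ 1)
    (hx : x ∈ Set.Icc (-1 : ℝ) 1) : jacobiWeight α k2 t x ≤
      jacobiWeight α k2 s x * Real.exp |Real.log (1 - k2 * x ^ 2)| := by
  rw [jacobiWeight, jacobiWeight, mul_assoc]
  exact mul_le_mul_of_nonneg_left (rpow_le_rpow_mul_exp_abs_log (one_sub_mul_sq_pos hk hx) hst)
    (Real.rpow_nonneg (one_sub_sq_nonneg hx) _)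

lemma hasDerivAt_jacobiWeight_exponent (hk : k2 < 1) {x : ℝ} (hx : x ∈ Set.Icc (-1 : ℝ) 1)
    (b : ℝ) : HasDerivAt (fun t => jacobiWeight α k2 t x)
      (Real.log (1 - k2 * x ^ 2) * jacobiWeight α k2 b x) b :=
  ((Real.hasStrictDerivAt_const_rpow (one_sub_mul_sq_pos hk hx) b).hasDerivAt.const_mul
    ((1 - x ^ 2) ^ α)).congr_deriv (by rw [jacobiWeight]; ring)

lemma hasDerivAt_polyIntegral_jacobiMeasure (hα : -1 < α) (hk : k2 < 1) (b : ℝ) (q : ℝ[X]) :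
    HasDerivAt (fun t => polyIntegral (jacobiMeasure α k2 t) q)
      (∫ x, Real.log (1 - k2 * x ^ 2) * q.eval x ∂(jacobiMeasure α k2 b)) b := by
  set φ : ℝ → ℝ := fun x => Real.log (1 - k2 * x ^ 2)
  have hIoc {x : ℝ} (hx : x ∈ Set.uIoc (-1 : ℝ) 1) : x ∈ Set.Icc (-1 : ℝ) 1 := by
    rw [Set.uIoc_of_le (by norm_num)] at hx
    exact Set.Ioc_subset_Icc_self hx
  have hφ : ContinuousOn φ (Set.uIcc (-1) 1) := by
    rw [Set.uIcc_of_le (by norm_num)]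
    exact continuousOn_log_one_sub_mul_sq hk
  have hmeas : Measurable φ := by fun_prop
  have hweight := measurable_jacobiWeight α k2
  have hint := intervalIntegrable_jacobiWeight hα hk b
  have hintegral (t : ℝ) : polyIntegral (jacobiMeasure α k2 t) q =
      ∫ x in (-1 : ℝ)..1, q.eval x * jacobiWeight α k2 t x := by
    have := isSymmetricWeight_jacobiMeasure hα hk t
    rw [polyIntegral_apply, integral_jacobiMeasure hk]
  simp_rw [hintegral, integral_jacobiMeasure hk]
  refine (intervalIntegral.hasDerivAt_integral_of_dominated_loc_of_deriv_le
    (F' := fun t x => φ x * q.eval x * jacobiWeight α k2 t x)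
    (bound := fun x => |φ x * q.eval x| * Real.exp |φ x| * jacobiWeight α k2 b x)
    (Metric.ball_mem_nhds b one_pos)
    (.of_forall fun t => (q.continuous.measurable.mul (hweight t)).aestronglyMeasurable)
    (hint.continuousOn_mul q.continuous.continuousOn)
    ((hmeas.mul q.continuous.measurable).mul (hweight b)).aestronglyMeasurable
    (.of_forall fun x hx t ht => ?_) (hint.continuousOn_mul ?_)
    (.of_forall fun x hx t _ => ?_)).2
  · rw [norm_mul, Real.norm_of_nonneg (jacobiWeight_nonneg hk (hIoc hx)), Real.norm_eq_abs,
      mul_assoc, mul_comm (Real.exp _)]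
    exact mul_le_mul_of_nonneg_left
      (jacobiWeight_le_mul_exp_abs_log hk (Metric.mem_ball.1 ht).le (hIoc hx)) (abs_nonneg _)
  · fun_prop
  · exact ((hasDerivAt_jacobiWeight_exponent hk (hIoc hx) t).const_mul (q.eval x)).congr_deriv
      (by ring)

lemma logMean_eq_sum {μ : Measure ℝ} [IsSymmetricWeight μ] (hk : k2 < 1) (n : ℕ) :
    logMean μ k2 n =
      ∑ i : Fin n, ∫ x, Real.log (1 - k2 * x ^ 2) * (onp μ i * onp μ i).eval x ∂μ := by
  rw [logMean, Fin.sum_univ_eq_sum_range (fun i => ∫ x, Real.log (1 - k2 * x ^ 2) *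
    (onp μ i * onp μ i).eval x ∂μ), ← integral_finsetSum]
  · simp_rw [cdDiag, eval_finsetSum, Finset.mul_sum]
  · exact fun i _ =>
      integrable_of_continuousOn ((continuousOn_log_one_sub_mul_sq hk).mul (by fun_prop))

lemma hankelDet_jacobiWeight (hα : -1 < α) (hk : k2 < 1) (b : ℝ) (n : ℕ) :
    hankelDet (jacobiWeight α k2 b) n = (Matrix.of fun i j : Fin n =>
      polyIntegral (jacobiMeasure α k2 b) (X ^ ((i : ℕ) + (j : ℕ)))).det := by
  have := isSymmetricWeight_jacobiMeasure hα hk b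
  simp_rw [hankelDet, polyIntegral_apply, integral_jacobiMeasure hk, eval_pow, eval_X]

lemma det_gram_onp (hα : -1 < α) (hk : k2 < 1) (μ : Measure ℝ) [IsSymmetricWeight μ] (t : ℝ)
    (n : ℕ) : (Matrix.of fun i j : Fin n =>
        polyIntegral (jacobiMeasure α k2 t) (onp μ i * onp μ j)).det =
      (Matrix.of fun i j : Fin n => (onp μ i).coeff j).det ^ 2 *
        hankelDet (jacobiWeight α k2 t) n := by
  rw [hankelDet_jacobiWeight hα hk, ← det_gram_eq]
  exact fun i => (natDegree_eq_of_degree_eq_some (degree_onp μ i)).trans_lt i.2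

lemma gram_onp_eq_one (μ : Measure ℝ) [IsSymmetricWeight μ] (n : ℕ) :
    (Matrix.of fun i j : Fin n => polyIntegral μ (onp μ i * onp μ j)) = 1 := by
  ext i j
  rw [Matrix.of_apply, polyIntegral_onp_mul_onp, Matrix.one_apply]
  simp only [Fin.ext_iff]

lemma sq_det_coeff_onp_mul_hankelDet (hα : -1 < α) (hk : k2 < 1) (b : ℝ) (n : ℕ) :
    (Matrix.of fun i j : Fin n => (onp (jacobiMeasure α k2 b) i).coeff j).det ^ 2 *
      hankelDet (jacobiWeight α k2 b) n = 1 := by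
  have := isSymmetricWeight_jacobiMeasure hα hk b
  rw [← det_gram_onp hα hk, gram_onp_eq_one, Matrix.det_one]

lemma hankelDet_jacobiWeight_pos (hα : -1 < α) (hk : k2 < 1) (b : ℝ) (n : ℕ) :
    0 < hankelDet (jacobiWeight α k2 b) n :=
  pos_of_mul_pos_right (one_pos.trans_eq (sq_det_coeff_onp_mul_hankelDet hα hk b n).symm)
    (sq_nonneg _)

-- In the basis that is orthonormal at the exponent `b`, the Gram matrix is the identity at `b`,
-- so that the derivative of its determinant is a trace.
theorem hasDerivAt_hankelDet (hα : -1 < α) (hk : k2 < 1) (b : ℝ) (n : ℕ) :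
    HasDerivAt (fun t => hankelDet (jacobiWeight α k2 t) n)
      (hankelDet (jacobiWeight α k2 b) n * logMean (jacobiMeasure α k2 b) k2 n) b := by
  set μ := jacobiMeasure α k2 b
  have : IsSymmetricWeight μ := isSymmetricWeight_jacobiMeasure hα hk b
  have hdet := hasDerivAt_det
    (M := fun t => Matrix.of fun i j : Fin n =>
      polyIntegral (jacobiMeasure α k2 t) (onp μ i * onp μ j))
    (M' := Matrix.of fun i j : Fin n =>
      ∫ x, Real.log (1 - k2 * x ^ 2) * (onp μ i * onp μ j).eval x ∂μ)
    fun i j => hasDerivAt_polyIntegral_jacobiMeasure hα hk b (onp μ i * onp μ j)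
  rw [gram_onp_eq_one, Matrix.adjugate_one, one_mul] at hdet
  rw [logMean_eq_sum hk]
  refine (hdet.const_mul _).congr_of_eventuallyEq (.of_forall fun t => ?_)
  dsimp only
  rw [det_gram_onp hα hk, ← mul_assoc, mul_comm (hankelDet _ n),
    sq_det_coeff_onp_mul_hankelDet hα hk, one_mul]

lemma hasDerivAt_log_hankelDet (hα : -1 < α) (hk : k2 < 1) (b : ℝ) (n : ℕ) :
    HasDerivAt (fun t => Real.log (hankelDet (jacobiWeight α k2 t) n))
      (logMean (jacobiMeasure α k2 b) k2 n) b := by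
  have hpos := (hankelDet_jacobiWeight_pos hα hk b n).ne'
  exact ((hasDerivAt_hankelDet hα hk b n).log hpos).congr_deriv (mul_div_cancel_left₀ _ hpos)

end ExponentDerivative

/-! ### The ratio of Hankel determinants -/

section Ratio

lemma tendsto_sub_of_hasDerivAt_of_norm_le {ι F : Type*} [NormedAddCommGroup F] [NormedSpace ℝ F]
    [CompleteSpace F] {l : Filter ι} [l.IsCountablyGenerated] {f f' : ι → ℝ → F} {g : ℝ → F}
    {a b K : ℝ} (hf : ∀ i x, HasDerivAt (f i) (f' i x) x)
    (hK : ∀ i, ∀ x ∈ Set.uIoc a b, ‖f' i x‖ ≤ K)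
    (hg : ∀ x ∈ Set.uIoc a b, Tendsto (fun i => f' i x) l (𝓝 (g x))) :
    Tendsto (fun i => f i b - f i a) l (𝓝 (∫ x in a..b, g x)) := by
  have hmeas (i : ι) : AEStronglyMeasurable (f' i) (volume.restrict (Set.uIoc a b)) := by
    rw [← funext fun x => (hf i x).deriv]
    exact (stronglyMeasurable_deriv (f i)).aestronglyMeasurable
  have hint (i : ι) : IntervalIntegrable (f' i) volume a b :=
    (intervalIntegrable_const (c := K)).mono_fun (hmeas i)
      ((ae_restrict_mem measurableSet_uIoc).mono fun x hx => (hK i x hx).trans (le_abs_self K))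
  simp_rw [fun i => (intervalIntegral.integral_eq_sub_of_hasDerivAt (fun x _ => hf i x)
    (hint i)).symm]
  exact intervalIntegral.tendsto_integral_filter_of_dominated_convergence (fun _ => K)
    (.of_forall hmeas) (.of_forall fun i => .of_forall (hK i)) intervalIntegrable_const
    (.of_forall hg)

/-- The part of `log (D_n / D_n(0))` that does not vanish as `n → ∞`, where `D_n` is the Hankel
determinant of `jacobiWeight α (modulusSq u) b`. -/
noncomputable def logRatioLeading (α u : ℝ) (n : ℕ) (b : ℝ) : ℝ :=
  -2 * n * Real.log (1 + u) * b - 2 * α * Real.log (1 - u) * b - Real.log (1 - u ^ 2) * b ^ 2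

lemma hasDerivAt_logRatioLeading (α u : ℝ) (n : ℕ) (b : ℝ) :
    HasDerivAt (logRatioLeading α u n) (logMeanLeading α u b n) b := by
  refine ((((hasDerivAt_id b).const_mul (-2 * n * Real.log (1 + u))).sub
    ((hasDerivAt_id b).const_mul (2 * α * Real.log (1 - u)))).sub
    ((hasDerivAt_pow 2 b).const_mul (Real.log (1 - u ^ 2)))).congr_deriv ?_
  rw [logMeanLeading]
  push_cast
  ring

theorem tendsto_mul_log_hankelDet_sub {α u : ℝ} (hα : -1 < α) (hu : |u| < 1) (β : ℝ) :
    Tendsto (fun n : ℕ => n * (Real.log (hankelDet (jacobiWeight α (modulusSq u) β) n) -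
      Real.log (hankelDet (jacobiWeight α (modulusSq u) 0) n) - logRatioLeading α u n β)) atTop
      (𝓝 (-((4 * α ^ 2 - 1) / 2 * (u / (1 - u))) * β)) := by
  obtain ⟨K, hK⟩ := exists_abs_logMean_sub_le hα hu |β|
  have h := tendsto_sub_of_hasDerivAt_of_norm_le (a := 0) (b := β)
    (fun (n : ℕ) b => ((hasDerivAt_log_hankelDet hα (modulusSq_lt_one hu) b n).sub
      (hasDerivAt_logRatioLeading α u n b)).const_mul (n : ℝ))
    (fun n b hb => hK b (by
      simpa using Set.abs_sub_left_of_mem_uIcc (Set.uIoc_subset_uIcc hb)) n)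
    fun b _ => tendsto_mul_logMean_sub hα hu b
  rw [intervalIntegral.integral_const, sub_zero, smul_eq_mul, mul_comm] at h
  refine h.congr fun n => ?_
  simp only [Pi.sub_apply, logRatioLeading]
  ring

lemma tendsto_one_of_tendsto_mul_log {f : ℕ → ℝ} {c : ℝ} (hf : ∀ n, 0 < f n)
    (h : Tendsto (fun n : ℕ => n * Real.log (f n)) atTop (𝓝 c)) : Tendsto f atTop (𝓝 1) := by
  have hlog : Tendsto (fun n => Real.log (f n)) atTop (𝓝 0) := by
    refine (h.div_atTop tendsto_natCast_atTop_atTop).congr' ?_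
    filter_upwards [eventually_ne_atTop 0] with n hn
    exact mul_div_cancel_left₀ _ (Nat.cast_ne_zero.2 hn)
  have hexp := (Real.continuous_exp.tendsto 0).comp hlog
  rw [Real.exp_zero] at hexp
  exact hexp.congr fun n => Real.exp_log (hf n)

lemma jacobiWeight_zero (α k2 : ℝ) : jacobiWeight α k2 0 = fun x => (1 - x ^ 2) ^ α := by
  funext x
  rw [jacobiWeight, Real.rpow_zero, mul_one]

/-- The Landen transform `u = (1 - k') / (1 + k')` of the modulus `k`, as a function of the
complementary modulus `s = k' = √(1 - k²)`. -/
noncomputable def landenModulus (s : ℝ) : ℝ := (1 - s) / (1 + s)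

variable {s : ℝ}

lemma one_add_landenModulus (hs : 0 < s) : 1 + landenModulus s = 2 / (1 + s) := by
  rw [landenModulus]
  field_simp
  ring

lemma one_sub_landenModulus (hs : 0 < s) : 1 - landenModulus s = 2 * s / (1 + s) := by
  rw [landenModulus]
  field_simp
  ring

lemma abs_landenModulus_lt_one (hs : 0 < s) : |landenModulus s| < 1 := by
  have h1 : 0 < 1 + landenModulus s := by
    rw [one_add_landenModulus hs]
    positivity
  have h2 : 0 < 1 - landenModulus s := by
    rw [one_sub_landenModulus hs]
    positivity
  exact abs_lt.2 ⟨by linarith, by linarith⟩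

lemma modulusSq_landenModulus (hs : 0 < s) : modulusSq (landenModulus s) = 1 - s ^ 2 := by
  rw [modulusSq, one_add_landenModulus hs, landenModulus]
  field_simp
  ring

lemma logRatioLeading_landenModulus (α β : ℝ) (n : ℕ) (hs : 0 < s) :
    logRatioLeading α (landenModulus s) n β =
      -(2 * β * n * Real.log (2 / (1 + s)) + 2 * β * (α + β) * Real.log 2 +
        β * (α + β / 2) * Real.log (s ^ 2) - 2 * β * (α + β) * Real.log (1 + s)) := by
  have hs1 : 1 + s ≠ 0 := by positivity
  have hsq : 1 - landenModulus s ^ 2 = 2 * s / (1 + s) * (2 / (1 + s)) := by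
    rw [← one_add_landenModulus hs, ← one_sub_landenModulus hs]
    ring
  rw [logRatioLeading, hsq, one_add_landenModulus hs, one_sub_landenModulus hs, Real.log_mul
    (by positivity) (by positivity), Real.log_div two_ne_zero hs1, Real.log_div (by positivity) hs1,
    Real.log_mul two_ne_zero hs.ne', Real.log_pow]
  push_cast
  ring

/-- The normalized ratio `Λ_n` of Hankel determinants, with `s = √(1 - k²)`. -/
noncomputable def normalizedRatio (α β s : ℝ) (n : ℕ) : ℝ :=
  hankelDet (jacobiWeight α (1 - s ^ 2) β) n / hankelDet (jacobiWeight α (1 - s ^ 2) 0) n *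
    (2 / (1 + s)) ^ (2 * β * n) * 2 ^ (2 * β * (α + β)) * (s ^ 2) ^ (β * (α + β / 2)) *
    (1 + s) ^ (-(2 * β * (α + β)))

variable {α : ℝ}

lemma hankelDet_one_sub_sq_pos (hα : -1 < α) (hs : 0 < s) (b : ℝ) (n : ℕ) :
    0 < hankelDet (jacobiWeight α (1 - s ^ 2) b) n :=
  hankelDet_jacobiWeight_pos hα (sub_lt_self 1 (by positivity)) b n

lemma normalizedRatio_pos (hα : -1 < α) (β : ℝ) (hs : 0 < s) (n : ℕ) :
    0 < normalizedRatio α β s n := by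
  have hD := hankelDet_one_sub_sq_pos hα hs β n
  have hD0 := hankelDet_one_sub_sq_pos hα hs 0 n
  unfold normalizedRatio
  positivity

lemma log_normalizedRatio (hα : -1 < α) (β : ℝ) (hs : 0 < s) (n : ℕ) :
    Real.log (normalizedRatio α β s n) =
      Real.log (hankelDet (jacobiWeight α (1 - s ^ 2) β) n) -
        Real.log (hankelDet (jacobiWeight α (1 - s ^ 2) 0) n) -
          logRatioLeading α (landenModulus s) n β := by
  have hD := hankelDet_one_sub_sq_pos hα hs β n
  have hD0 := hankelDet_one_sub_sq_pos hα hs 0 n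
  have hs1 : 0 < 1 + s := by positivity
  have hs2 : 0 < s ^ 2 := by positivity
  have hq : 0 < 2 / (1 + s) := by positivity
  rw [logRatioLeading_landenModulus α β n hs, normalizedRatio,
    Real.log_mul (by positivity) (by positivity),
    Real.log_mul (by positivity) (by positivity), Real.log_mul (by positivity) (by positivity),
    Real.log_mul (by positivity) (by positivity), Real.log_div hD.ne' hD0.ne', Real.log_rpow hq,
    Real.log_rpow two_pos, Real.log_rpow hs2, Real.log_rpow hs1]
  ring

theorem tendsto_mul_log_normalizedRatio (hα : -1 < α) (β : ℝ) (hs : 0 < s) :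
    Tendsto (fun n : ℕ => n * Real.log (normalizedRatio α β s n)) atTop
      (𝓝 ((4 * α ^ 2 - 1) * β / 4 * (1 - 1 / s))) := by
  have h := tendsto_mul_log_hankelDet_sub hα (abs_landenModulus_lt_one hs) β
  rw [one_sub_landenModulus hs, modulusSq_landenModulus hs] at h
  simp_rw [log_normalizedRatio hα β hs]
  convert h using 2
  rw [landenModulus]
  field_simp
  ring

end Ratio

theorem stmt_5_general (α β k2 : ℝ) (hα : -1 < α) (hk2 : k2 < 1) :
    let D : ℕ → ℝ := fun n =>
      hankelDet (fun x => (1 - x ^ 2) ^ α * (1 - k2 * x ^ 2) ^ β) n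
    let D0 : ℕ → ℝ := fun n => hankelDet (fun x => (1 - x ^ 2) ^ α) n
    let Λ : ℕ → ℝ := fun n =>
      D n / D0 n * (2 / (1 + Real.sqrt (1 - k2))) ^ (2 * β * (n:ℝ))
        * (2:ℝ) ^ (2 * β * (α + β)) * (1 - k2) ^ (β * (α + β / 2))
        * (1 + Real.sqrt (1 - k2)) ^ (-(2 * β * (α + β)))
    Tendsto Λ atTop (𝓝 1) ∧
      Tendsto (fun n : ℕ => (n:ℝ) * Real.log (Λ n)) atTop
        (𝓝 ((4 * α ^ 2 - 1) * β / 4 * (1 - 1 / Real.sqrt (1 - k2)))) := by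
  intro D D0 Λ
  have hs : 0 < √(1 - k2) := Real.sqrt_pos.2 (sub_pos.2 hk2)
  have hsq : √(1 - k2) ^ 2 = 1 - k2 := Real.sq_sqrt (sub_pos.2 hk2).le
  have hΛ : Λ = normalizedRatio α β √(1 - k2) := by
    funext n
    rw [normalizedRatio, hsq, sub_sub_cancel, jacobiWeight_zero]
    rfl
  have hlog := tendsto_mul_log_normalizedRatio hα β hs
  rw [hΛ]
  exact ⟨tendsto_one_of_tendsto_mul_log (normalizedRatio_pos hα β hs) hlog, hlog⟩

/-- Asymptotics of the ratio of the Hankel determinant for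
`w(x,k²) = (1-x²)^α (1-k²x²)^β` to the one for the symmetric Jacobi weight
`(1-x²)^α`: the normalized ratio `Λ_n` tends to `1` and
`n log Λ_n → ((4α²−1)β/4)(1 − 1/√(1−k²))`. -/
theorem stmt_5 (α β k2 : ℝ) (hα : -1 < α) (hk2 : k2 ∈ Set.Ioo (0:ℝ) 1) :
    let D : ℕ → ℝ := fun n =>
      hankelDet (fun x => (1 - x ^ 2) ^ α * (1 - k2 * x ^ 2) ^ β) n
    let D0 : ℕ → ℝ := fun n => hankelDet (fun x => (1 - x ^ 2) ^ α) n
    let Λ : ℕ → ℝ := fun n =>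
      D n / D0 n * (2 / (1 + Real.sqrt (1 - k2))) ^ (2 * β * (n:ℝ))
        * (2:ℝ) ^ (2 * β * (α + β)) * (1 - k2) ^ (β * (α + β / 2))
        * (1 + Real.sqrt (1 - k2)) ^ (-(2 * β * (α + β)))
    Filter.Tendsto Λ Filter.atTop (nhds 1) ∧
      Filter.Tendsto (fun n : ℕ => (n:ℝ) * Real.log (Λ n)) Filter.atTop
        (nhds ((4 * α ^ 2 - 1) * β / 4 * (1 - 1 / Real.sqrt (1 - k2)))) :=
  stmt_5_general α β k2 hα hk2.2
end

section
/- For every integer n ≥ 1, the recurrence coefficient β_n is determined by r_n and R_n through the identity k²·β_n·(α+β+n−1/2)·(α+β+n+1/2 − R_n)·R_n = [R_n + k²·(α+β+n+1/2 − R_n)]·r_n² + [(n+β)·R_n − α·k²·(α+β+n+1/2 − R_n)]·r_n + (n/2)·(n/2+β)·R_n. -/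
open MeasureTheory

/-!
Replace the integrals by moment functionals. If `L` is the functional of `w` and `S` that of
`w / (x - a)`, then `S ((X - a) Q) = L Q`. By orthogonality `S (P_n Q) = Q(a) S(P_n)` for
`deg Q ≤ n`, while `S (P_n P_{n+1}) = P_{n+1}(a) S(P_n) + h_n`; hence `S (P_{n+1} P_n)` satisfies a
quadratic equation, which at the poles `a = -1` and `a = -1/k` reads
`r² - α r = β_n R_n R_{n-1}` and `(r*)² - β r* = β_n R*_n R*_{n-1}`. Integration by parts against
the odd polynomials `P_{n+1} P_n` and `X P_n²` yields the sum rules `r_n + r*_n = -n/2` and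
`R_n + R*_n / k = α + β + n + 1/2`. Eliminating the starred variables gives the identity.

Integration by parts needs `0 < α`. For `α ≤ 0` the integrals defining `R_n` and `r_n` diverge, as
`P_n(-1) ≠ 0`. Lean's integral then returns `0`, so that `R_n = r_n = 0` and both sides vanish.
-/

namespace OrthogonalPolynomial

open Polynomial

lemma apply_C_mul {A : Type*} [CommSemiring A] (L : A[X] →ₗ[A] A) (c : A) (Q : A[X]) :
    L (C c * Q) = c * L Q := by
  rw [← smul_eq_C_mul, map_smul, smul_eq_mul]

lemma coeff_X_mul_derivative {A : Type*} [Semiring A] (Q : A[X]) (j : ℕ) :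
    (X * derivative Q).coeff j = j * Q.coeff j := by
  rcases j with _ | j
  · rw [coeff_X_mul_zero, Nat.cast_zero, zero_mul]
  · rw [coeff_X_mul, coeff_derivative, (Nat.cast_commute _ _).eq, Nat.cast_succ]

section MomentFunctional

variable {A : Type*} [CommRing A] {L S : A[X] →ₗ[A] A} {P : ℕ → A[X]} {h : ℕ → A} {a : A}

/-- `P` is the sequence of monic orthogonal polynomials of the moment functional `L`, with
squared norms `h`. -/
structure IsMonicOrthogonal (L : A[X] →ₗ[A] A) (P : ℕ → A[X]) (h : ℕ → A) : Prop where
  monic : ∀ n, (P n).Monic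
  natDegree_eq : ∀ n, (P n).natDegree = n
  apply_mul : ∀ m n, L (P m * P n) = if m = n then h n else 0

/-- `S` is a Geronimus transform of the moment functional `L` at `a`: an algebraic substitute for
`Q ↦ L (Q / (X - a))`, determined by `L` up to its value at `1`. -/
def IsGeronimusTransform (L S : A[X] →ₗ[A] A) (a : A) : Prop :=
  ∀ Q, S ((X - C a) * Q) = L Q

/-- A moment functional is symmetric if its odd moments vanish, as for an even weight; the
definition phrases this as invariance under `X ↦ -X`. -/
def IsSymmetric (L : A[X] →ₗ[A] A) : Prop :=
  ∀ Q, L (Q.comp (-X)) = L Q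

lemma coeff_divByMonic_X_sub_C_of_natDegree_le {Q : A[X]} {n : ℕ} (hQ : Q.natDegree ≤ n + 1)
    (a : A) : (Q /ₘ (X - C a)).coeff n = Q.coeff (n + 1) := by
  nontriviality A
  have hdeg : (Q /ₘ (X - C a)).natDegree < n + 1 := by
    rw [natDegree_divByMonic _ (monic_X_sub_C a), natDegree_X_sub_C]
    omega
  rw [coeff_divByMonic_X_sub_C_rec, coeff_eq_zero_of_natDegree_lt hdeg, mul_zero, add_zero]

namespace IsGeronimusTransform

lemma apply_X_mul (hS : IsGeronimusTransform L S a) (Q : A[X]) :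
    S (X * Q) = L Q + a * S Q := by
  rw [← hS, ← apply_C_mul, ← map_add]
  ring_nf

lemma apply_mul (hS : IsGeronimusTransform L S a) (P Q : A[X]) :
    S (P * Q) = Q.eval a * S P + L (P * (Q /ₘ (X - C a))) := by
  have hQ : P * Q = C (Q.eval a) * P + (X - C a) * (P * (Q /ₘ (X - C a))) := by
    linear_combination -P * X_sub_C_mul_divByMonic_eq_sub_modByMonic Q a
      + P * modByMonic_X_sub_C_eq_C_eval Q a
  rw [hQ, map_add, apply_C_mul, hS]

end IsGeronimusTransform

namespace IsMonicOrthogonal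

lemma nontrivial (hP : IsMonicOrthogonal L P h) : Nontrivial A := by
  by_contra htriv
  have := not_nontrivial_iff_subsingleton.mp htriv
  simpa [Subsingleton.elim (P 1) 0] using hP.natDegree_eq 1

lemma coeff_self (hP : IsMonicOrthogonal L P h) (n : ℕ) : (P n).coeff n = 1 := by
  simpa only [hP.natDegree_eq] using (hP.monic n).coeff_natDegree

lemma coeff_of_lt (hP : IsMonicOrthogonal L P h) {m n : ℕ} (hmn : m < n) : (P m).coeff n = 0 :=
  coeff_eq_zero_of_natDegree_lt (by rwa [hP.natDegree_eq])

lemma degree_sub_C_mul_lt (hP : IsMonicOrthogonal L P h) {n : ℕ} {Q : A[X]}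
    (hQ : Q.natDegree ≤ n) : (Q - C (Q.coeff n) * P n).degree < n := by
  refine (degree_lt_iff_coeff_zero _ _).mpr fun j hj => ?_
  rcases hj.eq_or_lt with rfl | hj
  · simp [hP.coeff_self]
  · simp [hP.coeff_of_lt hj, coeff_eq_zero_of_natDegree_lt (hQ.trans_lt hj)]

lemma apply_mul_eq_zero_of_degree_lt (hP : IsMonicOrthogonal L P h) {m n : ℕ} (hmn : m ≤ n)
    {Q : A[X]} (hQ : Q.degree < m) : L (P n * Q) = 0 := by
  induction m generalizing Q with
  | zero => rw [degree_eq_bot.mp (Nat.WithBot.lt_zero_iff.mp hQ), mul_zero, map_zero]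
  | succ m ih =>
    have hlow := ih (by omega) (hP.degree_sub_C_mul_lt (natDegree_le_of_degree_le
      (Order.lt_succ_iff.mp hQ)))
    rwa [mul_sub, map_sub, mul_left_comm, apply_C_mul, hP.apply_mul, if_neg (by omega), mul_zero,
      sub_zero] at hlow

lemma apply_mul_eq_coeff_mul (hP : IsMonicOrthogonal L P h) {n : ℕ} {Q : A[X]}
    (hQ : Q.natDegree ≤ n) : L (P n * Q) = Q.coeff n * h n := by
  have hsplit : P n * Q = P n * (Q - C (Q.coeff n) * P n) + C (Q.coeff n) * (P n * P n) := by ring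
  rw [hsplit, map_add, hP.apply_mul_eq_zero_of_degree_lt le_rfl (hP.degree_sub_C_mul_lt hQ),
    apply_C_mul, hP.apply_mul, if_pos rfl, zero_add]

lemma eq_C_mul_of_forall_apply_mul_eq_zero [NoZeroDivisors A] (hP : IsMonicOrthogonal L P h)
    (hh : ∀ n, h n ≠ 0) {n : ℕ} {Q : A[X]} (hQ : Q.natDegree ≤ n)
    (horth : ∀ m < n, L (P m * Q) = 0) : Q = C (Q.coeff n) * P n := by
  by_contra hne
  set D := Q - C (Q.coeff n) * P n
  have hD : D ≠ 0 := sub_ne_zero.mpr hne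
  have hdeg : D.natDegree < n := (natDegree_lt_iff_degree_lt hD).mpr (hP.degree_sub_C_mul_lt hQ)
  have hzero : L (P D.natDegree * D) = 0 := by
    rw [mul_sub, map_sub, horth _ hdeg, mul_left_comm, apply_C_mul, hP.apply_mul, if_neg hdeg.ne,
      mul_zero, sub_zero]
  rw [hP.apply_mul_eq_coeff_mul le_rfl] at hzero
  exact mul_ne_zero (leadingCoeff_ne_zero.mpr hD) (hh _) hzero

lemma comp_neg_X [NoZeroDivisors A] (hP : IsMonicOrthogonal L P h) (hh : ∀ n, h n ≠ 0)
    (hL : IsSymmetric L) (n : ℕ) : (P n).comp (-X) = (-1) ^ n * P n := by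
  have hdeg (m : ℕ) : ((P m).comp (-X)).natDegree = m := by
    rw [natDegree_eq_of_degree_eq degree_comp_neg_X, hP.natDegree_eq]
  have horth : ∀ m < n, L (P m * (P n).comp (-X)) = 0 := fun m hm => by
    rw [← hL, mul_comp_neg_X, comp_neg_X_comp_neg_X, mul_comm,
      hP.apply_mul_eq_coeff_mul ((hdeg m).trans_le hm.le),
      coeff_eq_zero_of_natDegree_lt ((hdeg m).trans_lt hm), zero_mul]
  have hcoeff : ((P n).comp (-X)).coeff n = (-1) ^ n := by
    have hlead := comp_neg_X_leadingCoeff_eq (P n)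
    rwa [leadingCoeff, hdeg, hP.monic n, hP.natDegree_eq, mul_one] at hlead
  rw [hP.eq_C_mul_of_forall_apply_mul_eq_zero hh (hdeg n).le horth, hcoeff]
  simp only [map_pow, map_neg, map_one]

lemma recurrence_coeff_mul (hP : IsMonicOrthogonal L P h) {n : ℕ} {b : A}
    (hrec : X * P (n + 1) = P (n + 2) + C b * P n) : b * h n = h (n + 1) := by
  have hX : (X * P n).natDegree ≤ n + 1 :=
    natDegree_mul_le.trans (by have := natDegree_X_le (R := A); rw [hP.natDegree_eq]; omega)
  calc b * h n = L (P n * (P (n + 2) + C b * P n)) := by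
        rw [mul_add, map_add, mul_left_comm, apply_C_mul, hP.apply_mul, hP.apply_mul,
          if_neg (by omega), if_pos rfl, zero_add]
    _ = L (P (n + 1) * (X * P n)) := by rw [← hrec]; ring_nf
    _ = h (n + 1) := by
        rw [hP.apply_mul_eq_coeff_mul hX, coeff_X_mul, hP.coeff_self, one_mul]

lemma eval_ne_zero (hP : IsMonicOrthogonal L P h)
    (hL : ∀ Q ≠ 0, L ((X - C a) * Q ^ 2) ≠ 0) (n : ℕ) : (P n).eval a ≠ 0 := by
  intro hroot
  have : Nontrivial A := hP.nontrivial
  have hPn : P n ≠ 0 := (hP.monic n).ne_zero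
  have hQ := mul_divByMonic_eq_iff_isRoot.mpr hroot
  set Q := P n /ₘ (X - C a)
  have hQ0 : Q ≠ 0 := fun h0 => by simp [h0, hPn.symm] at hQ
  refine hL Q hQ0 ?_
  have hdeg : Q.degree < n := by
    rw [← hP.natDegree_eq n, ← degree_eq_natDegree hPn]
    exact degree_divByMonic_lt _ _ hPn (by rw [degree_X_sub_C]; exact zero_lt_one)
  rw [sq, ← mul_assoc, hQ, hP.apply_mul_eq_zero_of_degree_lt le_rfl hdeg]

lemma apply_derivative_mul_succ (hP : IsMonicOrthogonal L P h) (n : ℕ) :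
    L (derivative (P (n + 1) * P n)) = (n + 1) * h n := by
  have hsucc : (derivative (P (n + 1))).natDegree ≤ n :=
    (natDegree_derivative_le _).trans (by rw [hP.natDegree_eq]; omega)
  have hself : (derivative (P n)).natDegree < n + 1 :=
    (natDegree_derivative_le _).trans_lt (by rw [hP.natDegree_eq]; omega)
  rw [derivative_mul, map_add, mul_comm (derivative _), hP.apply_mul_eq_coeff_mul hsucc,
    hP.apply_mul_eq_coeff_mul hself.le, coeff_eq_zero_of_natDegree_lt hself, coeff_derivative,
    hP.coeff_self]
  ring

lemma apply_derivative_X_mul_sq (hP : IsMonicOrthogonal L P h) (n : ℕ) :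
    L (derivative (X * P n ^ 2)) = (2 * n + 1) * h n := by
  have hderiv : derivative (X * P n ^ 2) = P n * (P n + C 2 * (X * derivative (P n))) := by
    rw [derivative_mul, derivative_X, derivative_sq]
    ring
  have hX : (X * derivative (P n)).natDegree ≤ n := by
    refine natDegree_le_iff_coeff_eq_zero.mpr fun j hj => ?_
    rw [coeff_X_mul_derivative, hP.coeff_of_lt hj, mul_zero]
  rw [hderiv, hP.apply_mul_eq_coeff_mul (natDegree_add_le_of_degree_le (hP.natDegree_eq n).le
    ((natDegree_C_mul_le _ _).trans hX)), coeff_add, coeff_C_mul, coeff_X_mul_derivative,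
    hP.coeff_self]
  ring

lemma geronimus_apply_mul (hP : IsMonicOrthogonal L P h) (hS : IsGeronimusTransform L S a) {n : ℕ}
    {Q : A[X]} (hQ : Q.natDegree ≤ n + 1) :
    S (P n * Q) = Q.eval a * S (P n) + Q.coeff (n + 1) * h n := by
  have hdiv : (Q /ₘ (X - C a)).natDegree ≤ n := by
    nontriviality A
    rw [natDegree_divByMonic _ (monic_X_sub_C a), natDegree_X_sub_C]
    omega
  rw [hS.apply_mul, hP.apply_mul_eq_coeff_mul hdiv, coeff_divByMonic_X_sub_C_of_natDegree_le hQ]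

lemma geronimus_mul_succ_quadratic (hP : IsMonicOrthogonal L P h)
    (hS : IsGeronimusTransform L S a) (n : ℕ) :
    S (P (n + 1) * P n) * (S (P (n + 1) * P n) - h n) = S (P (n + 1) ^ 2) * S (P n ^ 2) := by
  have low {m l : ℕ} (hlm : l ≤ m) : S (P m * P l) = (P l).eval a * S (P m) := by
    rw [hP.geronimus_apply_mul hS (by rw [hP.natDegree_eq]; omega), hP.coeff_of_lt (by omega),
      zero_mul, add_zero]
  have high : S (P (n + 1) * P n) = (P (n + 1)).eval a * S (P n) + h n := by
    rw [mul_comm, hP.geronimus_apply_mul hS (hP.natDegree_eq _).le, hP.coeff_self, one_mul]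
  calc
    _ = (P n).eval a * S (P (n + 1)) * ((P (n + 1)).eval a * S (P n)) := by
      nth_rw 1 [low n.le_succ]
      rw [high, add_sub_cancel_right]
    _ = _ := by
      rw [sq, sq, low le_rfl, low le_rfl]
      ring

end IsMonicOrthogonal

end MomentFunctional

section Ladder

variable {K : Type*} [Field K] {L S T : K[X] →ₗ[K] K} {P : ℕ → K[X]} {h : ℕ → K}

/-- The quantity `R_n` of the ladder operator method: the residue of the coefficient `A_n(z)` at a
pole where the weight has exponent `γ` and Geronimus transform `S`. -/
noncomputable def residueA (γ : K) (S : K[X] →ₗ[K] K) (P : ℕ → K[X]) (h : ℕ → K) (n : ℕ) : K :=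
  γ / h n * S (P n ^ 2)

/-- The quantity `r_n` of the ladder operator method: the residue of the coefficient `B_n(z)`, in
the setting of `residueA`. Meaningful for `1 ≤ n` only. -/
noncomputable def residueB (γ : K) (S : K[X] →ₗ[K] K) (P : ℕ → K[X]) (h : ℕ → K) (n : ℕ) : K :=
  γ / h (n - 1) * S (P n * P (n - 1))

/-- The Pearson equation `w'(x) = v(x) - v(-x)` of an even weight `w`, tested against odd
polynomials; `L` and `T` are the functionals of `w` and `v`. -/
def IsOddPearson (L T : K[X] →ₗ[K] K) : Prop :=
  ∀ Q, Q.comp (-X) = -Q → L (derivative Q) + 2 * T Q = 0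

namespace IsMonicOrthogonal

lemma residueB_succ_sq_sub (hP : IsMonicOrthogonal L P h) (hh : ∀ n, h n ≠ 0) {a : K}
    (hS : IsGeronimusTransform L S a) {n : ℕ} {b : K}
    (hrec : X * P (n + 1) = P (n + 2) + C b * P n) (γ : K) :
    residueB γ S P h (n + 1) ^ 2 - γ * residueB γ S P h (n + 1)
      = b * residueA γ S P h (n + 1) * residueA γ S P h n := by
  have hb : b = h (n + 1) / h n := eq_div_of_mul_eq (hh n) (hP.recurrence_coeff_mul hrec)
  have hn := hh n
  have hn' := hh (n + 1)
  simp only [residueA, residueB, Nat.add_sub_cancel, hb]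
  field_simp
  linear_combination γ ^ 2 * hP.geronimus_mul_succ_quadratic hS n

lemma two_mul_pearson_mul_succ (hP : IsMonicOrthogonal L P h) (hh : ∀ n, h n ≠ 0)
    (hL : IsSymmetric L) (hT : IsOddPearson L T) (n : ℕ) :
    2 * T (P (n + 1) * P n) = -((n + 1) * h n) := by
  have hodd : (P (n + 1) * P n).comp (-X) = -(P (n + 1) * P n) := by
    rw [mul_comp_neg_X, hP.comp_neg_X hh hL, hP.comp_neg_X hh hL]
    linear_combination (-P (n + 1) * P n) * (Even.neg_one_pow ⟨n, rfl⟩ : (-1 : K[X]) ^ (n + n) = 1)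
  rw [← hP.apply_derivative_mul_succ, ← add_eq_zero_iff_eq_neg', hT _ hodd]

lemma two_mul_pearson_X_mul_sq (hP : IsMonicOrthogonal L P h) (hh : ∀ n, h n ≠ 0)
    (hL : IsSymmetric L) (hT : IsOddPearson L T) (n : ℕ) :
    2 * T (X * P n ^ 2) = -((2 * n + 1) * h n) := by
  have hodd : (X * P n ^ 2).comp (-X) = -(X * P n ^ 2) := by
    rw [mul_comp_neg_X, X_comp, pow_comp, hP.comp_neg_X hh hL, mul_pow, ← pow_mul, mul_comm n,
      pow_mul, neg_one_sq, one_pow, one_mul, neg_mul]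
  rw [← hP.apply_derivative_X_mul_sq, ← add_eq_zero_iff_eq_neg', hT _ hodd]

variable [CharZero K] {S' : K[X] →ₗ[K] K} {α β : K}

lemma residueB_succ_add_residueB_succ (hP : IsMonicOrthogonal L P h) (hh : ∀ n, h n ≠ 0)
    (hL : IsSymmetric L) (hT : IsOddPearson L (α • S + β • S')) (n : ℕ) :
    residueB α S P h (n + 1) + residueB β S' P h (n + 1) = -((n + 1) / 2) := by
  have hsum := hP.two_mul_pearson_mul_succ hh hL hT n
  simp only [LinearMap.add_apply, LinearMap.smul_apply, smul_eq_mul] at hsum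
  have hn := hh n
  simp only [residueB, Nat.add_sub_cancel]
  field_simp
  linear_combination hsum

lemma mul_residueA_add_mul_residueA (hP : IsMonicOrthogonal L P h) (hh : ∀ n, h n ≠ 0)
    (hL : IsSymmetric L) {a a' : K} (hS : IsGeronimusTransform L S a)
    (hS' : IsGeronimusTransform L S' a') (hT : IsOddPearson L (α • S + β • S')) (n : ℕ) :
    a * residueA α S P h n + a' * residueA β S' P h n = -(α + β + n + 1 / 2) := by
  have hsum := hP.two_mul_pearson_X_mul_sq hh hL hT n
  have hnorm : L (P n ^ 2) = h n := by rw [sq, hP.apply_mul, if_pos rfl]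
  simp only [LinearMap.add_apply, LinearMap.smul_apply, smul_eq_mul, hS.apply_X_mul,
    hS'.apply_X_mul, hnorm] at hsum
  have hn := hh n
  simp only [residueA]
  field_simp
  linear_combination hsum

theorem recurrence_coeff_identity (hP : IsMonicOrthogonal L P h) (hh : ∀ n, h n ≠ 0)
    (hL : IsSymmetric L) {k : K} (hk : k ≠ 0) (hS : IsGeronimusTransform L S (-1))
    (hS' : IsGeronimusTransform L S' (-(1 / k))) (hT : IsOddPearson L (α • S + β • S')) {n : ℕ}
    {b R r : K} (hrec : X * P (n + 1) = P (n + 2) + C b * P n)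
    (hR : R = residueA α S P h (n + 1)) (hr : r = residueB α S P h (n + 1)) :
    k ^ 2 * b * (α + β + (n + 1 : ℕ) - 1 / 2) * (α + β + (n + 1 : ℕ) + 1 / 2 - R) * R
      = (R + k ^ 2 * (α + β + (n + 1 : ℕ) + 1 / 2 - R)) * r ^ 2
        + (((n + 1 : ℕ) + β) * R - α * k ^ 2 * (α + β + (n + 1 : ℕ) + 1 / 2 - R)) * r
        + (n + 1 : ℕ) / 2 * ((n + 1 : ℕ) / 2 + β) * R := by
  set Rs := residueA β S' P h with hRs
  have hr_add : r + residueB β S' P h (n + 1) = -((n + 1) / 2) := by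
    rw [hr, hP.residueB_succ_add_residueB_succ hh hL hT]
  have hR_pred : α + β + (n + 1 : ℕ) - 1 / 2 = residueA α S P h n + Rs n / k := by
    push_cast
    linear_combination hP.mul_residueA_add_mul_residueA hh hL hS hS' hT n
  have hR_self : α + β + (n + 1 : ℕ) + 1 / 2 - R = Rs (n + 1) / k := by
    linear_combination hP.mul_residueA_add_mul_residueA hh hL hS hS' hT (n + 1) - hR
  have hquad : r ^ 2 - α * r = b * R * residueA α S P h n := by
    rw [hr, hR, hP.residueB_succ_sq_sub hh hS hrec]
  have hquad' := hP.residueB_succ_sq_sub hh hS' hrec β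
  rw [eq_sub_of_add_eq' hr_add, ← hRs] at hquad'
  rw [hR_self, hR_pred]
  push_cast
  field_simp
  linear_combination (-4 * k * Rs (n + 1)) * hquad - 4 * R * hquad'

end IsMonicOrthogonal

end Ladder

section WeightFunctional

open Set

variable {w v : ℝ → ℝ} {a b c : ℝ}

lemma intervalIntegrable_eval_mul (hw : IntervalIntegrable w volume a b) (Q : ℝ[X]) :
    IntervalIntegrable (fun x => Q.eval x * w x) volume a b :=
  hw.continuousOn_mul Q.continuous.continuousOn

/-- The moment functional `Q ↦ ∫ Q w` of a weight `w` on `[a, b]`. -/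
noncomputable def weightFunctional (hw : IntervalIntegrable w volume a b) : ℝ[X] →ₗ[ℝ] ℝ where
  toFun Q := ∫ x in a..b, Q.eval x * w x
  map_add' Q₁ Q₂ := by
    simp only [eval_add, add_mul]
    exact intervalIntegral.integral_add (intervalIntegrable_eval_mul hw Q₁)
      (intervalIntegrable_eval_mul hw Q₂)
  map_smul' t Q := by
    simp only [eval_smul, smul_eq_mul, mul_assoc, intervalIntegral.integral_const_mul,
      RingHom.id_apply]

lemma weightFunctional_apply (hw : IntervalIntegrable w volume a b) (Q : ℝ[X]) :
    weightFunctional hw Q = ∫ x in a..b, Q.eval x * w x := rfl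

lemma isSymmetric_weightFunctional (hw : IntervalIntegrable w volume (-c) c)
    (heven : ∀ x, w (-x) = w x) : IsSymmetric (weightFunctional hw) := fun Q => by
  simpa [weightFunctional_apply, heven] using
    intervalIntegral.integral_comp_neg (a := -c) (b := c) fun x => Q.eval x * w x

lemma isGeronimusTransform_weightFunctional {p : ℝ} (hp : p ∉ uIoo a b)
    (hw : IntervalIntegrable w volume a b)
    (hwp : IntervalIntegrable (fun x => w x / (x - p)) volume a b) :
    IsGeronimusTransform (weightFunctional hw) (weightFunctional hwp) p := fun Q => by
  refine intervalIntegral.integral_congr_uIoo fun x hx => ?_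
  have hx0 : x - p ≠ 0 := sub_ne_zero.mpr fun h => hp (h ▸ hx)
  simp only [eval_mul, eval_sub, eval_X, eval_C]
  field_simp

lemma weightFunctional_pos (hab : a < b) (hw : IntervalIntegrable w volume a b)
    (hpos : ∀ x ∈ Ioo a b, 0 < w x) {Q : ℝ[X]} (hQ0 : Q ≠ 0) (hQ : ∀ x ∈ Ioo a b, 0 ≤ Q.eval x) :
    0 < weightFunctional hw Q := by
  have hnonneg : 0 ≤ᵐ[volume.restrict (uIoc a b)] fun x => Q.eval x * w x := by
    rw [uIoc_of_le hab.le, ← restrict_Ioo_eq_restrict_Ioc]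
    filter_upwards [ae_restrict_mem measurableSet_Ioo] with x hx
    exact mul_nonneg (hQ x hx) (hpos x hx).le
  have hsupport : Ioo a b \ Q.rootSet ℝ ⊆ Function.support (fun x => Q.eval x * w x) ∩ Ioc a b :=
    fun x hx => ⟨mul_ne_zero (fun hroot => hx.2 (by simpa [mem_rootSet, hQ0] using hroot))
      (hpos x hx.1).ne', Ioo_subset_Ioc_self hx.1⟩
  rw [weightFunctional_apply, intervalIntegral.integral_pos_iff_support_of_nonneg_ae' hnonneg
    (intervalIntegrable_eval_mul hw Q)]
  refine ⟨hab, lt_of_lt_of_le ?_ (measure_mono hsupport)⟩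
  rw [measure_sdiff_null ((Q.rootSet_finite ℝ).measure_zero _), Real.volume_Ioo]
  simpa using hab

lemma weightFunctional_derivative (hab : a ≤ b) (hcont : ContinuousOn w (Icc a b))
    (ha : w a = 0) (hb : w b = 0) (hw : IntervalIntegrable w volume a b)
    (hv : IntervalIntegrable v volume a b)
    (hderiv : ∀ x ∈ Ioo a b, HasDerivAt w (v x) x) (Q : ℝ[X]) :
    weightFunctional hw (derivative Q) = -weightFunctional hv Q := by
  have hparts := intervalIntegral.integral_mul_deriv_eq_deriv_mul_of_hasDerivAt (a := a) (b := b)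
    Q.continuous.continuousOn (by rwa [uIcc_of_le hab]) (fun x _ => Q.hasDerivAt x)
    (by rwa [min_eq_left hab, max_eq_right hab]) (Q.derivative.continuous.intervalIntegrable a b) hv
  simp only [weightFunctional_apply, hparts, ha, hb]
  ring

lemma weightFunctional_sub_comp_neg (hv : IntervalIntegrable v volume (-c) c)
    (hv' : IntervalIntegrable (fun x => v x - v (-x)) volume (-c) c) {Q : ℝ[X]}
    (hQ : Q.comp (-X) = -Q) : weightFunctional hv' Q = 2 * weightFunctional hv Q := by
  have hodd (x : ℝ) : Q.eval (-x) = -Q.eval x := by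
    simpa only [eval_comp, eval_neg, eval_X] using congrArg (eval x) hQ
  have hneg : IntervalIntegrable (fun x => Q.eval x * v (-x)) volume (-c) c := by
    simpa [mul_sub] using (intervalIntegrable_eval_mul hv Q).sub (intervalIntegrable_eval_mul hv' Q)
  have hreflect : ∫ x in (-c)..c, Q.eval x * v (-x) = -weightFunctional hv Q := by
    rw [weightFunctional_apply, ← intervalIntegral.integral_neg]
    simpa [hodd] using intervalIntegral.integral_comp_neg (a := -c) (b := c)
      fun x => -(Q.eval x * v x)
  simp only [weightFunctional_apply, mul_sub] at hreflect ⊢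
  rw [intervalIntegral.integral_sub (intervalIntegrable_eval_mul hv Q) hneg, hreflect]
  ring

lemma isOddPearson_weightFunctional (hc : 0 ≤ c) (hcont : ContinuousOn w (Icc (-c) c))
    (hneg : w (-c) = 0) (hpos : w c = 0) (hw : IntervalIntegrable w volume (-c) c)
    (hv : IntervalIntegrable v volume (-c) c)
    (hderiv : ∀ x ∈ Ioo (-c) c, HasDerivAt w (v x - v (-x)) x) :
    IsOddPearson (weightFunctional hw) (weightFunctional hv) := fun Q hQ => by
  have hv' : IntervalIntegrable (fun x => v x - v (-x)) volume (-c) c :=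
    hv.sub (by simpa using (IntervalIntegrable.iff_comp_neg (by simp)).mp hv.symm)
  rw [weightFunctional_derivative (by linarith) hcont hneg hpos hw hv' hderiv,
    weightFunctional_sub_comp_neg hv hv' hQ, neg_add_cancel]

lemma weightFunctional_div_sub_apply {p : ℝ}
    (hwp : IntervalIntegrable (fun x => w x / (x - p)) volume a b) (Q : ℝ[X]) :
    weightFunctional hwp Q = ∫ x in a..b, w x * Q.eval x / (x - p) := by
  simp only [weightFunctional_apply, mul_div_assoc', mul_comm (w _)]

lemma smul_weightFunctional_add_smul (hw : IntervalIntegrable w volume a b)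
    (hv : IntervalIntegrable v volume a b) (s t : ℝ) :
    s • weightFunctional hw + t • weightFunctional hv
      = weightFunctional ((hw.const_mul s).add (hv.const_mul t)) := by
  refine LinearMap.ext fun Q => ?_
  simp only [LinearMap.add_apply, LinearMap.smul_apply, smul_eq_mul, weightFunctional_apply,
    mul_add, mul_left_comm (Q.eval _)]
  rw [intervalIntegral.integral_add ((intervalIntegrable_eval_mul hw Q).const_mul s)
    ((intervalIntegrable_eval_mul hv Q).const_mul t), intervalIntegral.integral_const_mul,
    intervalIntegral.integral_const_mul]

lemma IsMonicOrthogonal.eval_left_endpoint_ne_zero (hab : a < b)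
    {hw : IntervalIntegrable w volume a b} (hpos : ∀ x ∈ Ioo a b, 0 < w x) {P : ℕ → ℝ[X]}
    {h : ℕ → ℝ} (hP : IsMonicOrthogonal (weightFunctional hw) P h) (n : ℕ) :
    (P n).eval a ≠ 0 := by
  refine hP.eval_ne_zero (fun Q hQ => (weightFunctional_pos hab hw hpos
    (mul_ne_zero (X_sub_C_ne_zero a) (pow_ne_zero 2 hQ)) fun x hx => ?_).ne') n
  simp only [eval_mul, eval_sub, eval_X, eval_C, eval_pow]
  exact mul_nonneg (sub_nonneg.mpr hx.1.le) (sq_nonneg _)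

end WeightFunctional

section NonIntegrable

open Asymptotics Filter Set Topology

lemma not_intervalIntegrable_of_sub_inv_isBigO_nhdsGT {F : Type*} [NormedAddCommGroup F]
    {f : ℝ → F} {a b : ℝ} (hab : a < b)
    (hf : (fun x => (x - a)⁻¹) =O[𝓝[>] a] f) : ¬ IntervalIntegrable f volume a b := by
  have hderiv : ∀ᶠ x in 𝓝[>] a, HasDerivAt (fun x => Real.log (x - a)) (x - a)⁻¹ x := by
    filter_upwards [self_mem_nhdsWithin] with x hx
    simpa using ((hasDerivAt_id x).sub_const a).log (sub_ne_zero.mpr (ne_of_gt hx))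
  have hlog : Tendsto (fun x => ‖Real.log (x - a)‖) (𝓝[>] a) atTop := by
    refine tendsto_abs_atBot_atTop.comp (Real.tendsto_log_nhdsNE_zero.comp ?_)
    rw [← sub_self a]
    exact (((hasDerivAt_id a).sub_const a).tendsto_nhdsNE one_ne_zero).mono_left
      (nhdsGT_le_nhdsNE a)
  exact not_intervalIntegrable_of_tendsto_norm_atTop_of_deriv_isBigO_filter (𝓝[>] a)
    (uIcc_of_le hab.le ▸ mem_of_superset (Ioc_mem_nhdsGT hab) Ioc_subset_Icc_self)
    (hderiv.mono fun x hx => hx.differentiableAt) hlog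
    (hf.congr' (hderiv.mono fun x hx => hx.deriv.symm) EventuallyEq.rfl)

end NonIntegrable

section EllipticWeight

open Asymptotics Set Topology

variable {α β k k2 x : ℝ}

/-- The elliptic Jacobi weight `(1 - x²)^α (1 - k² x²)^β`, with `k2` standing for `k²`. -/
noncomputable def ellipticWeight (α β k2 x : ℝ) : ℝ :=
  (1 - x ^ 2) ^ α * (1 - k2 * x ^ 2) ^ β

lemma ellipticWeight_neg (α β k2 x : ℝ) :
    ellipticWeight α β k2 (-x) = ellipticWeight α β k2 x := by
  rw [ellipticWeight, neg_sq, ellipticWeight]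

lemma one_sub_mul_sq_pos (hk2 : k2 < 1) (hx : x ∈ Icc (-1 : ℝ) 1) : 0 < 1 - k2 * x ^ 2 := by
  have hsq : x ^ 2 ≤ 1 := by nlinarith [hx.1, hx.2]
  rcases le_or_gt k2 0 with h | h <;> nlinarith [sq_nonneg x]

lemma one_sub_sq_pos (hx : x ∈ Ioo (-1 : ℝ) 1) : 0 < 1 - x ^ 2 := by
  nlinarith [hx.1, hx.2]

lemma ellipticWeight_pos (hk2 : k2 < 1) (hx : x ∈ Ioo (-1 : ℝ) 1) :
    0 < ellipticWeight α β k2 x :=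
  mul_pos (Real.rpow_pos_of_pos (one_sub_sq_pos hx) _)
    (Real.rpow_pos_of_pos (one_sub_mul_sq_pos hk2 (Ioo_subset_Icc_self hx)) _)

lemma continuousOn_one_sub_mul_sq_rpow (hk2 : k2 < 1) (β : ℝ) :
    ContinuousOn (fun x : ℝ => (1 - k2 * x ^ 2) ^ β) (Icc (-1) 1) :=
  ContinuousOn.rpow_const (by fun_prop) fun _ hx => Or.inl (one_sub_mul_sq_pos hk2 hx).ne'

lemma continuousOn_ellipticWeight (hα : 0 ≤ α) (hk2 : k2 < 1) (β : ℝ) :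
    ContinuousOn (ellipticWeight α β k2) (Icc (-1) 1) :=
  ContinuousOn.mul (ContinuousOn.rpow_const (by fun_prop) fun _ _ => Or.inr hα)
    (continuousOn_one_sub_mul_sq_rpow hk2 β)

lemma intervalIntegrable_ellipticWeight_div_sub_neg_one (hα : 0 < α) (hk2 : k2 < 1)
    (β : ℝ) :
    IntervalIntegrable (fun x => ellipticWeight α β k2 x / (x - -1)) volume (-1) 1 := by
  have hsing : IntervalIntegrable (fun x : ℝ => (x + 1) ^ (α - 1)) volume (-1) 1 := by
    simpa only [zero_sub, add_sub_cancel_right] using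
      (intervalIntegral.intervalIntegrable_rpow' (a := 0) (b := 1 + 1)
        (by linarith : -1 < α - 1)).comp_add_right 1
  have hcont : ContinuousOn (fun x : ℝ => (1 - x) ^ α * (1 - k2 * x ^ 2) ^ β) (uIcc (-1) 1) := by
    rw [uIcc_of_le (by norm_num)]
    exact ContinuousOn.mul (ContinuousOn.rpow_const (by fun_prop) fun _ _ => Or.inr hα.le)
      (continuousOn_one_sub_mul_sq_rpow hk2 β)
  refine (hsing.mul_continuousOn hcont).congr fun x hx => ?_
  rw [uIoc_of_le (by norm_num)] at hx
  have hx1 : 0 < x + 1 := by linarith [hx.1]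
  have hfactor : 1 - x ^ 2 = (x + 1) * (1 - x) := by ring
  simp only [ellipticWeight, sub_neg_eq_add, hfactor, Real.rpow_sub_one hx1.ne',
    Real.mul_rpow hx1.le (sub_nonneg.mpr hx.2)]
  ring

lemma intervalIntegrable_ellipticWeight_div_sub (hα : 0 ≤ α) (hk2 : k2 < 1) (β : ℝ)
    {p : ℝ} (hp : p ∉ Icc (-1 : ℝ) 1) :
    IntervalIntegrable (fun x => ellipticWeight α β k2 x / (x - p)) volume (-1) 1 := by
  refine ContinuousOn.intervalIntegrable ?_
  rw [uIcc_of_le (by norm_num)]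
  exact (continuousOn_ellipticWeight hα hk2 β).div (by fun_prop) fun x hx =>
    sub_ne_zero.mpr fun h => hp (h ▸ hx)

lemma hasDerivAt_one_sub_sq_mul_sq_rpow (hk : k ≠ 0) (hx : 0 < 1 - k ^ 2 * x ^ 2) (p : ℝ) :
    HasDerivAt (fun y => (1 - k ^ 2 * y ^ 2) ^ p)
      ((1 - k ^ 2 * x ^ 2) ^ p * (p / (1 / k + x) - p / (1 / k - x))) x := by
  have hbase : HasDerivAt (fun y => 1 - k ^ 2 * y ^ 2) (-(k ^ 2 * (2 * x))) x := by
    simpa using (((hasDerivAt_id x).pow 2).const_mul (k ^ 2)).const_sub 1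
  have hfactor : 1 - k ^ 2 * x ^ 2 = k ^ 2 * ((1 / k + x) * (1 / k - x)) := by
    field_simp
    ring
  have hpoles := right_ne_zero_of_mul (hfactor ▸ hx.ne')
  have hplus := left_ne_zero_of_mul hpoles
  have hminus := right_ne_zero_of_mul hpoles
  refine (hbase.rpow_const (p := p) (Or.inl hx.ne')).congr_deriv ?_
  rw [Real.rpow_sub_one hx.ne', div_sub_div _ _ hplus hminus]
  generalize (1 - k ^ 2 * x ^ 2) ^ p = u
  rw [hfactor, mul_div_assoc', mul_div_assoc', div_eq_div_iff (hfactor ▸ hx.ne') hpoles]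
  ring

lemma hasDerivAt_ellipticWeight (hk : k ≠ 0) (hk2 : k ^ 2 < 1) (hx : x ∈ Ioo (-1 : ℝ) 1) :
    HasDerivAt (ellipticWeight α β (k ^ 2)) (ellipticWeight α β (k ^ 2) x *
      (α / (1 + x) - α / (1 - x) + (β / (1 / k + x) - β / (1 / k - x)))) x := by
  have hα := hasDerivAt_one_sub_sq_mul_sq_rpow one_ne_zero
    (by simpa using one_sub_sq_pos hx : 0 < 1 - (1 : ℝ) ^ 2 * x ^ 2) α
  have hβ := hasDerivAt_one_sub_sq_mul_sq_rpow hk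
    (one_sub_mul_sq_pos hk2 (Ioo_subset_Icc_self hx)) β
  simp only [one_pow, one_mul, div_one] at hα
  refine (hα.mul hβ).congr_deriv ?_
  rw [ellipticWeight]
  ring

lemma isOddPearson_ellipticWeight (hα : 0 < α) (hk : k ≠ 0) (hk2 : k ^ 2 < 1)
    (hw : IntervalIntegrable (ellipticWeight α β (k ^ 2)) volume (-1) 1)
    (hS : IntervalIntegrable (fun x => ellipticWeight α β (k ^ 2) x / (x - -1)) volume (-1) 1)
    (hS' : IntervalIntegrable (fun x => ellipticWeight α β (k ^ 2) x / (x - -(1 / k)))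
      volume (-1) 1) :
    IsOddPearson (weightFunctional hw) (α • weightFunctional hS + β • weightFunctional hS') := by
  rw [smul_weightFunctional_add_smul]
  refine isOddPearson_weightFunctional zero_le_one (continuousOn_ellipticWeight hα.le hk2 β)
    (by simp [ellipticWeight, hα.ne']) (by simp [ellipticWeight, hα.ne']) hw _ fun x hx => ?_
  refine (hasDerivAt_ellipticWeight hk hk2 hx).congr_deriv ?_
  simp only [ellipticWeight_neg]
  ring

theorem recurrence_coeff_identity_ellipticWeight (hα : 0 < α) (hk : k ∈ Ioo (0 : ℝ) 1)
    {hw : IntervalIntegrable (ellipticWeight α β (k ^ 2)) volume (-1) 1} {P : ℕ → ℝ[X]}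
    {h : ℕ → ℝ} (hP : IsMonicOrthogonal (weightFunctional hw) P h) (hh : ∀ n, h n ≠ 0) {n : ℕ}
    {b R r : ℝ} (hrec : X * P (n + 1) = P (n + 2) + C b * P n)
    (hR : R = α / h (n + 1) *
      ∫ x in (-1 : ℝ)..1, ellipticWeight α β (k ^ 2) x * (P (n + 1)).eval x ^ 2 / (1 + x))
    (hr : r = α / h n *
      ∫ x in (-1 : ℝ)..1,
        ellipticWeight α β (k ^ 2) x * (P (n + 1)).eval x * (P n).eval x / (1 + x)) :
    k ^ 2 * b * (α + β + (n + 1 : ℕ) - 1 / 2) * (α + β + (n + 1 : ℕ) + 1 / 2 - R) * R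
      = (R + k ^ 2 * (α + β + (n + 1 : ℕ) + 1 / 2 - R)) * r ^ 2
        + (((n + 1 : ℕ) + β) * R - α * k ^ 2 * (α + β + (n + 1 : ℕ) + 1 / 2 - R)) * r
        + (n + 1 : ℕ) / 2 * ((n + 1 : ℕ) / 2 + β) * R := by
  have hk2 : k ^ 2 < 1 := pow_lt_one₀ hk.1.le hk.2 two_ne_zero
  have hpole : -(1 / k) ∉ Icc (-1 : ℝ) 1 := fun hmem => by
    linarith [hmem.1, one_lt_one_div hk.1 hk.2]
  have hS := intervalIntegrable_ellipticWeight_div_sub_neg_one hα hk2 β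
  have hS' := intervalIntegrable_ellipticWeight_div_sub hα.le hk2 β hpole
  refine hP.recurrence_coeff_identity hh
    (isSymmetric_weightFunctional hw (ellipticWeight_neg α β (k ^ 2))) hk.1.ne'
    (isGeronimusTransform_weightFunctional (by simp) hw hS)
    (isGeronimusTransform_weightFunctional
      (fun hmem => hpole (uIcc_of_le (by norm_num : (-1 : ℝ) ≤ 1) ▸ Ioo_subset_Icc_self hmem))
      hw hS') (isOddPearson_ellipticWeight hα hk.1.ne' hk2 hw hS hS') hrec ?_ ?_
  · rw [hR, residueA, weightFunctional_div_sub_apply hS]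
    simp only [eval_pow, sub_neg_eq_add, add_comm (1 : ℝ)]
  · rw [hr, residueB, weightFunctional_div_sub_apply hS]
    simp only [eval_mul, sub_neg_eq_add, add_comm (1 : ℝ), mul_assoc, Nat.add_sub_cancel]

lemma one_isBigO_ellipticWeight_mul_eval (hα : α ≤ 0) (hk2 : k2 < 1) (β : ℝ)
    {Q : ℝ[X]} (hQ : Q.eval (-1) ≠ 0) :
    (fun _ => (1 : ℝ)) =O[𝓝[>] (-1)] fun x => ellipticWeight α β k2 x * Q.eval x := by
  have hsing : (fun _ => (1 : ℝ)) =O[𝓝[>] (-1)] fun x : ℝ => (1 - x ^ 2) ^ α := by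
    refine IsBigO.of_bound 1 ?_
    filter_upwards [Ioo_mem_nhdsGT (by norm_num : (-1 : ℝ) < 1)] with x hx
    rw [one_mul, norm_one]
    exact (Real.one_le_rpow_of_pos_of_le_one_of_nonpos (one_sub_sq_pos hx)
      (sub_le_self 1 (sq_nonneg x)) hα).trans (le_abs_self _)
  have hbase : 0 < 1 - k2 * (-1 : ℝ) ^ 2 := one_sub_mul_sq_pos hk2 ⟨le_rfl, by norm_num⟩
  have hcont : ContinuousAt (fun x : ℝ => (1 - k2 * x ^ 2) ^ β * Q.eval x) (-1) :=
    (ContinuousAt.rpow_const (f := fun x : ℝ => 1 - k2 * x ^ 2) (by fun_prop)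
      (Or.inl hbase.ne')).mul Q.continuous.continuousAt
  have hreg : (fun _ => (1 : ℝ)) =O[𝓝 (-1)] fun x : ℝ => (1 - k2 * x ^ 2) ^ β * Q.eval x :=
    isBigO_of_div_tendsto_nhds_of_ne_zero (by simpa only [div_one] using hcont.tendsto)
      (mul_ne_zero (Real.rpow_pos_of_pos hbase β).ne' hQ)
  simpa only [ellipticWeight, mul_assoc, mul_one] using hsing.mul (hreg.mono nhdsWithin_le_nhds)

-- Not an evaluation: the integral diverges at `-1`, and Lean assigns it the junk value `0`.
lemma integral_ellipticWeight_mul_eval_div_eq_zero (hα : α ≤ 0) (hk2 : k2 < 1) (β : ℝ)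
    {Q : ℝ[X]} (hQ : Q.eval (-1) ≠ 0) :
    ∫ x in (-1 : ℝ)..1, ellipticWeight α β k2 x * Q.eval x / (1 + x) = 0 := by
  refine intervalIntegral.integral_undef
    (not_intervalIntegrable_of_sub_inv_isBigO_nhdsGT (by norm_num) ?_)
  simpa only [div_eq_mul_inv, one_mul, sub_neg_eq_add, add_comm (1 : ℝ)] using
    (one_isBigO_ellipticWeight_mul_eval hα hk2 β hQ).mul
      (isBigO_refl (fun x : ℝ => (x - (-1 : ℝ))⁻¹) _)

end EllipticWeight

end OrthogonalPolynomial

open OrthogonalPolynomial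

/-- The recurrence coefficient `β_n` is determined by `r_n`
and `R_n` (denominator-cleared form of the lemma expressing `β_n` in terms of
the auxiliary variables). -/
theorem stmt_11
    (α β k2 : ℝ) (hα : -1 < α) (hk2 : k2 ∈ Set.Ioo (0:ℝ) 1)
    (w : ℝ → ℝ)
    (hw : ∀ x : ℝ, w x = (1 - x ^ 2) ^ α * (1 - k2 * x ^ 2) ^ β)
    (P : ℕ → Polynomial ℝ)
    (hPmonic : ∀ n, (P n).Monic)
    (hPdeg : ∀ n, (P n).natDegree = n)
    (h : ℕ → ℝ) (hpos : ∀ n, 0 < h n)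
    (horth : ∀ m n : ℕ,
      (∫ x in (-1:ℝ)..1, (P m).eval x * (P n).eval x * w x)
        = if m = n then h n else 0)
    (b : ℕ → ℝ) (hb0 : b 0 = 0)
    (hrec : ∀ n : ℕ, 1 ≤ n →
      Polynomial.X * P n = P (n + 1) + Polynomial.C (b n) * P (n - 1))
    (R Rs r rs : ℕ → ℝ)
    (hR : ∀ n : ℕ, R n = α / h n *
      ∫ y in (-1:ℝ)..1, w y * ((P n).eval y) ^ 2 / (1 + y))
    (hRs : ∀ n : ℕ, Rs n = β / h n *
      ∫ y in (-1:ℝ)..1, w y * ((P n).eval y) ^ 2 / (1 / Real.sqrt k2 + y))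
    (hr0 : r 0 = 0) (hrs0 : rs 0 = 0)
    (hr : ∀ n : ℕ, 1 ≤ n → r n = α / h (n - 1) *
      ∫ y in (-1:ℝ)..1, w y * (P n).eval y * (P (n - 1)).eval y / (1 + y))
    (hrs : ∀ n : ℕ, 1 ≤ n → rs n = β / h (n - 1) *
      ∫ y in (-1:ℝ)..1, w y * (P n).eval y * (P (n - 1)).eval y / (1 / Real.sqrt k2 + y)) :
    ∀ n : ℕ, 1 ≤ n →
      k2 * b n * (α + β + (n:ℝ) - 1/2) * (α + β + (n:ℝ) + 1/2 - R n) * R n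
        = (R n + k2 * (α + β + (n:ℝ) + 1/2 - R n)) * r n ^ 2
          + (((n:ℝ) + β) * R n - α * k2 * (α + β + (n:ℝ) + 1/2 - R n)) * r n
          + ((n:ℝ)/2) * ((n:ℝ)/2 + β) * R n := by
  intro n hn
  obtain ⟨m, rfl⟩ := Nat.exists_eq_add_of_le' hn
  obtain rfl : w = ellipticWeight α β k2 := funext hw
  obtain ⟨k, hk, rfl⟩ : ∃ k ∈ Set.Ioo (0 : ℝ) 1, k2 = k ^ 2 :=
    ⟨√k2, ⟨Real.sqrt_pos.mpr hk2.1, (Real.sqrt_lt' one_pos).mpr (by simpa using hk2.2)⟩,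
      (Real.sq_sqrt hk2.1.le).symm⟩
  have hP0 : P 0 = 1 := (hPmonic 0).natDegree_eq_zero.mp (hPdeg 0)
  have hint : IntervalIntegrable (ellipticWeight α β (k ^ 2)) volume (-1) 1 :=
    intervalIntegral.intervalIntegrable_of_integral_ne_zero
      (by simpa [hP0] using (horth 0 0).trans_ne (by simpa using (hpos 0).ne'))
  have hP : IsMonicOrthogonal (weightFunctional hint) P h :=
    ⟨hPmonic, hPdeg, fun m n => by simpa [weightFunctional_apply] using horth m n⟩
  rcases lt_or_ge 0 α with hα0 | hα0
  · exact recurrence_coeff_identity_ellipticWeight hα0 hk hP (fun n => (hpos n).ne')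
      (hrec (m + 1) hn) (hR (m + 1)) (hr (m + 1) hn)
  · have hroot := hP.eval_left_endpoint_ne_zero (by norm_num)
      fun x hx => ellipticWeight_pos hk2.2 hx
    have hzero (l : ℕ) := integral_ellipticWeight_mul_eval_div_eq_zero hα0 hk2.2 β
      (Polynomial.eval_mul.trans_ne (mul_ne_zero (hroot (m + 1)) (hroot l)))
    simp only [Polynomial.eval_mul, ← mul_assoc] at hzero
    have hR_zero : R (m + 1) = 0 := by
      simp only [hR, sq (Polynomial.eval _ _), ← mul_assoc, hzero, mul_zero]
    have hr_zero : r (m + 1) = 0 := by rw [hr _ hn, Nat.add_sub_cancel, hzero, mul_zero]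
    rw [hR_zero, hr_zero]
    ring
end
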